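/- Let Σ be a complete (⋃_{σ∈Σ} σ = ℝ^n, equivalently X_Σ compact) non-singular fan in ℝ^n satisfying condition (2.9.2), and let Σ_1 be a fan in ℝ^n with Σ(1) ⊆ Σ_1 ⊊ Σ, where Σ(1) is the set of one-dimensional cones of Σ (so Σ_1 has the same primitive generators n_1,…,n_r). Let D = (d_1,…,d_r) be positive integers with ∑_k d_k n_k = 0. Then: (i) the lift j_D : Pol*_D(S¹,X_{Σ_1}) → ΩU(K_{Σ_1}) of i_D through Ωq_{Σ_1} is a homotopy equivalence through dimension d(D,Σ_1); and (ii) the map i_D : Pol*_D(S¹,X_{Σ_1}) → ΩX_{Σ_1} induces an isomorphism (i_D)_* : π_k(Pol*_D(S¹,X_{Σ_1})) → π_k(ΩX_{Σ_1}) ≅ π_{k+1}(X_{Σ_1}) for every 2 ≤ k ≤ d(D,Σ_1) = 2(r_min(Σ_1)−1)·d_min − 2. -/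

import Mathlib

open scoped BigOperators
attribute [local instance] Classical.propDecidable

noncomputable section

namespace Toric


/-! ### Cones and fans -/

/-- The real vector associated to an integer vector. -/
def zr {n : ℕ} (v : Fin n → ℤ) : Fin n → ℝ := fun i => (v i : ℝ)

/-- A convex rational polyhedral cone in `ℝ^n`. -/
def IsRatCone {n : ℕ} (σ : Set (Fin n → ℝ)) : Prop :=
  ∃ s : Finset (Fin n → ℤ),
    σ = {x | ∃ lam : (Fin n → ℤ) → ℝ, (∀ v, 0 ≤ lam v) ∧ x = ∑ v ∈ s, lam v • zr v}

/-- A cone is strongly convex if `σ ∩ (-σ) = {0}`. -/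
def StronglyConvex {n : ℕ} (σ : Set (Fin n → ℝ)) : Prop := σ ∩ (-σ) = {0}

/-- `τ` is a face of `σ`, cut out by a linear form nonnegative on `σ`. -/
def IsFaceOf {n : ℕ} (τ σ : Set (Fin n → ℝ)) : Prop :=
  ∃ L : (Fin n → ℝ) →ₗ[ℝ] ℝ, (∀ x ∈ σ, 0 ≤ L x) ∧ τ = σ ∩ {x | L x = 0}

/-- A fan in `ℝ^n`: a finite collection of strongly convex rational polyhedral cones,
closed under taking faces, such that the intersection of two cones is a face of each;
we also require that it strictly contains `{0}`. -/
structure Fan (n : ℕ) where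
  cones : Set (Set (Fin n → ℝ))
  finite : cones.Finite
  ratCone : ∀ σ ∈ cones, IsRatCone σ
  stronglyConvex : ∀ σ ∈ cones, StronglyConvex σ
  face_mem : ∀ σ ∈ cones, ∀ τ, IsFaceOf τ σ → τ ∈ cones
  inter_face : ∀ σ ∈ cones, ∀ τ ∈ cones, IsFaceOf (σ ∩ τ) σ
  zero_mem : ({0} : Set (Fin n → ℝ)) ∈ cones
  nontrivial : cones ≠ {({0} : Set (Fin n → ℝ))}

/-- A fan is complete if its cones cover `ℝ^n`. -/
def Fan.Complete {n : ℕ} (F : Fan n) : Prop := ⋃₀ F.cones = Set.univ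

/-- A fan is non-singular if each of its cones is spanned by part of a `ℤ`-basis of `ℤ^n`. -/
def Fan.NonSingular {n : ℕ} (F : Fan n) : Prop :=
  ∀ σ ∈ F.cones, ∃ (b : Module.Basis (Fin n) ℤ (Fin n → ℤ)) (s : Finset (Fin n)),
    σ = {x | ∃ lam : Fin n → ℝ, (∀ i, 0 ≤ lam i) ∧ x = ∑ i ∈ s, lam i • zr (b i)}

/-- The ray (one-dimensional cone) generated by a vector. -/
def ray {n : ℕ} (v : Fin n → ℝ) : Set (Fin n → ℝ) := {x | ∃ t : ℝ, 0 ≤ t ∧ x = t • v}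

/-- The cone spanned by the vectors `n_i`, `i ∈ s`. -/
def coneIdx {n r : ℕ} (N : Fin r → Fin n → ℤ) (s : Finset (Fin r)) : Set (Fin n → ℝ) :=
  {x | ∃ lam : Fin r → ℝ, (∀ i, 0 ≤ lam i) ∧ x = ∑ i ∈ s, lam i • zr (N i)}

/-- A point of `ℝ^n` lying in the lattice `ℤ^n`. -/
def IsLatticePoint {n : ℕ} (x : Fin n → ℝ) : Prop := ∀ i, ∃ m : ℤ, x i = (m : ℝ)

/-- `N 1, …, N r` is the (complete, repetition-free) list of primitive generators of the
one-dimensional cones of the fan `F`. -/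
structure IsPrimGens {n r : ℕ} (F : Fan n) (N : Fin r → Fin n → ℤ) : Prop where
  ray_mem : ∀ k, ray (zr (N k)) ∈ F.cones
  ne_zero : ∀ k, N k ≠ 0
  primitive : ∀ k, ray (zr (N k)) ∩ {x | IsLatticePoint x}
      = {x | ∃ c : ℕ, x = (c : ℝ) • zr (N k)}
  inj : Function.Injective N
  complete : ∀ σ ∈ F.cones, Module.finrank ℝ (Submodule.span ℝ σ) = 1 →
      ∃ k, σ = ray (zr (N k))

/-- Condition (2.9.1): a positive integral relation among the primitive generators. -/
def Cond1 {n r : ℕ} (N : Fin r → Fin n → ℤ) : Prop :=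
  ∃ d : Fin r → ℕ, (∀ k, 0 < d k) ∧ ∑ k, (d k : ℤ) • N k = 0

/-- Condition (2.9.2): the primitive generators span `ℤ^n` over `ℤ`. -/
def Cond2 {n r : ℕ} (N : Fin r → Fin n → ℤ) : Prop :=
  Submodule.span ℤ (Set.range N) = ⊤

/-- The underlying simplicial complex `K_Σ` of a fan. -/
def KC {n r : ℕ} (F : Fan n) (N : Fin r → Fin n → ℤ) : Set (Finset (Fin r)) :=
  {s | coneIdx N s ∈ F.cones}

/-- A primitive set: it spans no cone of the fan, but every proper subset does. -/
def PrimitiveSet {r : ℕ} (K : Set (Finset (Fin r))) (s : Finset (Fin r)) : Prop :=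
  s ∉ K ∧ ∀ t ⊂ s, t ∈ K

/-- `r_min`: the minimal cardinality of a primitive set. -/
def rmin {r : ℕ} (K : Set (Finset (Fin r))) : ℕ :=
  sInf {m | ∃ s : Finset (Fin r), PrimitiveSet K s ∧ s.card = m}

/-- `d_min = min {d_1, …, d_r}`. -/
def dmin {r : ℕ} (D : Fin r → ℕ) : ℕ := sInf (Set.range D)

/-- The stability dimension `d(D,Σ) = 2(r_min − 1) d_min − 2`. -/
def dBound {r : ℕ} (K : Set (Finset (Fin r))) (D : Fin r → ℕ) : ℤ :=
  2 * ((rmin K : ℤ) - 1) * (dmin D : ℤ) - 2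

/-- The connectivity bound `C_D(Σ) = 2(r_min − 1) d_min − 1`. -/
def CBound {r : ℕ} (K : Set (Finset (Fin r))) (D : Fin r → ℕ) : ℤ :=
  2 * ((rmin K : ℤ) - 1) * (dmin D : ℤ) - 1

/-! ### Coordinate subspaces, `U(K)`, `G_Σ` and the toric quotient -/

/-- The coordinate subspace `L_σ ⊆ ℂ^r`. -/
def LSub {r : ℕ} (σ : Finset (Fin r)) : Set (Fin r → ℂ) := {x | ∀ i ∈ σ, x i = 0}

/-- The complement `U(K)` of the coordinate subspace arrangement of type `K`. -/
def UK {r : ℕ} (K : Set (Finset (Fin r))) : Set (Fin r → ℂ) :=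
  (⋃ σ ∈ {s : Finset (Fin r) | s ∉ K}, LSub σ)ᶜ

lemma mem_UK {r : ℕ} {K : Set (Finset (Fin r))} {x : Fin r → ℂ} :
    x ∈ UK K ↔ ∀ σ : Finset (Fin r), σ ∉ K → ∃ i ∈ σ, x i ≠ 0 := by
  constructor
  · intro h σ hσ
    by_contra hc
    push_neg at hc
    exact h (Set.mem_biUnion hσ (fun i hi => hc i hi))
  · intro h hx
    rcases Set.mem_iUnion₂.1 hx with ⟨σ, hσ, hxσ⟩
    rcases h σ hσ with ⟨i, hi, hne⟩
    exact hne (hxσ i hi)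

/-- The group `G_Σ` (as a subset of `ℂ^r`). -/
def GSet {n r : ℕ} (N : Fin r → Fin n → ℤ) : Set (Fin r → ℂ) :=
  {μ | (∀ k, μ k ≠ 0) ∧ ∀ m : Fin n → ℤ, ∏ k, μ k ^ (∑ j, N k j * m j) = 1}

/-- The orbit relation of the `G_Σ`-action on `U(K_Σ)`. -/
def toricRel {n r : ℕ} (N : Fin r → Fin n → ℤ) (K : Set (Finset (Fin r)))
    (x y : ↥(UK K)) : Prop :=
  ∃ μ ∈ GSet N, (fun i => μ i * (x : Fin r → ℂ) i) = (y : Fin r → ℂ)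

/-- The toric variety `X_Σ = U(K_Σ)/G_Σ`, as a topological quotient. -/
def XS {n r : ℕ} (N : Fin r → Fin n → ℤ) (K : Set (Finset (Fin r))) : Type :=
  Quot (toricRel N K)

instance {n r : ℕ} (N : Fin r → Fin n → ℤ) (K : Set (Finset (Fin r))) :
    TopologicalSpace (XS N K) :=
  instTopologicalSpaceQuot

/-- The quotient map `q_Σ : U(K_Σ) → X_Σ`. -/
def qmap {n r : ℕ} (N : Fin r → Fin n → ℤ) (K : Set (Finset (Fin r))) :
    ↥(UK K) → XS N K :=
  Quot.mk (toricRel N K)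

/-- `q_Σ` as a continuous map. -/
def qCont {n r : ℕ} (N : Fin r → Fin n → ℤ) (K : Set (Finset (Fin r))) :
    C(↥(UK K), XS N K) :=
  ⟨qmap N K, continuous_quot_mk⟩

lemma coneIdx_empty {n r : ℕ} (N : Fin r → Fin n → ℤ) :
    coneIdx N (∅ : Finset (Fin r)) = ({0} : Set (Fin n → ℝ)) := by
  ext x
  constructor
  · rintro ⟨lam, -, hx⟩
    simpa using hx
  · intro hx
    exact ⟨0, fun i => le_refl 0, by simpa using hx⟩

lemma empty_mem_KC {n r : ℕ} (F : Fan n) (N : Fin r → Fin n → ℤ) :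
    (∅ : Finset (Fin r)) ∈ KC F N := by
  show coneIdx N ∅ ∈ F.cones
  rw [coneIdx_empty]
  exact F.zero_mem

/-- The point `(1,…,1)`. -/
def onesC {r : ℕ} : Fin r → ℂ := fun _ => 1

lemma ones_mem_UK {r : ℕ} {K : Set (Finset (Fin r))} (h : (∅ : Finset (Fin r)) ∈ K) :
    (onesC : Fin r → ℂ) ∈ UK K := by
  rw [mem_UK]
  intro σ hσ
  rcases Finset.nonempty_iff_ne_empty.2 (fun he : σ = ∅ => hσ (by rw [he]; exact h)) with ⟨i, hi⟩
  exact ⟨i, hi, one_ne_zero⟩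

/-- The base point `(1,…,1)` of `U(K_Σ)`. -/
def onesUK {r : ℕ} {K : Set (Finset (Fin r))} (h : (∅ : Finset (Fin r)) ∈ K) : ↥(UK K) :=
  ⟨onesC, ones_mem_UK h⟩

/-- The base point `[1,…,1]` of `X_Σ`. -/
def baseX {n r : ℕ} (N : Fin r → Fin n → ℤ) (K : Set (Finset (Fin r)))
    (h : (∅ : Finset (Fin r)) ∈ K) : XS N K :=
  qmap N K (onesUK h)



/-! ### Spaces of tuples of monic polynomials -/

/-- The monic polynomial `z^d + a_{d-1} z^{d-1} + ⋯ + a_0` with coefficient data `a`. -/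
def toPoly {d : ℕ} (a : Fin d → ℂ) : Polynomial ℂ :=
  Polynomial.X ^ d + ∑ i : Fin d, Polynomial.C (a i) * Polynomial.X ^ (i : ℕ)

/-- The space `Pol*_D(S¹, X_Σ)` of `r`-tuples of monic polynomials of multidegree `D`
(in coefficient coordinates) such that for every `σ ∉ K` the polynomials `{f_i : i ∈ σ}`
have no common real root. -/
def PolSp {r : ℕ} (K : Set (Finset (Fin r))) (D : Fin r → ℕ) :
    Set (∀ k : Fin r, Fin (D k) → ℂ) :=
  {f | ∀ σ : Finset (Fin r), σ ∉ K → ∀ t : ℝ,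
        ∃ k ∈ σ, (toPoly (f k)).eval (t : ℂ) ≠ 0}

lemma polEval_mem_UK {r : ℕ} {K : Set (Finset (Fin r))} {D : Fin r → ℕ}
    (f : ↥(PolSp K D)) (t : ℝ) :
    (fun k => (toPoly (f.1 k)).eval (t : ℂ)) ∈ UK K :=
  mem_UK.2 fun σ hσ => f.2 σ hσ t

/-! ### Loop spaces and induced maps on homotopy groups -/

/-- The loop space `Ω X = Map*(S¹, X)` with `S¹ = ℝ ∪ {∞}` (the one-point
compactification of `ℝ`), based at `x₀`. -/
def Loop (X : Type*) [TopologicalSpace X] (x₀ : X) : Type _ :=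
  {γ : C(OnePoint ℝ, X) // γ OnePoint.infty = x₀}

instance {X : Type*} [TopologicalSpace X] (x₀ : X) : TopologicalSpace (Loop X x₀) :=
  instTopologicalSpaceSubtype

/-- The constant loop, base point of `Ω X`. -/
def Loop.const {X : Type*} [TopologicalSpace X] (x₀ : X) : Loop X x₀ :=
  ⟨ContinuousMap.const _ x₀, rfl⟩

/-- A based continuous map induces a continuous map of loop spaces. -/
def loopMap {X Y : Type*} [TopologicalSpace X] [TopologicalSpace Y] {x₀ : X} {y₀ : Y}
    (f : C(X, Y)) (hf : f x₀ = y₀) : C(Loop X x₀, Loop Y y₀) where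
  toFun γ := ⟨f.comp γ.1, by simp [γ.2, hf]⟩
  continuous_toFun := by
    apply Continuous.subtype_mk
    exact (ContinuousMap.continuous_postcomp f).comp continuous_subtype_val

/-- The map induced by a continuous map on homotopy groups (`π_q`). -/
def piMap (q : ℕ) {X Y : Type*} [TopologicalSpace X] [TopologicalSpace Y]
    (f : C(X, Y)) (x : X) :
    HomotopyGroup (Fin q) X x → HomotopyGroup (Fin q) Y (f x) :=
  Quotient.map
    (fun p => ⟨f.comp p.1, fun y hy => by
      show f (p.1 y) = f x
      rw [p.2 y hy]⟩)
    (fun p₁ p₂ h => h.elim fun H => ⟨H.compContinuousMap f⟩)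

/-- `f` is a homotopy equivalence through dimension `d`: it induces isomorphisms on
`π_k` for all `k ≤ d` (at every base point). -/
def HomotopyEquivThrough {X Y : Type*} [TopologicalSpace X] [TopologicalSpace Y]
    (f : C(X, Y)) (d : ℤ) : Prop :=
  ∀ (x : X) (k : ℕ), (k : ℤ) ≤ d → Function.Bijective (piMap k f x)

/-- A genuine homotopy equivalence. -/
def IsHtpyEquiv {X Y : Type*} [TopologicalSpace X] [TopologicalSpace Y]
    (f : C(X, Y)) : Prop :=
  ∃ g : C(Y, X), (f.comp g).Homotopic (ContinuousMap.id Y) ∧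
    (g.comp f).Homotopic (ContinuousMap.id X)

/-! ### `i_D`, lifts, and stabilization maps -/

/-- `j : Pol*_D → Ω U(K_Σ)` is a lift of `i_D` through `Ω q_Σ`, i.e. `Ω q_Σ ∘ j = i_D`:
for every tuple `f` and real `t`, the loop `j f` at time `t` lies over the point
`[f_1(t), …, f_r(t)]` of `X_Σ` (and at `∞` over `[1,…,1]`, automatically). -/
def IsLiftOfID {n r : ℕ} (N : Fin r → Fin n → ℤ) (K : Set (Finset (Fin r)))
    (hE : (∅ : Finset (Fin r)) ∈ K) (D : Fin r → ℕ)
    (j : ↥(PolSp K D) → Loop ↥(UK K) (onesUK hE)) : Prop :=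
  ∀ (f : ↥(PolSp K D)) (t : ℝ),
    qmap N K ((j f).1 (t : OnePoint ℝ)) =
      qmap N K ⟨fun k => (toPoly (f.1 k)).eval (t : ℂ), polEval_mem_UK f t⟩

/-- `i : Pol*_D → Ω X_Σ` is the map `i_D` given by evaluation. -/
def IsID {n r : ℕ} (N : Fin r → Fin n → ℤ) (K : Set (Finset (Fin r)))
    (hE : (∅ : Finset (Fin r)) ∈ K) (D : Fin r → ℕ)
    (i : ↥(PolSp K D) → Loop (XS N K) (baseX N K hE)) : Prop :=
  ∀ (f : ↥(PolSp K D)) (t : ℝ),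
    (i f).1 (t : OnePoint ℝ) =
      qmap N K ⟨fun k => (toPoly (f.1 k)).eval (t : ℂ), polEval_mem_UK f t⟩

/-- `φ` is an admissible parameter for the stabilization maps: a homeomorphism of `ℂ`
onto the half plane `{Re < bound}` carrying `ℝ` onto `(-∞, bound)`. -/
def AdmissiblePhi (bound : ℝ) (φ : ℂ → ℂ) : Prop :=
  Continuous φ ∧ Function.Injective φ ∧ IsOpenMap φ ∧
    Set.range φ = {w : ℂ | w.re < bound} ∧
    φ '' {z : ℂ | z.im = 0} = {z : ℂ | z.im = 0 ∧ z.re < bound}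

/-- The defining property of the stabilization map
`s_{D,D'}(f)_k = φ(f_k) · (z - x_k)^{d'_k - d_k}`, where `φ(f)` denotes the monic
polynomial whose roots are the images under `φ` of the roots of `f`. -/
def StabSpec {r : ℕ} (K : Set (Finset (Fin r))) (φ : ℂ → ℂ) (xpt : Fin r → ℂ)
    (D D' : Fin r → ℕ) (s : ↥(PolSp K D) → ↥(PolSp K D')) : Prop :=
  ∀ (f : ↥(PolSp K D)) (k : Fin r),
    toPoly ((s f).1 k) =
      (((toPoly (f.1 k)).roots.map φ).map
        fun α => Polynomial.X - Polynomial.C α).prod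
        * (Polynomial.X - Polynomial.C (xpt k)) ^ (D' k - D k)

/-- The general defining property of the map `j_D : Pol*_D → Ω U(K_Σ)`:
when `∑ d_k n_k = 0` it is a lift of `i_D` through `Ω q_Σ`, and otherwise it is the
composite `j_{D₀} ∘ s_{D,D₀}` for a suitable `D₀ = m₀ D*` as in condition (2.9.1). -/
def IsJD {n r : ℕ} (N : Fin r → Fin n → ℤ) (K : Set (Finset (Fin r)))
    (hE : (∅ : Finset (Fin r)) ∈ K) (D : Fin r → ℕ)
    (j : C(↥(PolSp K D), Loop ↥(UK K) (onesUK hE))) : Prop :=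
  ((∑ k, (D k : ℤ) • N k = 0) ∧ IsLiftOfID N K hE D j) ∨
  ((∑ k, (D k : ℤ) • N k ≠ 0) ∧
    ∃ (dstar : Fin r → ℕ) (m₀ : ℕ),
      (∀ k, 0 < dstar k) ∧ (∑ k, (dstar k : ℤ) • N k = 0) ∧
      (∀ k, D k < m₀ * dstar k) ∧
      ∃ (φ : ℂ → ℂ) (xpt : Fin r → ℂ),
        AdmissiblePhi ((∑ k, D k : ℕ) : ℝ) φ ∧
        (∀ k, ((∑ k, D k : ℕ) : ℝ) < (xpt k).re) ∧ Function.Injective xpt ∧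
        ∃ (j₀ : C(↥(PolSp K fun k => m₀ * dstar k), Loop ↥(UK K) (onesUK hE)))
          (s₀ : C(↥(PolSp K D), ↥(PolSp K fun k => m₀ * dstar k))),
          IsLiftOfID N K hE _ j₀ ∧ StabSpec K φ xpt D _ s₀ ∧ j = j₀.comp s₀)

/-! ### Stabilized (colimit) spaces -/

/-- The multidegree `D + t·e`. -/
def Dt {r : ℕ} (D : Fin r → ℕ) (t : ℕ) : Fin r → ℕ := fun k => D k + t

/-- Carrier of the stabilized space: the disjoint union of the `Pol*_{D+te}`. -/
def ColCar {r : ℕ} (K : Set (Finset (Fin r))) (D : Fin r → ℕ) : Type :=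
  Σ t : ℕ, ↥(PolSp K (Dt D t))

instance {r : ℕ} (K : Set (Finset (Fin r))) (D : Fin r → ℕ) :
    TopologicalSpace (ColCar K D) := by
  unfold ColCar; infer_instance

/-- The identifications generating the colimit along the stabilization maps. -/
def ColRel {r : ℕ} (K : Set (Finset (Fin r))) (D : Fin r → ℕ)
    (s : ∀ t : ℕ, ↥(PolSp K (Dt D t)) → ↥(PolSp K (Dt D (t + 1)))) :
    ColCar K D → ColCar K D → Prop :=
  fun a b => b = ⟨a.1 + 1, s a.1 a.2⟩

/-- The stabilized space `Pol^Σ_{D+∞} = colim_t Pol*_{D+te}(S¹, X_Σ)`. -/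
def PolColim {r : ℕ} (K : Set (Finset (Fin r))) (D : Fin r → ℕ)
    (s : ∀ t : ℕ, ↥(PolSp K (Dt D t)) → ↥(PolSp K (Dt D (t + 1)))) : Type :=
  Quot (ColRel K D s)

instance {r : ℕ} (K : Set (Finset (Fin r))) (D : Fin r → ℕ)
    (s : ∀ t : ℕ, ↥(PolSp K (Dt D t)) → ↥(PolSp K (Dt D (t + 1)))) :
    TopologicalSpace (PolColim K D s) :=
  instTopologicalSpaceQuot

/-- Admissibility of a family of stabilization maps `s_{D+te}`. -/
def AdmissibleStabFamily {r : ℕ} (K : Set (Finset (Fin r))) (D : Fin r → ℕ)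
    (s : ∀ t : ℕ, ↥(PolSp K (Dt D t)) → ↥(PolSp K (Dt D (t + 1)))) : Prop :=
  ∀ t : ℕ, ∃ (φ : ℂ → ℂ) (xpt : Fin r → ℂ),
    AdmissiblePhi ((∑ k, Dt D t k : ℕ) : ℝ) φ ∧
    (∀ k, ((∑ k, Dt D t k : ℕ) : ℝ) < (xpt k).re) ∧ Function.Injective xpt ∧
    StabSpec K φ xpt (Dt D t) (Dt D (t + 1)) (s t)

/-!
Dividing each `f_k` by `(x - i) ^ d_k` embeds `Pol*_D` into `ΩU(K)`, as those loops whose `k`-th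
coordinate is a rational function `f_k(x) / (x - i) ^ d_k`. A cube of loops is deformed into this
subspace one coordinate at a time. First all coordinates are approximated by rational functions,
whose coefficients are put in general position; as every `σ ∉ K` has at least `r_min` elements, for
each parameter there are then at most boundedly many points of the circle at which the `k`-th
coordinate must not vanish, few enough for a monic polynomial of degree `d_k` to make an acute angle
with the given coordinate at all of them, by the Gordan alternative. Such polynomials form a convex
set, so a partition of unity selects one continuously, and a straight line moves the coordinate to
it.

The quotient map `q_Σ` is a principal `G_Σ`-bundle. The kernel of the exponential map onto the
identity component of `G_Σ` is discrete, so maps from the boundary of a cube of dimension at least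
three to `G_Σ` extend, and `Ωq_Σ` therefore induces isomorphisms on `π_k` for `k ≥ 2` and an
injection on `π_1`. Two lifts of `i_D` differ by a loop in `G_Σ`, multiplication by which is a
homeomorphism of `ΩU(K)` over `ΩX_Σ`. On `π_0` both spaces are path-connected.
-/

section CoefficientVectors

open Polynomial

variable {d : ℕ}

lemma toPoly_eq_X_pow_add_ofFn (a : Fin d → ℂ) : toPoly a = X ^ d + ofFn d a := by
  simp only [toPoly, ofFn_eq_sum_monomial, C_mul_X_pow_eq_monomial]

lemma toPoly_monic (a : Fin d → ℂ) : (toPoly a).Monic := by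
  rw [toPoly_eq_X_pow_add_ofFn]
  exact monic_X_pow_add (ofFn_degree_lt a)

lemma natDegree_toPoly (a : Fin d → ℂ) : (toPoly a).natDegree = d := by
  rw [toPoly_eq_X_pow_add_ofFn, natDegree_add_eq_left_of_degree_lt]
  · simp
  · simpa using ofFn_degree_lt a

lemma toFn_toPoly (a : Fin d → ℂ) : toFn d (toPoly a) = a := by
  ext i
  simp [toPoly_eq_X_pow_add_ofFn, toFn, coeff_X_pow, i.2.ne]

lemma toPoly_toFn {P : ℂ[X]} (hP : P.Monic) (hd : P.natDegree = d) :
    toPoly (toFn d P) = P := by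
  subst hd
  ext j
  rw [toPoly_eq_X_pow_add_ofFn, coeff_add, coeff_X_pow]
  rcases lt_trichotomy j P.natDegree with hj | rfl | hj
  · simp [hj.ne, hj, ofFn_coeff_eq_val_of_lt, toFn]
  · simp [ofFn_coeff_eq_zero_of_ge, hP.coeff_natDegree]
  · simp [hj.ne', ofFn_coeff_eq_zero_of_ge _ hj.le, coeff_eq_zero_of_natDegree_lt hj]

lemma ofFn_toFn_of_degree_lt {R : Type*} [Semiring R] {P : R[X]} (hP : P.degree < d) :
    ofFn d (toFn d P) = P := by
  ext j
  rcases lt_or_ge j d with hj | hj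
  · simp [hj, ofFn_coeff_eq_val_of_lt, toFn]
  · rw [ofFn_coeff_eq_zero_of_ge _ hj, coeff_eq_zero_of_degree_lt (hP.trans_le (mod_cast hj))]

lemma toPoly_sub_toFn (a : Fin d → ℂ) {R : ℂ[X]} (hR : R.degree < d) :
    toPoly (a - toFn d R) = toPoly a - R := by
  rw [toPoly_eq_X_pow_add_ofFn, toPoly_eq_X_pow_add_ofFn, map_sub, ofFn_toFn_of_degree_lt hR,
    add_sub_assoc]

lemma exists_toPoly_eq_nodal_mul {ι : Type*} {J : Finset ι} {x : ι → ℂ} (hx : Set.InjOn x J)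
    (a : Fin d → ℂ) (h : ∀ j ∈ J, (toPoly a).eval (x j) = 0) :
    J.card ≤ d ∧ ∃ b : Fin (d - J.card) → ℂ, toPoly a = Lagrange.nodal J x * toPoly b := by
  have hdvd : Lagrange.nodal J x ∣ toPoly a := by
    refine Finset.prod_dvd_of_coprime (fun i hi j hj hij => ?_)
      fun j hj => dvd_iff_isRoot.2 (h j hj)
    exact isCoprime_X_sub_C_of_isUnit_sub (sub_ne_zero.2 (hx.ne hi hj hij)).isUnit
  obtain ⟨Q, hQ⟩ := hdvd
  have hnodal : (Lagrange.nodal J x).Monic := Lagrange.nodal_monic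
  have hmonic : Q.Monic := hnodal.of_mul_monic_left (hQ ▸ toPoly_monic a)
  have hdeg : J.card + Q.natDegree = d := by
    rw [← natDegree_toPoly a, hQ, hnodal.natDegree_mul hmonic, Lagrange.natDegree_nodal]
  exact ⟨by omega, toFn _ Q, by rw [toPoly_toFn hmonic (by omega), hQ]⟩

end CoefficientVectors

section SmoothFamilies

open Polynomial

variable {E : Type*} [NormedAddCommGroup E] [NormedSpace ℝ E] {n : WithTop ℕ∞}

/-- A family of complex polynomials, parametrised by a real normed space, whose coefficients are
`C^n` functions of the parameter. -/
def CoeffContDiff (n : WithTop ℕ∞) (f : E → ℂ[X]) : Prop :=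
  ∀ m, ContDiff ℝ n fun x => (f x).coeff m

namespace CoeffContDiff

lemma const (P : ℂ[X]) : CoeffContDiff n fun _ : E => P :=
  fun _ => contDiff_const

lemma C {f : E → ℂ} (hf : ContDiff ℝ n f) : CoeffContDiff n fun x => Polynomial.C (f x) := by
  intro m
  simp only [coeff_C]
  split_ifs
  exacts [hf, contDiff_const]

lemma ofFn {d : ℕ} {f : E → Fin d → ℂ} (hf : ContDiff ℝ n f) :
    CoeffContDiff n fun x => Polynomial.ofFn d (f x) := by
  intro m
  rcases lt_or_ge m d with hm | hm
  · simpa only [ofFn_coeff_eq_val_of_lt _ hm] using contDiff_pi.1 hf ⟨m, hm⟩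
  · simpa only [ofFn_coeff_eq_zero_of_ge _ hm] using contDiff_const

variable {f g : E → ℂ[X]}

lemma add (hf : CoeffContDiff n f) (hg : CoeffContDiff n g) :
    CoeffContDiff n fun x => f x + g x :=
  fun m => by simpa using (hf m).add (hg m)

lemma sub (hf : CoeffContDiff n f) (hg : CoeffContDiff n g) :
    CoeffContDiff n fun x => f x - g x :=
  fun m => by simpa using (hf m).sub (hg m)

lemma mul (hf : CoeffContDiff n f) (hg : CoeffContDiff n g) :
    CoeffContDiff n fun x => f x * g x := by
  intro m
  simp only [coeff_mul]
  exact ContDiff.sum fun i _ => (hf i.1).mul (hg i.2)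

lemma prod {ι : Type*} (s : Finset ι) {f : ι → E → ℂ[X]} (hf : ∀ i, CoeffContDiff n (f i)) :
    CoeffContDiff n fun x => ∏ i ∈ s, f i x := by
  induction s using Finset.induction_on with
  | empty => simpa using const 1
  | insert a s ha ih =>
    simp only [Finset.prod_insert ha]
    exact (hf a).mul ih

lemma nodal {ι : Type*} (s : Finset ι) {v : E → ι → ℂ} (hv : ∀ i, ContDiff ℝ n fun x => v x i) :
    CoeffContDiff n fun x => Lagrange.nodal s (v x) :=
  prod s fun i => (const X).sub (C (hv i))

lemma toPoly {d : ℕ} {f : E → Fin d → ℂ} (hf : ContDiff ℝ n f) :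
    CoeffContDiff n fun x => toPoly (f x) := by
  simp only [toPoly_eq_X_pow_add_ofFn]
  exact (const _).add (ofFn hf)

lemma toFn (hf : CoeffContDiff n f) (d : ℕ) : ContDiff ℝ n fun x => toFn d (f x) :=
  contDiff_pi.2 fun i => hf i

end CoeffContDiff

end SmoothFamilies

section GordanAlternative

/-- The orthant and the image of `φ` are disjoint, and a separating functional has coordinates of
one sign. -/
theorem exists_nonneg_sum_mul_eq_zero {ι V : Type*} [Fintype ι] [AddCommGroup V] [Module ℝ V]
    (φ : ι → V →ₗ[ℝ] ℝ) (h : ¬ ∃ v, ∀ i, 0 < φ i v) :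
    ∃ μ : ι → ℝ, (∀ i, 0 ≤ μ i) ∧ (∃ i, 0 < μ i) ∧ ∀ v, ∑ i, μ i * φ i v = 0 := by
  let O : Set (ι → ℝ) := Set.pi Set.univ fun _ => Set.Ioi 0
  have hdis : Disjoint O (LinearMap.range (LinearMap.pi φ) : Set (ι → ℝ)) := by
    rw [Set.disjoint_left]
    rintro _ hy ⟨v, rfl⟩
    exact h ⟨v, fun i => hy i trivial⟩
  obtain ⟨f, u, hfO, hfφ⟩ := geometric_hahn_banach_open (convex_pi fun _ _ => convex_Ioi 0)
    (isOpen_set_pi Set.finite_univ fun _ _ => isOpen_Ioi) (Submodule.convex _) hdis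
  have hu : u ≤ 0 := by simpa using hfφ 0 (Submodule.zero_mem _)
  have hf_one : f 1 < 0 := (hfO 1 fun _ _ => zero_lt_one (α := ℝ)).trans_le hu
  have hf_eq (y : ι → ℝ) : f y = ∑ i, y i * f (Pi.single i 1) := by
    conv_lhs => rw [pi_eq_sum_univ' y]
    simp [map_sum]
  have hf_image (v : V) : f (LinearMap.pi φ v) = 0 := by
    by_contra hne
    have := hfφ (LinearMap.pi φ (((u - 1) / f (LinearMap.pi φ v)) • v)) ⟨_, rfl⟩
    rw [map_smul, map_smul, smul_eq_mul, div_mul_cancel₀ _ hne] at this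
    linarith
  have hf_single (i : ι) : f (Pi.single i 1) ≤ 0 := by
    by_contra! hpos
    have := hfO (1 + (-(f 1) / f (Pi.single i 1)) • Pi.single i 1) fun j _ => by
      have hsingle : (0 : ℝ) ≤ (Pi.single i 1 : ι → ℝ) j := by
        rw [Pi.single_apply]; positivity
      have := mul_nonneg (div_nonneg (neg_nonneg.2 hf_one.le) hpos.le) hsingle
      simp only [Set.mem_Ioi, Pi.add_apply, Pi.one_apply, Pi.smul_apply, smul_eq_mul]
      linarith
    rw [map_add, map_smul, smul_eq_mul, div_mul_cancel₀ _ hpos.ne'] at this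
    linarith
  refine ⟨fun i => -f (Pi.single i 1), fun i => neg_nonneg.2 (hf_single i), ?_, fun v => ?_⟩
  · by_contra! hle
    refine hf_one.ne ?_
    rw [hf_eq]
    exact Finset.sum_eq_zero fun i _ => by
      rw [le_antisymm (hf_single i) (neg_nonpos.1 (hle i)), mul_zero]
  · rw [← neg_eq_zero, ← hf_image v, hf_eq, ← Finset.sum_neg_distrib]
    simp [mul_comm]

theorem exists_pos_sum_mul_eq_zero_of_complex {ι V : Type*} [AddCommGroup V] [Module ℂ V]
    (S : Finset ι) (φ : ι → V →ₗ[ℂ] ℂ) (h : ¬ ∃ v, ∀ i ∈ S, 0 < (φ i v).re) :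
    ∃ T ⊆ S, T.Nonempty ∧ ∃ μ : ι → ℝ, (∀ i ∈ T, 0 < μ i) ∧ ∀ v, ∑ i ∈ T, μ i * φ i v = 0 := by
  let := Module.complexToReal V
  obtain ⟨μ, hμ_nonneg, ⟨i₀, hi₀⟩, hμ⟩ := exists_nonneg_sum_mul_eq_zero
    (fun i : S => Complex.reLm ∘ₗ (φ i).restrictScalars ℝ)
    fun ⟨v, hv⟩ => h ⟨v, fun i hi => hv ⟨i, hi⟩⟩
  let ν : ι → ℝ := fun i => if hi : i ∈ S then μ ⟨i, hi⟩ else 0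
  have hν_nonneg (i : ι) : 0 ≤ ν i := by
    by_cases hi : i ∈ S <;> simp [ν, hi, hμ_nonneg]
  have hν_re (v : V) : ∑ i ∈ S, ν i * (φ i v).re = 0 := by
    rw [← hμ v, ← Finset.sum_coe_sort S]
    simp [ν]
  -- The imaginary parts vanish as well, because `Im (φ i v) = Re (φ i (-I • v))`.
  have hν (v : V) : ∑ i ∈ S, (ν i : ℂ) * φ i v = 0 := by
    apply Complex.ext
    · simpa [Complex.re_sum] using hν_re v
    · simpa [Complex.im_sum] using hν_re (-Complex.I • v)
  refine ⟨S.filter fun i => 0 < ν i, Finset.filter_subset _ _,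
    ⟨i₀, Finset.mem_filter.2 ⟨i₀.2, by simpa [ν] using hi₀⟩⟩, ν,
    fun i hi => (Finset.mem_filter.1 hi).2, fun v => ?_⟩
  rw [← hν v]
  refine Finset.sum_subset (Finset.filter_subset _ _) fun i hi hi' => ?_
  have hzero : ν i = 0 :=
    le_antisymm (not_lt.1 fun hpos => hi' (Finset.mem_filter.2 ⟨hi, hpos⟩)) (hν_nonneg i)
  simp [hzero]

end GordanAlternative

section VanishingMoments

open Polynomial

lemma degree_interpolate_lt_of_moments_eq_zero {F ι : Type*} [Field F] {s : Finset ι} {v r : ι → F}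
    (hv : Set.InjOn v s) {m : ℕ}
    (h : ∀ a < m, ∑ i ∈ s, Lagrange.nodalWeight s v i * r i * v i ^ a = 0) :
    (Lagrange.interpolate s v r).degree < (s.card - m : ℕ) := by
  set P := Lagrange.interpolate s v r
  by_contra! hge
  have hP : P ≠ 0 := fun h0 => by simp [h0] at hge
  have hlt : P.natDegree < s.card :=
    (natDegree_lt_iff_degree_lt hP).2 (Lagrange.degree_interpolate_lt _ hv)
  have hle : s.card - m ≤ P.natDegree := le_natDegree_of_coe_le_degree hge
  set a := s.card - 1 - P.natDegree
  have hne : P * X ^ a ≠ 0 := mul_ne_zero hP (by simp)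
  have hdeg : (P * X ^ a).natDegree = s.card - 1 := by
    rw [natDegree_mul hP (by simp), natDegree_X_pow]
    omega
  -- The leading coefficient of `P * X ^ a` is the moment of order `a`.
  have hcoeff := Lagrange.coeff_eq_sum hv ((natDegree_lt_iff_degree_lt hne).1 (by omega))
  refine leadingCoeff_ne_zero.2 hne ?_
  rw [leadingCoeff, hdeg, hcoeff, ← h a (by omega)]
  refine Finset.sum_congr rfl fun i hi => ?_
  rw [eval_mul, eval_pow, eval_X, Lagrange.eval_interpolate_at_node _ hv hi, Lagrange.nodalWeight,
    Finset.prod_inv_distrib, div_eq_mul_inv]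
  ring

/-- Writing `q = (w / μ) * (μ * q / w)` with the nodal weights `w`, the first factor is real and
the second one is interpolated in low degree. -/
lemma exists_eq_ofFn_mul_ofFn_of_moments_eq_zero {T : Finset ℝ} (hT : T.Nonempty) {μ : ℝ → ℝ}
    (hμ : ∀ x ∈ T, μ x ≠ 0) {q : ℝ → ℂ} (hq : ∀ x ∈ T, q x ≠ 0) {m : ℕ}
    (h : ∀ a < m, ∑ x ∈ T, μ x * q x * x ^ a = 0) :
    m < T.card ∧ ∃ (s : Fin T.card → ℝ) (κ : Fin (T.card - m) → ℂ), ∀ x ∈ T,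
      q x = (ofFn _ fun i => (s i : ℂ)).eval (x : ℂ) * (ofFn _ κ).eval (x : ℂ) := by
  have hinj : Set.InjOn (fun x : ℝ => (x : ℂ)) T := Complex.ofReal_injective.injOn
  set w : ℝ → ℝ := Lagrange.nodalWeight T id
  have hw : ∀ x ∈ T, (w x : ℂ) ≠ 0 := fun x hx =>
    Complex.ofReal_ne_zero.2 (Lagrange.nodalWeight_ne_zero Function.injective_id.injOn hx)
  have hw_cast (x : ℝ) : (w x : ℂ) = Lagrange.nodalWeight T (fun x : ℝ => (x : ℂ)) x := by
    simp [w, Lagrange.nodalWeight]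
  set κ := Lagrange.interpolate T (fun x : ℝ => (x : ℂ)) fun x => μ x * q x / w x
  have hκ_eval : ∀ x ∈ T, κ.eval (x : ℂ) = μ x * q x / w x := fun x hx =>
    Lagrange.eval_interpolate_at_node _ hinj hx
  have hκ_deg : κ.degree < (T.card - m : ℕ) := by
    refine degree_interpolate_lt_of_moments_eq_zero hinj fun a ha => ?_
    rw [← h a ha]
    refine Finset.sum_congr rfl fun x hx => ?_
    rw [← hw_cast, mul_div_cancel₀ _ (hw x hx)]
  set s := Lagrange.interpolate T id fun x => w x / μ x
  have hs_eval : ∀ x ∈ T, (s.map (algebraMap ℝ ℂ)).eval (x : ℂ) = w x / μ x := fun x hx => by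
    have hx' := Lagrange.eval_interpolate_at_node (v := id) (fun x => w x / μ x)
      Function.injective_id.injOn hx
    rw [← Complex.ofReal_div, ← hx']
    exact eval_map_apply (f := algebraMap ℝ ℂ) x
  have hs_deg : (s.map (algebraMap ℝ ℂ)).degree < T.card := by
    rw [degree_map]
    exact Lagrange.degree_interpolate_lt _ Function.injective_id.injOn
  refine ⟨?_, toFn _ s, toFn _ κ, fun x hx => ?_⟩
  · obtain ⟨x, hx⟩ := hT
    by_contra! hle
    rw [Nat.sub_eq_zero_of_le hle, Nat.cast_zero, Nat.WithBot.lt_zero_iff, degree_eq_bot] at hκ_deg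
    have hzero := hκ_eval x hx
    rw [hκ_deg, eval_zero, eq_comm, div_eq_zero_iff, mul_eq_zero] at hzero
    exact hzero.elim (Or.rec (mod_cast hμ x hx) (hq x hx)) (hw x hx)
  · have hs : (fun i => ((toFn T.card s i : ℝ) : ℂ)) = toFn _ (s.map (algebraMap ℝ ℂ)) := by
      ext i
      simp [toFn]
    rw [hs, ofFn_toFn_of_degree_lt hs_deg, ofFn_toFn_of_degree_lt hκ_deg, hs_eval x hx,
      hκ_eval x hx]
    have := hw x hx
    have := Complex.ofReal_ne_zero.2 (hμ x hx)
    field_simp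

end VanishingMoments

section GeneralPosition

open Polynomial Module

lemma dense_compl_iUnion_range {ι F : Type*} [Countable ι] [NormedAddCommGroup F] [NormedSpace ℝ F]
    [FiniteDimensional ℝ F] {P : ι → Type*} [∀ s, NormedAddCommGroup (P s)]
    [∀ s, NormedSpace ℝ (P s)] [∀ s, FiniteDimensional ℝ (P s)] {f : ∀ s, P s → F}
    (hf : ∀ s, ContDiff ℝ 1 (f s)) (hdim : ∀ s, finrank ℝ (P s) < finrank ℝ F) :
    Dense (⋃ s, Set.range (f s))ᶜ := by
  rcases isEmpty_or_nonempty ι with _ | ⟨⟨s₀⟩⟩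
  · simp
  refine dense_compl_of_dimH_lt_finrank ?_
  rw [dimH_iUnion]
  calc ⨆ s, dimH (Set.range (f s)) ≤ ((finrank ℝ F - 1 : ℕ) : ENNReal) :=
        iSup_le fun s => (hf s).dimH_range_le.trans (mod_cast Nat.le_sub_one_of_lt (hdim s))
    _ < finrank ℝ F := mod_cast Nat.sub_one_lt_of_lt (hdim s₀)

lemma finrank_pi_fin_complex (d : ℕ) : finrank ℝ (Fin d → ℂ) = 2 * d := by
  simp [finrank_pi_fintype, mul_comm]

variable {I : Type*} [Fintype I] {e : I → ℕ}

lemma finrank_pi_pi_fin_complex : finrank ℝ (∀ i, Fin (e i) → ℂ) = 2 * ∑ i, e i := by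
  simp only [finrank_pi_fintype ℝ (M := fun i => Fin (e i) → ℂ), finrank_pi_fin_complex,
    Finset.mul_sum]

/-- A common zero at prescribed nodes determines the perturbation `c` through the nodes and the
cofactors of the nodal polynomials, and these are too few parameters. -/
theorem dense_exists_eval_ne_zero {ι : Type*} [Countable ι] {n : ι → ℕ}
    (σ : ∀ s, Fin (n s) → Finset I) {P : ι → Type*} [∀ s, NormedAddCommGroup (P s)]
    [∀ s, NormedSpace ℝ (P s)] [∀ s, FiniteDimensional ℝ (P s)]
    {w : ∀ s, P s → ∀ i, Fin (e i) → ℂ} (hw : ∀ s, ContDiff ℝ 1 (w s))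
    (hdim : ∀ s, finrank ℝ (P s) + n s < 2 * ∑ j, (σ s j).card) :
    Dense {c : ∀ i, Fin (e i) → ℂ | ∀ s p (x : Fin (n s) → ℝ), Function.Injective x →
      ∃ j, ∃ i ∈ σ s j, (toPoly (w s p i + c i)).eval (x j : ℂ) ≠ 0} := by
  let J (s : ι) (i : I) : Finset (Fin (n s)) := Finset.univ.filter fun j => i ∈ σ s j
  have hJ_sum (s : ι) : ∑ i, (J s i).card = ∑ j, (σ s j).card := by
    simp only [J, Finset.card_filter]
    rw [Finset.sum_comm]
    simp
  let A := {s : ι // ∀ i, (J s i).card ≤ e i}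
  let f (s : A) (z : P s × (Fin (n s) → ℝ) × ∀ i, Fin (e i - (J s i).card) → ℂ) (i : I) :
      Fin (e i) → ℂ :=
    toFn (e i) (Lagrange.nodal (J s i) (fun j => (z.2.1 j : ℂ)) * toPoly (z.2.2 i)) - w s z.1 i
  have hf (s : A) : ContDiff ℝ 1 (f s) := by
    refine contDiff_pi.2 fun i => ContDiff.sub (CoeffContDiff.toFn (.mul (.nodal _ fun j => ?_)
      (.toPoly ?_)) _) ((contDiff_pi.1 (hw s) i).comp contDiff_fst)
    · exact Complex.ofRealCLM.contDiff.comp (by fun_prop)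
    · exact (contDiff_pi.1 contDiff_id i).comp (contDiff_snd.comp contDiff_snd)
  have hf_dim (s : A) :
      finrank ℝ (P s × (Fin (n s) → ℝ) × ∀ i, Fin (e i - (J s i).card) → ℂ) <
        finrank ℝ (∀ i, Fin (e i) → ℂ) := by
    rw [finrank_prod, finrank_prod, finrank_pi_pi_fin_complex, finrank_pi_pi_fin_complex,
      finrank_fin_fun]
    have hsum : ∑ i, (e i - (J s i).card) + ∑ i, (J s i).card = ∑ i, e i := by
      rw [← Finset.sum_add_distrib]
      exact Finset.sum_congr rfl fun i _ => Nat.sub_add_cancel (s.2 i)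
    have := hdim s
    rw [← hJ_sum] at this
    omega
  refine (dense_compl_iUnion_range hf hf_dim).mono fun c hc s p x hx => ?_
  by_contra! hzero
  have hfactor (i : I) := exists_toPoly_eq_nodal_mul (J := J s i)
    (Complex.ofReal_injective.comp hx).injOn (w s p i + c i)
    fun j hj => hzero j i (Finset.mem_filter.1 hj).2
  choose hJ b hb using hfactor
  refine hc (Set.mem_iUnion.2 ⟨⟨s, hJ⟩, (p, x, b), funext fun i => ?_⟩)
  change toFn (e i) (Lagrange.nodal (J s i) (Complex.ofReal ∘ x) * toPoly (b i)) - w s p i = c i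
  rw [← hb i, toFn_toPoly, add_sub_cancel_left]

variable {E : Type*} [NormedAddCommGroup E] [NormedSpace ℝ E] [FiniteDimensional ℝ E] {r : ℕ}
  {K : Set (Finset (Fin r))} {ρ : ℕ}

theorem dense_add_mem_PolSp (hK : ∀ σ, σ ∉ K → ρ ≤ σ.card) (hE : finrank ℝ E + 1 < 2 * ρ)
    {e : Fin r → ℕ} {v : E → ∀ i, Fin (e i) → ℂ} (hv : ContDiff ℝ 1 v) :
    Dense {c | ∀ b, v b + c ∈ PolSp K e} := by
  refine (dense_exists_eval_ne_zero (ι := {σ // σ ∉ K}) (n := fun _ => 1) (fun σ _ => σ.1)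
    (P := fun _ => E) (fun _ => hv) fun σ => ?_).mono fun c hc b σ hσ t => ?_
  · have := hK σ σ.2
    simp only [Finset.univ_unique, Finset.sum_const, Finset.card_singleton, one_smul]
    omega
  · obtain ⟨-, h⟩ := hc ⟨σ, hσ⟩ b (fun _ => t) (Function.injective_of_subsingleton _)
    exact h

end GeneralPosition

section AlignedPolynomials

open Polynomial Module

/-- Some polynomial of degree less than `m` has, at each point of `S`, an argument within `π / 2`
of that of `q`. -/
def HasAlignedPoly (m : ℕ) (S : Set ℝ) (q : ℝ → ℂ) : Prop :=
  ∃ p : ℂ[X], p.degree < m ∧ ∀ x ∈ S, 0 < (starRingEnd ℂ (q x) * p.eval (x : ℂ)).re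

lemma exists_moments_eq_zero_of_not_hasAlignedPoly {m : ℕ} {S : Finset ℝ} {q : ℝ → ℂ}
    (h : ¬ HasAlignedPoly m S q) :
    ∃ T ⊆ S, T.Nonempty ∧ ∃ μ : ℝ → ℝ, (∀ x ∈ T, 0 < μ x) ∧
      ∀ a < m, ∑ x ∈ T, μ x * q x * (x : ℂ) ^ a = 0 := by
  obtain ⟨T, hTS, hT, μ, hμ, hsum⟩ := exists_pos_sum_mul_eq_zero_of_complex S
    (fun x : ℝ => starRingEnd ℂ (q x) • leval (x : ℂ) ∘ₗ (degreeLT ℂ m).subtype)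
    fun ⟨p, hp⟩ => h ⟨p, mem_degreeLT.1 p.2, hp⟩
  refine ⟨T, hTS, hT, μ, hμ, fun a ha => ?_⟩
  have hpow := hsum ⟨X ^ a, mem_degreeLT.2 (by rw [degree_X_pow]; exact mod_cast ha)⟩
  simpa [mul_assoc] using congrArg (starRingEnd ℂ) hpow

variable {r : ℕ} {K : Set (Finset (Fin r))} {k : Fin r} {e : Fin r → ℕ} {ρ : ℕ}

/-- The real points at which the polynomials other than the `k`-th force the `k`-th one to be
nonzero in `PolSp`. -/
def degenerateReals (K : Set (Finset (Fin r))) (k : Fin r) (u : ∀ i, Fin (e i) → ℂ) : Set ℝ :=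
  {x | ∃ σ ∉ K, k ∈ σ ∧ ∀ i ∈ σ, i ≠ k → (toPoly (u i)).eval (x : ℂ) = 0}

lemma exists_finset_coe_eq_degenerateReals (hK : ∀ σ, σ ∉ K → 2 ≤ σ.card) (k : Fin r)
    (u : ∀ i, Fin (e i) → ℂ) :
    ∃ S : Finset ℝ, ↑S = degenerateReals K k u ∧ S.card ≤ ∑ i ∈ Finset.univ.erase k, e i := by
  let R : Finset ℂ := (Finset.univ.erase k).biUnion fun i => (toPoly (u i)).roots.toFinset
  have hR : R.card ≤ ∑ i ∈ Finset.univ.erase k, e i := by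
    refine Finset.card_biUnion_le.trans (Finset.sum_le_sum fun i _ => ?_)
    exact ((Multiset.toFinset_card_le _).trans (card_roots' _)).trans_eq (natDegree_toPoly _)
  have hsub : Complex.ofReal '' degenerateReals K k u ⊆ R := by
    rintro _ ⟨x, ⟨σ, hσ, -, hx⟩, rfl⟩
    obtain ⟨i, hi, hik⟩ := Finset.exists_mem_ne (hK σ hσ) k
    simp only [R, Finset.coe_biUnion, Set.mem_iUnion, Finset.mem_coe]
    exact ⟨i, by simp [hik], by simp [(toPoly_monic _).ne_zero, hx i hi hik]⟩
  have hfin : (degenerateReals K k u).Finite :=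
    (R.finite_toSet.subset hsub).of_finite_image Complex.ofReal_injective.injOn
  refine ⟨hfin.toFinset, hfin.coe_toFinset, le_trans ?_ hR⟩
  rw [← Finset.card_image_of_injective _ Complex.ofReal_injective]
  exact Finset.card_le_card fun z hz => hsub (by simpa using hz)

lemma degree_ofFn_mul_ofFn_lt {R : Type*} [Semiring R] {m n d : ℕ} (h : m + n ≤ d)
    (a : Fin m → R) (b : Fin n → R) : (ofFn m a * ofFn n b).degree < d := by
  by_cases ha : ofFn m a = 0
  · simp [ha]
  by_cases hb : ofFn n b = 0
  · simp [hb]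
  have hma := (natDegree_lt_iff_degree_lt ha).2 (ofFn_degree_lt a)
  have hnb := (natDegree_lt_iff_degree_lt hb).2 (ofFn_degree_lt b)
  refine degree_le_natDegree.trans_lt (mod_cast natDegree_mul_le.trans_lt ?_)
  omega

lemma exists_eq_ofFn_mul_ofFn_of_not_hasAlignedPoly {m : ℕ} {S : Finset ℝ} {q : ℝ → ℂ}
    (hq : ∀ x ∈ S, q x ≠ 0) (h : ¬ HasAlignedPoly m S q) :
    ∃ T ⊆ S, m < T.card ∧ ∃ (s : Fin T.card → ℝ) (κ : Fin (T.card - m) → ℂ), ∀ x ∈ T,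
      q x = (ofFn _ fun i => (s i : ℂ)).eval (x : ℂ) * (ofFn _ κ).eval (x : ℂ) := by
  obtain ⟨T, hTS, hT, μ, hμ, hmom⟩ := exists_moments_eq_zero_of_not_hasAlignedPoly h
  exact ⟨T, hTS, exists_eq_ofFn_mul_ofFn_of_moments_eq_zero hT (fun x hx => (hμ x hx).ne')
    (fun x hx => hq x (hTS hx)) hmom⟩

variable {E : Type*} {v : E → ∀ i, Fin (e i) → ℂ} {m : ℕ}

/-- The family `v` with a product of a real polynomial of degree less than `n` and a complex
polynomial of degree less than `n - m`, both free parameters, subtracted from its `k`-th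
polynomial. -/
def subProduct (v : E → ∀ i, Fin (e i) → ℂ) (k : Fin r) (m n : ℕ)
    (z : E × (Fin n → ℝ) × (Fin (n - m) → ℂ)) (i : Fin r) : Fin (e i) → ℂ :=
  v z.1 i - if i = k then toFn (e i) (ofFn n (fun j => (z.2.1 j : ℂ)) * ofFn (n - m) z.2.2) else 0

lemma toPoly_subProduct_add {n : ℕ} (hn : n + (n - m) ≤ e k) (c : ∀ i, Fin (e i) → ℂ) (b : E)
    (s : Fin n → ℝ) (κ : Fin (n - m) → ℂ) :
    toPoly (subProduct v k m n (b, s, κ) k + c k) =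
      toPoly ((v b + c) k) - ofFn n (fun j => (s j : ℂ)) * ofFn (n - m) κ := by
  rw [← toPoly_sub_toFn _ (degree_ofFn_mul_ofFn_lt hn _ _), subProduct, if_pos rfl,
    sub_add_eq_add_sub, Pi.add_apply]

lemma subProduct_of_ne {n : ℕ} {i : Fin r} (hi : i ≠ k)
    (z : E × (Fin n → ℝ) × (Fin (n - m) → ℂ)) : subProduct v k m n z i = v z.1 i := by
  rw [subProduct, if_neg hi, sub_zero]

variable [NormedAddCommGroup E] [NormedSpace ℝ E]

lemma contDiff_subProduct (hv : ContDiff ℝ 1 v) (k : Fin r) (m n : ℕ) :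
    ContDiff ℝ 1 (subProduct v k m n) := by
  refine contDiff_pi.2 fun i => ((contDiff_pi.1 hv i).comp contDiff_fst).sub ?_
  split_ifs
  · refine CoeffContDiff.toFn (.mul (.ofFn (contDiff_pi.2 fun j => ?_)) (.ofFn ?_)) _
    · exact Complex.ofRealCLM.contDiff.comp (by fun_prop)
    · fun_prop
  · exact contDiff_const

variable [FiniteDimensional ℝ E]

lemma finrank_subProduct_domain_lt (hρ : 2 ≤ ρ) (hE : finrank ℝ E < 2 * (ρ - 1) * m) {n : ℕ}
    (hmn : m ≤ n) {σ : Fin n → Finset (Fin r)} (hσ : ∀ j, ρ ≤ (σ j).card) :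
    finrank ℝ (E × (Fin n → ℝ) × (Fin (n - m) → ℂ)) + n < 2 * ∑ j, (σ j).card := by
  have hsum : n * ρ ≤ ∑ j, (σ j).card := by
    simpa using Finset.card_nsmul_le_sum Finset.univ (fun j => (σ j).card) ρ fun j _ => hσ j
  rw [finrank_prod, finrank_prod, finrank_fin_fun, finrank_pi_fin_complex]
  obtain ⟨l, rfl⟩ := Nat.exists_eq_add_of_le hρ
  rw [show 2 + l - 1 = 1 + l by omega, mul_add, mul_one, add_mul, mul_assoc] at hE
  rw [mul_add, mul_comm n l] at hsum
  have : l * m ≤ l * n := Nat.mul_le_mul_left _ hmn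
  omega

/-- If no aligned polynomial exists, the `k`-th polynomial agrees at some of the degenerate points
with a product depending on few parameters, so all polynomials have many prescribed zeros once
this product is subtracted. -/
theorem dense_hasAlignedPoly (hρ : 2 ≤ ρ) (hK : ∀ σ, σ ∉ K → ρ ≤ σ.card) (k : Fin r)
    (hE : finrank ℝ E < 2 * (ρ - 1) * m) (he : 2 * ∑ i ∈ Finset.univ.erase k, e i ≤ e k)
    (hv : ContDiff ℝ 1 v) :
    Dense {c | ∀ b, (∀ x ∈ degenerateReals K k (v b + c),
        (toPoly ((v b + c) k)).eval (x : ℂ) ≠ 0) →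
      HasAlignedPoly m (degenerateReals K k (v b + c))
        fun x => (toPoly ((v b + c) k)).eval (x : ℂ)} := by
  let ι := {s : Σ n : ℕ, Fin n → Finset (Fin r) // m ≤ s.1 ∧ ∀ j, ρ ≤ (s.2 j).card}
  refine (dense_exists_eval_ne_zero (fun s : ι => s.1.2)
    (fun s => contDiff_subProduct hv k m s.1.1)
    fun s => finrank_subProduct_domain_lt hρ hE s.2.1 s.2.2).mono fun c hc b hne => ?_
  obtain ⟨S, hS, hS_card⟩ :=
    exists_finset_coe_eq_degenerateReals (fun σ hσ => hρ.trans (hK σ hσ)) k (v b + c)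
  by_contra hno
  rw [← hS] at hne hno
  obtain ⟨T, hTS, hmT, s, κ, hsκ⟩ := exists_eq_ofFn_mul_ofFn_of_not_hasAlignedPoly hne hno
  have hT_card : T.card + (T.card - m) ≤ e k := by
    have := Finset.card_le_card hTS
    omega
  let x : Fin T.card → ℝ := T.orderEmbOfFin rfl
  have hxT (j) : x j ∈ T := T.orderEmbOfFin_mem rfl j
  have hx_deg (j) : x j ∈ degenerateReals K k (v b + c) := hS ▸ hTS (hxT j)
  choose σ hσK hσk hσ using hx_deg
  obtain ⟨j, i, hi, hij⟩ := hc ⟨⟨_, σ⟩, hmT.le, fun j => hK _ (hσK j)⟩ (b, s, κ) x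
    (T.orderEmbOfFin rfl).injective
  refine hij ?_
  by_cases hik : i = k
  · subst hik
    rw [toPoly_subProduct_add hT_card, eval_sub, eval_mul, ← hsκ _ (hxT j)]
    exact sub_self _
  · rw [subProduct_of_ne hik]
    exact hσ j i hi hik

end AlignedPolynomials

section CircleFunctions

open Polynomial OnePoint

lemma ofReal_sub_I_ne_zero (x : ℝ) : (x : ℂ) - Complex.I ≠ 0 :=
  fun h => by simpa using congrArg Complex.im h

lemma ofReal_add_I_ne_zero (x : ℝ) : (x : ℂ) + Complex.I ≠ 0 :=
  fun h => by simpa using congrArg Complex.im h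

/-- The function `1 / (x - i)` on the circle `ℝ ∪ {∞}`. -/
def invSubI : C(OnePoint ℝ, ℂ) :=
  continuousMapMk ⟨fun x : ℝ => ((x : ℂ) - Complex.I)⁻¹, by
    exact Continuous.inv₀ (by fun_prop) ofReal_sub_I_ne_zero⟩ 0 (by
    rw [Filter.coclosedCompact_eq_cocompact, ← Metric.cobounded_eq_cocompact]
    exact Filter.tendsto_inv₀_cobounded.comp
      ((tendsto_sub_const_cobounded Complex.I).comp
        (RCLike.tendsto_ofReal_cobounded_cobounded ℂ)))

@[simp] lemma invSubI_coe (x : ℝ) : invSubI x = ((x : ℂ) - Complex.I)⁻¹ := rfl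

@[simp] lemma invSubI_infty : invSubI ∞ = 0 := rfl

lemma invSubI_injective : Function.Injective invSubI := by
  have hne : ∀ x : ℝ, invSubI x ≠ 0 := fun x => inv_ne_zero (ofReal_sub_I_ne_zero x)
  simp only [Function.Injective, OnePoint.forall, invSubI_infty]
  refine ⟨⟨fun _ => trivial, fun x h => absurd h.symm (hne x)⟩, fun x => ⟨fun h => absurd h (hne x),
    fun y h => ?_⟩⟩
  simpa using h

/-- The function `x / (x - i)` on the circle `ℝ ∪ {∞}`. -/
def divSubI : C(OnePoint ℝ, ℂ) := 1 + Complex.I • invSubI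

@[simp] lemma divSubI_coe (x : ℝ) : divSubI x = (x : ℂ) / ((x : ℂ) - Complex.I) := by
  have := ofReal_sub_I_ne_zero x
  simp only [divSubI, ContinuousMap.add_apply, ContinuousMap.one_apply, ContinuousMap.smul_apply,
    invSubI_coe, smul_eq_mul]
  field_simp
  ring

@[simp] lemma divSubI_infty : divSubI ∞ = 1 := by
  simp [divSubI]

/-- The function `x ^ s / ((x - i) ^ α (x + i) ^ β)` on the circle `ℝ ∪ {∞}`, for `s ≤ α + β`. -/
def circleMonomial (α β s : ℕ) : C(OnePoint ℝ, ℂ) :=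
  divSubI ^ (min s α) * invSubI ^ (α - min s α) * star divSubI ^ (s - min s α) *
    star invSubI ^ (β - (s - min s α))

variable {α β d : ℕ}

lemma circleMonomial_coe {s : ℕ} (h : s ≤ α + β) (x : ℝ) :
    circleMonomial α β s x =
      (x : ℂ) ^ s / (((x : ℂ) - Complex.I) ^ α * ((x : ℂ) + Complex.I) ^ β) := by
  obtain ⟨p, q, hp, hs, hpα, hqβ⟩ : ∃ p q, p = min s α ∧ s = p + q ∧ p ≤ α ∧ q ≤ β :=
    ⟨_, s - min s α, rfl, by omega, by omega, by omega⟩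
  have := ofReal_sub_I_ne_zero x
  have := ofReal_add_I_ne_zero x
  simp only [circleMonomial, ContinuousMap.mul_apply, ContinuousMap.pow_apply,
    ContinuousMap.star_apply, invSubI_coe, divSubI_coe, ← hp, RCLike.star_def, map_div₀,
    map_inv₀, map_sub, Complex.conj_ofReal, Complex.conj_I, sub_neg_eq_add]
  obtain ⟨a, rfl⟩ := Nat.exists_eq_add_of_le hpα
  obtain ⟨b, rfl⟩ := Nat.exists_eq_add_of_le hqβ
  simp only [Nat.add_sub_cancel_left, hs, div_pow, inv_pow, pow_add]
  field_simp

lemma circleMonomial_infty {s : ℕ} (h : s ≤ α + β) :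
    circleMonomial α β s ∞ = if s = α + β then 1 else 0 := by
  simp only [circleMonomial, ContinuousMap.mul_apply, ContinuousMap.pow_apply,
    ContinuousMap.star_apply, invSubI_infty, divSubI_infty, star_zero, star_one, one_pow, one_mul,
    mul_one, zero_pow_eq]
  grind

/-- The monic polynomial with coefficients `v` divided by `(x - i) ^ α (x + i) ^ β`, as a function
on the circle `ℝ ∪ {∞}`; it is meant for `d = α + β`. -/
def circleRat (α β : ℕ) {d : ℕ} (v : Fin d → ℂ) : C(OnePoint ℝ, ℂ) :=
  circleMonomial α β d + ∑ i, v i • circleMonomial α β i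

lemma circleRat_coe (h : d = α + β) (v : Fin d → ℂ) (x : ℝ) :
    circleRat α β v x =
      (toPoly v).eval (x : ℂ) / (((x : ℂ) - Complex.I) ^ α * ((x : ℂ) + Complex.I) ^ β) := by
  have hlt : ∀ i : Fin d, (i : ℕ) ≤ α + β := fun i => h ▸ i.2.le
  simp only [circleRat, toPoly, ContinuousMap.add_apply, ContinuousMap.sum_apply,
    ContinuousMap.smul_apply, circleMonomial_coe h.le, circleMonomial_coe (hlt _), eval_add,
    eval_finsetSum, eval_mul, eval_pow, eval_X, eval_C, add_div, Finset.sum_div, smul_eq_mul,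
    mul_div_assoc]

lemma circleRat_infty (h : d = α + β) (v : Fin d → ℂ) : circleRat α β v ∞ = 1 := by
  have hlt : ∀ i : Fin d, (i : ℕ) < α + β := fun i => h ▸ i.2
  simp [circleRat, circleMonomial_infty h.le, if_pos h, circleMonomial_infty (hlt _).le,
    (hlt _).ne]

lemma circleRat_coe_eq_zero_iff (h : d = α + β) (v : Fin d → ℂ) (x : ℝ) :
    circleRat α β v x = 0 ↔ (toPoly v).eval (x : ℂ) = 0 := by
  simp [circleRat_coe h, div_eq_zero_iff, ofReal_sub_I_ne_zero, ofReal_add_I_ne_zero]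

lemma continuous_circleRat (α β d : ℕ) : Continuous (circleRat α β (d := d)) := by
  unfold circleRat
  fun_prop

lemma circleRat_convexCombo (α β : ℕ) (v w : Fin d → ℂ) {a b : ℝ} (hab : a + b = 1) :
    circleRat α β (a • v + b • w) = a • circleRat α β v + b • circleRat α β w := by
  have hab' : (a : ℂ) + b = 1 := by exact_mod_cast hab
  ext x
  simp only [circleRat, ContinuousMap.add_apply, ContinuousMap.sum_apply, ContinuousMap.smul_apply,
    Pi.add_apply, Pi.smul_apply, Complex.real_smul, smul_eq_mul, add_mul, Finset.sum_add_distrib,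
    mul_add, Finset.mul_sum, mul_assoc]
  linear_combination (-(circleMonomial α β d x)) * hab'

lemma circleRat_add_sub (α β : ℕ) (v c : Fin d → ℂ) :
    circleRat α β (v + c) - circleRat α β v = circleRat α β c - circleRat α β (0 : Fin d → ℂ) := by
  simp [circleRat, add_smul, Finset.sum_add_distrib]

lemma circleRat_injective (h : d = α + β) :
    Function.Injective (circleRat α β (d := d)) := by
  intro v w hvw
  have heval : Set.range ((↑) : ℝ → ℂ) ⊆ {z | (toPoly v).eval z = (toPoly w).eval z} := by
    rintro _ ⟨x, rfl⟩
    have hx := DFunLike.congr_fun hvw (x : OnePoint ℝ)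
    have := ofReal_sub_I_ne_zero x
    have := ofReal_add_I_ne_zero x
    rwa [circleRat_coe h, circleRat_coe h, div_left_inj' (by positivity)] at hx
  have hpoly : toPoly v = toPoly w := eq_of_infinite_eval_eq _ _
    ((Set.infinite_range_of_injective Complex.ofReal_injective).mono heval)
  rw [← toFn_toPoly v, hpoly, toFn_toPoly]

end CircleFunctions

section Density

open Polynomial OnePoint

/-- `f` is the function on the circle `ℝ ∪ {∞}` given by `p / (x ^ 2 + 1) ^ a` for some polynomial
`p` of degree at most `2 * a`. -/
def IsCircleFraction (f : C(OnePoint ℝ, ℂ)) (a : ℕ) : Prop :=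
  ∃ p : ℂ[X], p.natDegree ≤ 2 * a ∧ f ∞ = p.coeff (2 * a) ∧
    ∀ x : ℝ, f x * ((x : ℂ) ^ 2 + 1) ^ a = p.eval (x : ℂ)

lemma ofReal_sq_add_one (x : ℝ) :
    (x : ℂ) ^ 2 + 1 = ((x : ℂ) - Complex.I) * ((x : ℂ) + Complex.I) := by
  linear_combination Complex.I_sq

namespace IsCircleFraction

variable {f g : C(OnePoint ℝ, ℂ)} {a b : ℕ}

lemma mul (hf : IsCircleFraction f a) (hg : IsCircleFraction g b) :
    IsCircleFraction (f * g) (a + b) := by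
  obtain ⟨p, hp, hp_infty, hp_coe⟩ := hf
  obtain ⟨q, hq, hq_infty, hq_coe⟩ := hg
  refine ⟨p * q, natDegree_mul_le.trans (by omega), ?_, fun x => ?_⟩
  · rw [mul_add, coeff_mul_add_eq_of_natDegree_le hp hq, ContinuousMap.mul_apply, hp_infty,
      hq_infty]
  · rw [eval_mul, ← hp_coe, ← hq_coe, pow_add, ContinuousMap.mul_apply]
    ring

lemma one (a : ℕ) : IsCircleFraction 1 a := by
  have hmonic : (X ^ 2 + C (1 : ℂ)).Monic := monic_X_pow_add_C _ two_ne_zero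
  have hdeg : ((X ^ 2 + C (1 : ℂ)) ^ a).natDegree = 2 * a := by
    rw [hmonic.natDegree_pow, natDegree_X_pow_add_C, mul_comm]
  refine ⟨(X ^ 2 + C 1) ^ a, hdeg.le, ?_, fun x => by simp⟩
  rw [← hdeg, (hmonic.pow a).coeff_natDegree, ContinuousMap.one_apply]

lemma mono (hf : IsCircleFraction f a) (hab : a ≤ b) : IsCircleFraction f b := by
  simpa [Nat.add_sub_cancel' hab] using hf.mul (one (b - a))

lemma add (hf : IsCircleFraction f a) (hg : IsCircleFraction g a) :
    IsCircleFraction (f + g) a := by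
  obtain ⟨p, hp, hp_infty, hp_coe⟩ := hf
  obtain ⟨q, hq, hq_infty, hq_coe⟩ := hg
  exact ⟨p + q, natDegree_add_le_of_degree_le hp hq, by simp [hp_infty, hq_infty],
    fun x => by simp [add_mul, hp_coe, hq_coe]⟩

lemma star (hf : IsCircleFraction f a) : IsCircleFraction (star f) a := by
  obtain ⟨p, hp, hp_infty, hp_coe⟩ := hf
  refine ⟨p.map (starRingEnd ℂ), natDegree_map_le.trans hp, by simp [hp_infty], fun x => ?_⟩
  have heval := eval_map_apply (p := p) (f := starRingEnd ℂ) (x : ℂ)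
  rw [Complex.conj_ofReal] at heval
  simp [heval, ← hp_coe]

lemma const (c : ℂ) (a : ℕ) : IsCircleFraction (ContinuousMap.const _ c) a :=
  mono (a := 0) ⟨Polynomial.C c, by simp, by simp, by simp⟩ a.zero_le

lemma invSubI : IsCircleFraction invSubI 1 := by
  refine ⟨X + C Complex.I, by simp, by simp [coeff_X], fun x => ?_⟩
  have := ofReal_sub_I_ne_zero x
  rw [ofReal_sq_add_one, invSubI_coe]
  simp [mul_add]
  field_simp

end IsCircleFraction

lemma exists_isCircleFraction_dist_lt (h : C(OnePoint ℝ, ℂ)) {ε : ℝ} (hε : 0 < ε) :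
    ∃ f a, IsCircleFraction f a ∧ dist h f < ε := by
  let A : StarSubalgebra ℂ C(OnePoint ℝ, ℂ) := StarAlgebra.adjoin ℂ {invSubI}
  have hA : A.topologicalClosure = ⊤ := by
    refine ContinuousMap.starSubalgebra_topologicalClosure_eq_top_of_separatesPoints A
      fun x y hxy => ⟨invSubI, ⟨invSubI, StarAlgebra.subset_adjoin ℂ _ rfl, rfl⟩, ?_⟩
    exact invSubI_injective.ne hxy
  have hmem : h ∈ closure (A : Set C(OnePoint ℝ, ℂ)) := by
    rw [← StarSubalgebra.topologicalClosure_coe, hA]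
    trivial
  obtain ⟨f, hfA, hf⟩ := Metric.mem_closure_iff.1 hmem ε hε
  suffices hfrac : ∃ a, IsCircleFraction f a from ⟨f, hfrac.imp fun _ ha => ⟨ha, hf⟩⟩
  clear hf
  induction hfA using StarAlgebra.adjoin_induction with
  | mem f hf => exact ⟨1, hf ▸ IsCircleFraction.invSubI⟩
  | algebraMap c => exact ⟨0, .const c 0⟩
  | add f g _ _ hf hg =>
    obtain ⟨⟨a, ha⟩, b, hb⟩ := And.intro hf hg
    exact ⟨max a b, (ha.mono (le_max_left _ _)).add (hb.mono (le_max_right _ _))⟩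
  | mul f g _ _ hf hg =>
    obtain ⟨⟨a, ha⟩, b, hb⟩ := And.intro hf hg
    exact ⟨_, ha.mul hb⟩
  | star f _ hf => exact hf.imp fun a ha => ha.star

lemma exists_isCircleFraction_dist_lt_of_infty_eq_one {h : C(OnePoint ℝ, ℂ)} (h1 : h ∞ = 1)
    {ε : ℝ} (hε : 0 < ε) : ∃ f a, IsCircleFraction f a ∧ f ∞ = 1 ∧ dist h f < ε := by
  obtain ⟨f, a, hfa, hf⟩ := exists_isCircleFraction_dist_lt h (half_pos hε)
  refine ⟨f + ContinuousMap.const _ (1 - f ∞), a, hfa.add (.const _ a), by simp, ?_⟩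
  have hf' : ∀ x, ‖h x - f x‖ < ε / 2 := fun x =>
    dist_eq_norm (h x) (f x) ▸ (ContinuousMap.dist_apply_le_dist x).trans_lt hf
  refine (ContinuousMap.dist_lt_iff hε).2 fun x => ?_
  calc dist (h x) ((f + ContinuousMap.const (OnePoint ℝ) (1 - f ∞)) x)
      = ‖(h x - f x) - (h ∞ - f ∞)‖ := by
        simp [dist_eq_norm, h1, sub_sub]
    _ ≤ ‖h x - f x‖ + ‖h ∞ - f ∞‖ := norm_sub_le _ _
    _ < ε := by linarith [hf' x, hf' ∞]

lemma IsCircleFraction.exists_eq_circleRat {f : C(OnePoint ℝ, ℂ)} {a : ℕ}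
    (hf : IsCircleFraction f a) (h1 : f ∞ = 1) (e : ℕ) {d : ℕ} (hd : d = (a + e) + a) :
    ∃ v : Fin d → ℂ, circleRat (a + e) a v = f := by
  obtain ⟨p, hp_deg, hp_infty, hp_coe⟩ := hf
  have hp : p.Monic := monic_of_natDegree_le_of_coeff_eq_one _ hp_deg (hp_infty ▸ h1)
  have hp_deg' : p.natDegree = 2 * a :=
    le_antisymm hp_deg (le_natDegree_of_ne_zero (by rw [← hp_infty, h1]; exact one_ne_zero))
  have hq : ((X - C Complex.I) ^ e).Monic := (monic_X_sub_C _).pow e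
  have hpq_deg : (p * (X - C Complex.I) ^ e).natDegree = d := by
    rw [hp.natDegree_mul hq, hp_deg', natDegree_pow, natDegree_X_sub_C]
    omega
  refine ⟨toFn d (p * (X - C Complex.I) ^ e), ContinuousMap.ext (OnePoint.forall.2 ⟨?_, ?_⟩)⟩
  · rw [circleRat_infty hd, h1]
  · intro x
    have := ofReal_sub_I_ne_zero x
    have := ofReal_add_I_ne_zero x
    rw [circleRat_coe hd, toPoly_toFn (hp.mul hq) hpq_deg, div_eq_iff (by positivity), eval_mul,
      ← hp_coe, ofReal_sq_add_one, mul_pow]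
    simp
    ring

lemma exists_forall_dist_circleRat_lt {B : Type*} [TopologicalSpace B] [CompactSpace B]
    (g : C(B, C(OnePoint ℝ, ℂ))) (hg : ∀ b, g b ∞ = 1) {ε : ℝ} (hε : 0 < ε) :
    ∃ a₀, ∀ a, a₀ ≤ a → ∀ e d, d = (a + e) + a → ∀ b, ∃ v : Fin d → ℂ,
      dist (circleRat (a + e) a v) (g b) < ε := by
  choose f a hfa hf1 hf using fun b =>
    exists_isCircleFraction_dist_lt_of_infty_eq_one (hg b) (half_pos hε)
  obtain ⟨t, ht⟩ := isCompact_univ.elim_nhds_subcover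
    (fun b => {b' | dist (g b') (g b) < ε / 2})
    (fun b _ => (isOpen_lt (by fun_prop) continuous_const).mem_nhds (by simpa using hε))
  refine ⟨t.sup a, fun A hA e d hd b => ?_⟩
  obtain ⟨b', hb', hbb'⟩ := Set.mem_iUnion₂.1 (ht.2 (Set.mem_univ b))
  obtain ⟨v, hv⟩ :=
    ((hfa b').mono ((Finset.le_sup hb').trans hA)).exists_eq_circleRat (hf1 b') e hd
  refine ⟨v, ?_⟩
  calc dist (circleRat (A + e) A v) (g b) ≤ dist (f b') (g b') + dist (g b') (g b) :=
        hv ▸ dist_triangle _ _ _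
    _ = dist (g b') (f b') + dist (g b) (g b') := by rw [dist_comm, dist_comm (g b)]
    _ < ε := by linarith [hf b', Set.mem_ofPred_eq ▸ hbb']

end Density

section AlignedFractions

open Polynomial OnePoint

variable {α β m d : ℕ}

lemma circleRat_toFn_sub_toFn {p : ℂ[X]} (hp : p.degree < d) (x : ℝ) :
    circleRat d 0 (toFn d ((X - C Complex.I) ^ d) - toFn d p) x =
      1 - p.eval (x : ℂ) / ((x : ℂ) - Complex.I) ^ d := by
  have := ofReal_sub_I_ne_zero x
  rw [circleRat_coe (by simp), toPoly_sub_toFn _ hp,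
    toPoly_toFn ((monic_X_sub_C _).pow d) (by simp), eval_sub, sub_div]
  simp [div_self, this]

lemma conj_circleRat_mul_div (hd : d = α + β) (hα : α = β + m) (v : Fin d → ℂ) (x : ℝ) (z : ℂ) :
    starRingEnd ℂ (circleRat α β v x) * (z / ((x : ℂ) - Complex.I) ^ m) =
      (((x ^ 2 + 1) ^ α)⁻¹ : ℝ) * (starRingEnd ℂ ((toPoly v).eval (x : ℂ)) * z) := by
  have := ofReal_sub_I_ne_zero x
  have := ofReal_add_I_ne_zero x
  rw [circleRat_coe hd]
  push_cast
  rw [ofReal_sq_add_one, hα]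
  simp only [map_div₀, map_mul, map_pow, map_sub, map_add, Complex.conj_ofReal, Complex.conj_I,
    sub_neg_eq_add, ← sub_eq_add_neg, mul_pow, pow_add]
  field_simp

lemma HasAlignedPoly.exists_circleRat {S : Set ℝ} (hS : S.Finite) (hd : d = α + β)
    (hα : α = β + m) {v : Fin d → ℂ}
    (h : HasAlignedPoly m S fun x => (toPoly v).eval (x : ℂ)) :
    ∃ w : Fin m → ℂ, ∀ x ∈ S,
      0 < (starRingEnd ℂ (circleRat α β v x) * circleRat m 0 w x).re := by
  obtain ⟨p, hp, hpos⟩ := h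
  -- Replace `p` by `(X - i) ^ m + R p`: this is monic, and for large `R` it is still aligned.
  have hlarge : ∀ x ∈ S, ∀ᶠ R : ℝ in Filter.atTop, 0 < (starRingEnd ℂ (circleRat α β v x) *
      (1 + R * (p.eval (x : ℂ) / ((x : ℂ) - Complex.I) ^ m))).re := by
    intro x hx
    have hslope : 0 < (starRingEnd ℂ (circleRat α β v x) *
        (p.eval (x : ℂ) / ((x : ℂ) - Complex.I) ^ m)).re := by
      rw [conj_circleRat_mul_div hd hα, Complex.re_ofReal_mul]
      exact mul_pos (by positivity) (hpos x hx)
    refine ((Filter.tendsto_atTop_add_const_left _ (starRingEnd ℂ (circleRat α β v x)).re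
      (Filter.tendsto_id.atTop_mul_const hslope)).eventually_gt_atTop 0).mono fun R hR => ?_
    rwa [mul_add, mul_one, mul_left_comm, Complex.add_re, Complex.re_ofReal_mul]
  obtain ⟨R, hR⟩ := ((Filter.eventually_all_finite hS).2 hlarge).exists
  have hRp : (C (-R : ℂ) * p).degree < m :=
    (degree_mul_le _ _).trans_lt ((add_le_add_left degree_C_le _).trans_lt (by simpa using hp))
  refine ⟨toFn m ((X - C Complex.I) ^ m) - toFn m (C (-R : ℂ) * p), fun x hx => ?_⟩
  rw [circleRat_toFn_sub_toFn hRp]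
  convert hR x hx using 3
  simp
  ring

end AlignedFractions

section CircleTuples

open OnePoint

variable {r : ℕ} {K : Set (Finset (Fin r))} {D : Fin r → ℕ} {T : Set (Fin r)} {k : Fin r}

/-- Tuples of continuous complex functions on the circle `ℝ ∪ {∞}`. -/
abbrev CircleTuple (r : ℕ) : Type := Fin r → C(OnePoint ℝ, ℂ)

/-- The functions `f(x) / (x - i) ^ d` on the circle with `f` a monic polynomial of degree `d`. -/
def circlePolynomials (d : ℕ) : Set C(OnePoint ℝ, ℂ) :=
  Set.range (circleRat d 0 (d := d))

lemma circleRat_mem_circlePolynomials {d α β e : ℕ} (v : Fin e → ℂ) (he : e = α + β) (hα : α = d)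
    (hβ : β = 0) : circleRat α β v ∈ circlePolynomials d := by
  subst hα hβ he
  exact ⟨v, rfl⟩

lemma convex_circlePolynomials (d : ℕ) : Convex ℝ (circlePolynomials d) := by
  rintro _ ⟨v, rfl⟩ _ ⟨w, rfl⟩ a b _ _ hab
  exact ⟨a • v + b • w, circleRat_convexCombo _ _ _ _ hab⟩

/-- The tuples of functions on the circle with value `1` at `∞`, whose coordinates in `T` come from
monic polynomials with degrees prescribed by `D`. -/
def basedTuples (D : Fin r → ℕ) (T : Set (Fin r)) : Set (CircleTuple r) :=
  {F | (∀ i, F i ∞ = 1) ∧ ∀ i ∈ T, F i ∈ circlePolynomials (D i)}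

lemma convex_basedTuples (D : Fin r → ℕ) (T : Set (Fin r)) : Convex ℝ (basedTuples D T) := by
  intro F hF G hG a b ha hb hab
  refine ⟨fun i => ?_, fun i hi => convex_circlePolynomials _ (hF.2 i hi) (hG.2 i hi) ha hb hab⟩
  simpa [hF.1 i, hG.1 i] using mod_cast hab

/-- The tuples of functions on the circle that form a loop in `U(K)`. -/
def loopTuples (K : Set (Finset (Fin r))) : Set (CircleTuple r) :=
  {F | ∀ x, (fun i => F i x) ∈ UK K}

lemma isOpen_UK (K : Set (Finset (Fin r))) : IsOpen (UK K) := by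
  have hL : ∀ σ : Finset (Fin r), LSub σ = ⋂ i ∈ σ, {x : Fin r → ℂ | x i = 0} := by
    intro σ
    ext x
    simp [LSub]
  refine isOpen_compl_iff.2 (Set.Finite.isClosed_biUnion (Set.toFinite _) fun σ _ => ?_)
  rw [hL]
  exact isClosed_biInter fun i _ => isClosed_eq (continuous_apply i) continuous_const

lemma continuous_circleTuple_apply {B : Type*} [TopologicalSpace B] (Φ : C(B, CircleTuple r))
    (i : Fin r) : Continuous fun p : B × OnePoint ℝ => Φ p.1 i p.2 :=
  (((continuous_apply i).comp Φ.continuous).comp continuous_fst).eval continuous_snd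

lemma exists_forall_mem_UK_of_dist_lt {B : Type*} [TopologicalSpace B] [CompactSpace B]
    (Φ : C(B, CircleTuple r)) (hΦ : ∀ b, Φ b ∈ loopTuples K) :
    ∃ ε > 0, ∀ b x (y : Fin r → ℂ), (∀ i, dist (y i) (Φ b i x) < ε) → y ∈ UK K := by
  obtain ⟨ε, hε, h⟩ := (isCompact_range (continuous_pi
    (continuous_circleTuple_apply Φ))).exists_thickening_subset_open (isOpen_UK K) (by
      rintro _ ⟨p, rfl⟩
      exact hΦ _ _)
  exact ⟨ε, hε, fun b x y hy => h
    (Metric.mem_thickening_iff.2 ⟨_, ⟨(b, x), rfl⟩, (dist_pi_lt_iff hε).2 hy⟩)⟩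

/-- The parameters at which changing the `k`-th coordinate of `F` can leave `U(K)`: those where all
the other coordinates indexed by some `σ ∉ K` containing `k` vanish. -/
def degenerateSet (K : Set (Finset (Fin r))) (k : Fin r) (F : CircleTuple r) :
    Set (OnePoint ℝ) :=
  {x | ∃ σ ∉ K, k ∈ σ ∧ ∀ i ∈ σ, i ≠ k → F i x = 0}

lemma isClosed_degenerateSet {B : Type*} [TopologicalSpace B] (Φ : C(B, CircleTuple r)) :
    IsClosed {p : B × OnePoint ℝ | p.2 ∈ degenerateSet K k (Φ p.1)} := by
  have h : {p : B × OnePoint ℝ | p.2 ∈ degenerateSet K k (Φ p.1)} =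
      ⋃ σ ∈ {σ : Finset (Fin r) | σ ∉ K ∧ k ∈ σ},
        ⋂ i ∈ {i | i ∈ σ ∧ i ≠ k}, {p : B × OnePoint ℝ | Φ p.1 i p.2 = 0} := by
    ext p
    simp [degenerateSet, and_assoc]
  rw [h]
  exact Set.Finite.isClosed_biUnion (Set.toFinite _) fun σ _ => isClosed_biInter fun i _ =>
    isClosed_eq (continuous_circleTuple_apply Φ i) continuous_const

lemma infty_notMem_degenerateSet (hK : ∀ σ, σ ∉ K → 2 ≤ σ.card) {F : CircleTuple r}
    (hF : ∀ i, F i ∞ = 1) : ∞ ∉ degenerateSet K k F := by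
  rintro ⟨σ, hσ, -, h0⟩
  obtain ⟨i, hi, hik⟩ := Finset.exists_mem_ne (hK σ hσ) k
  exact one_ne_zero ((hF i).symm.trans (h0 i hi hik))

lemma coe_mem_degenerateSet_circleRat_iff {α β e : Fin r → ℕ} (he : ∀ i, e i = α i + β i)
    (u : ∀ i, Fin (e i) → ℂ) (x : ℝ) :
    (x : OnePoint ℝ) ∈ degenerateSet K k (fun i => circleRat (α i) (β i) (u i)) ↔
      x ∈ degenerateReals K k u := by
  simp only [degenerateSet, degenerateReals, Set.mem_ofPred_eq, circleRat_coe_eq_zero_iff (he _)]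

/-- The monic polynomials whose quotient by `(x - i) ^ d` makes an acute angle with the `k`-th
coordinate of `F` at every degenerate parameter. Moving `F k` to such a function along a straight
line stays in `U(K)`. -/
def alignedCoeffs (K : Set (Finset (Fin r))) (k : Fin r) (d : ℕ) (F : CircleTuple r) :
    Set (Fin d → ℂ) :=
  {w | ∀ x ∈ degenerateSet K k F, 0 < (starRingEnd ℂ (F k x) * circleRat d 0 w x).re}

lemma convex_setOf_re_mul_pos (c : ℂ) : Convex ℝ {z : ℂ | 0 < (c * z).re} := by
  have : {z : ℂ | 0 < (c * z).re} =
      (Complex.reCLM.comp (ContinuousLinearMap.mul ℝ ℂ c)) ⁻¹' Set.Ioi 0 := rfl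
  exact this ▸ (convex_Ioi 0).linear_preimage _

lemma convex_alignedCoeffs (K : Set (Finset (Fin r))) (k : Fin r) (d : ℕ) (F : CircleTuple r) :
    Convex ℝ (alignedCoeffs K k d F) := by
  intro v hv w hw a b ha hb hab x hx
  rw [circleRat_convexCombo _ _ _ _ hab]
  exact convex_setOf_re_mul_pos _ (hv x hx) (hw x hx) ha hb hab

lemma eventually_mem_alignedCoeffs {B : Type*} [TopologicalSpace B] (Φ : C(B, CircleTuple r))
    {d : ℕ} {w : Fin d → ℂ} {b : B} (hw : w ∈ alignedCoeffs K k d (Φ b)) :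
    ∀ᶠ y in nhds b, w ∈ alignedCoeffs K k d (Φ y) := by
  have hopen : IsOpen {p : B × OnePoint ℝ | p.2 ∈ degenerateSet K k (Φ p.1) →
      0 < (starRingEnd ℂ (Φ p.1 k p.2) * circleRat d 0 w p.2).re} := by
    have hcont := continuous_circleTuple_apply Φ k
    have hre : Continuous fun p : B × OnePoint ℝ =>
        (starRingEnd ℂ (Φ p.1 k p.2) * circleRat d 0 w p.2).re := by fun_prop
    simp only [imp_iff_not_or]
    exact (isClosed_degenerateSet Φ).isOpen_compl.union (isOpen_lt continuous_const hre)
  have hmem := isCompact_univ.eventually_forall_of_forall_eventually (K := Set.univ)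
    (P := fun y x => x ∈ degenerateSet K k (Φ y) →
      0 < (starRingEnd ℂ (Φ y k x) * circleRat d 0 w x).re)
    fun x _ => hopen.mem_nhds (hw x : (b, x) ∈ _)
  exact hmem.mono fun y hy x => hy x trivial

lemma exists_continuousMap_mem_alignedCoeffs {B : Type*} [TopologicalSpace B] [NormalSpace B]
    [ParacompactSpace B] (Φ : C(B, CircleTuple r)) {d : ℕ}
    (h : ∀ b, (alignedCoeffs K k d (Φ b)).Nonempty) :
    ∃ w : C(B, Fin d → ℂ), ∀ b, w b ∈ alignedCoeffs K k d (Φ b) :=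
  exists_continuous_forall_mem_convex_of_local_const (fun _ => convex_alignedCoeffs _ _ _ _)
    fun b => (h b).imp fun _ => eventually_mem_alignedCoeffs Φ

lemma nonempty_alignedCoeffs_circleRat (hK : ∀ σ, σ ∉ K → 2 ≤ σ.card) {α β e : Fin r → ℕ}
    (he : ∀ i, e i = α i + β i) {d : ℕ} (hk : α k = β k + d) (u : ∀ i, Fin (e i) → ℂ)
    (h : HasAlignedPoly d (degenerateReals K k u) fun x => (toPoly (u k)).eval (x : ℂ)) :
    (alignedCoeffs K k d fun i => circleRat (α i) (β i) (u i)).Nonempty := by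
  obtain ⟨S, hS, -⟩ := exists_finset_coe_eq_degenerateReals hK k u
  obtain ⟨w, hw⟩ := h.exists_circleRat (hS ▸ S.finite_toSet) (he k) hk
  refine ⟨w, OnePoint.forall.2 ⟨fun hx => ?_, fun x hx => ?_⟩⟩
  · exact absurd hx (infty_notMem_degenerateSet hK fun i => circleRat_infty (he i) _)
  · exact hw x ((coe_mem_degenerateSet_circleRat_iff he u x).1 hx)

end CircleTuples

section AlignedApproximation

open OnePoint

variable {r : ℕ} {K : Set (Finset (Fin r))} {D : Fin r → ℕ} {T : Set (Fin r)} {k : Fin r}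

lemma exists_degrees_forall_dist_circleRat_lt {B : Type*} [TopologicalSpace B] [CompactSpace B]
    {Φ : C(B, CircleTuple r)} (hΦ : ∀ b, Φ b ∈ basedTuples D T) (hk : k ∉ T) {δ : ℝ}
    (hδ : 0 < δ) :
    ∃ ν : Fin r → ℕ × ℕ,
      (∀ i b, ∃ v : Fin ((ν i).1 + (ν i).2) → ℂ,
        dist (circleRat (ν i).1 (ν i).2 v) (Φ b i) < δ) ∧
      (ν k).1 = (ν k).2 + D k ∧ (∀ i ∈ T, ν i = (D i, 0)) ∧
      2 * ∑ i ∈ Finset.univ.erase k, ((ν i).1 + (ν i).2) ≤ (ν k).1 + (ν k).2 := by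
  choose a₀ ha₀ using fun i => exists_forall_dist_circleRat_lt
    ⟨fun b => Φ b i, (continuous_apply i).comp Φ.continuous⟩ (fun b => (hΦ b).1 i) hδ
  let ν₀ : Fin r → ℕ × ℕ := fun i => if i ∈ T then (D i, 0) else (a₀ i, a₀ i)
  let a := max (a₀ k) (∑ i ∈ Finset.univ.erase k, ((ν₀ i).1 + (ν₀ i).2))
  have hne {i : Fin r} (hi : i ≠ k) : Function.update ν₀ k (a + D k, a) i = ν₀ i :=
    Function.update_of_ne hi ..
  refine ⟨Function.update ν₀ k (a + D k, a), ?_, by simp, fun i hi => ?_, ?_⟩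
  · refine (Function.forall_update_iff ν₀ (p := fun i ab => ∀ b, ∃ v : Fin (ab.1 + ab.2) → ℂ,
      dist (circleRat ab.1 ab.2 v) (Φ b i) < δ)).2
      ⟨ha₀ k a (le_max_left ..) (D k) _ rfl, fun i _ => ?_⟩
    by_cases hi : i ∈ T
    · rw [show ν₀ i = (D i, 0) from if_pos hi]
      intro b
      obtain ⟨v, hv⟩ := (hΦ b).2 i hi
      exact ⟨v, by simpa [← hv] using hδ⟩
    · rw [show ν₀ i = (a₀ i, a₀ i) from if_neg hi]
      exact ha₀ i (a₀ i) le_rfl 0 _ rfl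
  · rw [hne (ne_of_mem_of_not_mem hi hk)]
    exact if_pos hi
  · rw [Finset.sum_congr rfl fun i hi => by rw [hne (Finset.ne_of_mem_erase hi)]]
    have : ∑ i ∈ Finset.univ.erase k, ((ν₀ i).1 + (ν₀ i).2) ≤ a := le_max_right ..
    simp only [Function.update_self]
    omega

section Perturbation

variable {E : Type*} [NormedAddCommGroup E] [NormedSpace ℝ E] [FiniteDimensional ℝ E]
  {α β : Fin r → ℕ}

lemma exists_contDiff_dist_circleRat_lt (Φ : C(E, CircleTuple r)) {δ : ℝ}
    (h : ∀ i b, ∃ v : Fin (α i + β i) → ℂ, dist (circleRat (α i) (β i) v) (Φ b i) < δ) :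
    ∃ v : E → ∀ i, Fin (α i + β i) → ℂ, ContDiff ℝ 1 v ∧
      ∀ b i, dist (circleRat (α i) (β i) (v b i)) (Φ b i) < δ := by
  let t (b : E) : Set (∀ i, Fin (α i + β i) → ℂ) :=
    {v | ∀ i, dist (circleRat (α i) (β i) (v i)) (Φ b i) < δ}
  have ht (b) : Convex ℝ (t b) := by
    intro v hv w hw a c ha hc hac i
    rw [Pi.add_apply, Pi.smul_apply, Pi.smul_apply, circleRat_convexCombo _ _ _ _ hac]
    exact convex_ball _ _ (hv i) (hw i) ha hc hac
  have hloc (b) : ∃ v, ∀ᶠ y in nhds b, v ∈ t y := by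
    choose v hv using fun i => h i b
    refine ⟨v, Filter.eventually_all.2 fun i => ?_⟩
    have hcont : Continuous fun y => dist (circleRat (α i) (β i) (v i)) (Φ y i) := by fun_prop
    exact hcont.continuousAt.eventually (gt_mem_nhds (hv i))
  obtain ⟨g, hg⟩ := exists_contMDiffMap_forall_mem_convex_of_local_const (n := 1)
    (modelWithCornersSelf ℝ E) ht hloc
  exact ⟨g, contMDiff_iff_contDiff.1 g.contMDiff, hg⟩

lemma exists_dist_lt_nonempty_alignedCoeffs {ρ d : ℕ} (hρ : 2 ≤ ρ)
    (hK : ∀ σ, σ ∉ K → ρ ≤ σ.card) (hE : Module.finrank ℝ E < 2 * (ρ - 1) * d)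
    (hk : α k = β k + d)
    (hsum : 2 * ∑ i ∈ Finset.univ.erase k, (α i + β i) ≤ α k + β k)
    (Φ : C(E, CircleTuple r)) {ε : ℝ} (hε : 0 < ε)
    (h : ∀ i b, ∃ v : Fin (α i + β i) → ℂ, dist (circleRat (α i) (β i) v) (Φ b i) < ε / 2) :
    ∃ u : C(E, ∀ i, Fin (α i + β i) → ℂ),
      (∀ b i, dist (circleRat (α i) (β i) (u b i)) (Φ b i) < ε) ∧
      ∀ b, (∀ x ∈ degenerateSet K k fun i => circleRat (α i) (β i) (u b i),
          circleRat (α k) (β k) (u b k) x ≠ 0) →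
        (alignedCoeffs K k d fun i => circleRat (α i) (β i) (u b i)).Nonempty := by
  obtain ⟨v, hv, hvΦ⟩ := exists_contDiff_dist_circleRat_lt Φ h
  have hsmall : IsOpen {c : ∀ i, Fin (α i + β i) → ℂ |
      ∀ i, dist (circleRat (α i) (β i) (c i))
        (circleRat (α i) (β i) (0 : Fin (α i + β i) → ℂ)) < ε / 2} := by
    rw [Set.ofPred_forall]
    refine isOpen_iInter_of_finite fun i => isOpen_lt ?_ continuous_const
    exact ((continuous_circleRat _ _ _).comp (continuous_apply i)).dist continuous_const
  obtain ⟨c, hc, hcv⟩ := (dense_hasAlignedPoly hρ hK k hE hsum hv).inter_open_nonempty _ hsmall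
    ⟨0, fun i => by simpa using hε⟩
  refine ⟨⟨fun b => v b + c, hv.continuous.add continuous_const⟩, fun b i => ?_, fun b hb => ?_⟩
  · calc dist (circleRat (α i) (β i) (v b i + c i)) (Φ b i)
        ≤ dist (circleRat (α i) (β i) (v b i + c i)) (circleRat (α i) (β i) (v b i)) +
          dist (circleRat (α i) (β i) (v b i)) (Φ b i) := dist_triangle _ _ _
      _ = dist (circleRat (α i) (β i) (c i)) (circleRat (α i) (β i) (0 : Fin (α i + β i) → ℂ)) +
          dist (circleRat (α i) (β i) (v b i)) (Φ b i) := by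
        rw [dist_eq_norm, circleRat_add_sub, ← dist_eq_norm]
      _ < ε := by linarith [hc i, hvΦ b i]
  · refine nonempty_alignedCoeffs_circleRat (fun σ hσ => hρ.trans (hK σ hσ)) (fun _ => rfl) hk _
      (hcv b fun x hx => ?_)
    rw [Ne, ← circleRat_coe_eq_zero_iff (α := α k) (β := β k) rfl]
    exact hb x ((coe_mem_degenerateSet_circleRat_iff (fun _ => rfl) _ _).2 hx)

end Perturbation

/-- The coordinatewise retraction of `ℝ ^ m` onto the unit cube. -/
def cubeClamp (m : ℕ) : C(Fin m → ℝ, Fin m → unitInterval) :=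
  ⟨fun y i => Set.projIcc 0 1 zero_le_one (y i),
    continuous_pi fun i => continuous_projIcc.comp (continuous_apply i)⟩

lemma cubeClamp_coe {m : ℕ} (b : Fin m → unitInterval) : cubeClamp m (fun i => b i) = b :=
  funext fun i => Set.projIcc_val zero_le_one (b i)

lemma exists_approx_nonempty_alignedCoeffs {m ρ : ℕ} (hρ : 2 ≤ ρ) (hK : ∀ σ, σ ∉ K → ρ ≤ σ.card)
    (hm : m < 2 * (ρ - 1) * D k) (hk : k ∉ T) {Φ : C(Fin m → unitInterval, CircleTuple r)}
    (hΦ : ∀ b, Φ b ∈ basedTuples D T) {ε : ℝ} (hε : 0 < ε) :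
    ∃ Ψ : C(Fin m → unitInterval, CircleTuple r), (∀ b, Ψ b ∈ basedTuples D T) ∧
      (∀ b i, dist (Ψ b i) (Φ b i) < ε) ∧
      ∀ b, (∀ x ∈ degenerateSet K k (Ψ b), Ψ b k x ≠ 0) →
        (alignedCoeffs K k (D k) (Ψ b)).Nonempty := by
  obtain ⟨ν, happrox, hνk, hνT, hsum⟩ :=
    exists_degrees_forall_dist_circleRat_lt hΦ hk (half_pos hε)
  obtain ⟨u, huΦ, hu⟩ := exists_dist_lt_nonempty_alignedCoeffs (K := K) (E := Fin m → ℝ) hρ hK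
    (by simpa using hm) hνk hsum (Φ.comp (cubeClamp m)) hε fun i b => happrox i _
  have hincl : Continuous fun (b : Fin m → unitInterval) i => (b i : ℝ) := by fun_prop
  refine ⟨⟨fun b i => circleRat (ν i).1 (ν i).2 (u (fun j => b j) i), continuous_pi fun i =>
    (continuous_circleRat _ _ _).comp ((continuous_apply i).comp (u.continuous.comp hincl))⟩,
    fun b => ⟨fun i => circleRat_infty rfl _, fun i hi => ?_⟩, fun b i => ?_, fun b => hu _⟩
  · exact circleRat_mem_circlePolynomials _ rfl (by rw [hνT i hi]) (by rw [hνT i hi])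
  · simpa only [ContinuousMap.comp_apply, ContinuousMap.coe_mk, cubeClamp_coe] using
      huΦ (fun j => b j) i

end AlignedApproximation

section CompressOneCoordinate

variable {r : ℕ} {K : Set (Finset (Fin r))} {D : Fin r → ℕ} {T : Set (Fin r)} {k : Fin r}

lemma homotopicWith_of_convex {X E : Type*} [TopologicalSpace X] [AddCommGroup E]
    [TopologicalSpace E] [IsTopologicalAddGroup E] [Module ℝ E] [ContinuousSMul ℝ E]
    {A : X → Set E} (hA : ∀ x, Convex ℝ (A x)) {P : C(X, E) → Prop}
    (hP : ∀ h : C(X, E), (∀ x, h x ∈ A x) → P h) {f g : C(X, E)} (hf : ∀ x, f x ∈ A x)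
    (hg : ∀ x, g x ∈ A x) : f.HomotopicWith g P :=
  ⟨⟨ContinuousMap.Homotopy.affine f g, fun t => hP _ fun x =>
    (hA x).segment_subset (hf x) (hg x) (segment_eq_image_lineMap ℝ (f x) (g x) ▸ ⟨t, t.2, rfl⟩)⟩⟩

lemma re_conj_mul_pos_of_dist_lt {z w : ℂ} {ε : ℝ} (hε : ε ≤ ‖w‖) (h : dist z w < ε) :
    0 < (starRingEnd ℂ z * w).re := by
  have hlt : Complex.normSq (z - w) < Complex.normSq w := by
    rw [Complex.normSq_eq_norm_sq, Complex.normSq_eq_norm_sq, ← dist_eq_norm]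
    exact pow_lt_pow_left₀ (h.trans_le hε) dist_nonneg two_ne_zero
  have hre := Complex.normSq_nonneg z
  simp only [Complex.normSq_apply, Complex.sub_re, Complex.sub_im] at hlt hre
  simp only [Complex.mul_re, Complex.conj_re, Complex.conj_im]
  linarith

lemma re_conj_mul_pos_of_mem_degenerateSet {F G : CircleTuple r} {ε : ℝ} {x : OnePoint ℝ}
    (hU : ∀ y : Fin r → ℂ, (∀ i, dist (y i) (F i x) < ε) → y ∈ UK K)
    (hG : ∀ i, dist (G i x) (F i x) < ε) (hx : x ∈ degenerateSet K k G) :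
    0 < (starRingEnd ℂ (G k x) * F k x).re := by
  obtain ⟨σ, hσ, -, h0⟩ := hx
  refine re_conj_mul_pos_of_dist_lt (le_of_not_gt fun hlt => ?_) (hG k)
  obtain ⟨i, hi, hne⟩ := mem_UK.1 (hU (Function.update (fun i => G i x) k 0)
    ((Function.forall_update_iff _ (p := fun i z => dist z (F i x) < ε)).2
      ⟨by simpa using hlt, fun i _ => hG i⟩)) σ hσ
  obtain rfl | hik := eq_or_ne i k
  · simp at hne
  · exact hne (by simp [hik, h0 i hi hik])

/-- The tuples that agree with `G` except in the coordinate `k`, where they make an acute angle with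
`G k` at the degenerate parameters. -/
def alignedTuples (K : Set (Finset (Fin r))) (k : Fin r) (G : CircleTuple r) :
    Set (CircleTuple r) :=
  {H | (∀ i ≠ k, H i = G i) ∧ ∀ x ∈ degenerateSet K k G, 0 < (starRingEnd ℂ (G k x) * H k x).re}

lemma convex_alignedTuples (K : Set (Finset (Fin r))) (k : Fin r) (G : CircleTuple r) :
    Convex ℝ (alignedTuples K k G) := by
  intro _ hF _ hH a b ha hb hab
  refine ⟨fun i hi => ?_, fun x hx =>
    convex_setOf_re_mul_pos _ (hF.2 x hx) (hH.2 x hx) ha hb hab⟩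
  rw [Pi.add_apply, Pi.smul_apply, Pi.smul_apply, hF.1 i hi, hH.1 i hi, ← add_smul, hab, one_smul]

lemma alignedTuples_subset_loopTuples {G : CircleTuple r} (hG : G ∈ loopTuples K) :
    alignedTuples K k G ⊆ loopTuples K := by
  intro H hH x
  refine mem_UK.2 fun σ hσ => ?_
  by_contra! h0
  by_cases hkσ : k ∈ σ
  · have := hH.2 x ⟨σ, hσ, hkσ, fun i hi hik => hH.1 i hik ▸ h0 i hi⟩
    simp [h0 k hkσ] at this
  · obtain ⟨i, hi, hne⟩ := mem_UK.1 (hG x) σ hσ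
    exact hne (hH.1 i (ne_of_mem_of_not_mem hi hkσ) ▸ h0 i hi)

lemma update_mem_alignedTuples {G : CircleTuple r} {f : C(OnePoint ℝ, ℂ)}
    (hf : ∀ x ∈ degenerateSet K k G, 0 < (starRingEnd ℂ (G k x) * f x).re) :
    Function.update G k f ∈ alignedTuples K k G :=
  ⟨fun i hi => Function.update_of_ne hi .., by simpa using hf⟩

/-- The loops in `U(K)` based at `(1, …, 1)` whose coordinates in `T` are polynomial. -/
def polyLoops (K : Set (Finset (Fin r))) (D : Fin r → ℕ) (T : Set (Fin r)) :
    Set (CircleTuple r) :=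
  loopTuples K ∩ basedTuples D T

lemma update_mem_basedTuples {G : CircleTuple r} (hG : G ∈ basedTuples D T) (hk : k ∉ T)
    {f : C(OnePoint ℝ, ℂ)} (hf : f OnePoint.infty = 1) :
    Function.update G k f ∈ basedTuples D T :=
  ⟨(Function.forall_update_iff G (p := fun _ f => f OnePoint.infty = 1)).2
    ⟨hf, fun i _ => hG.1 i⟩,
    (Function.forall_update_iff G (p := fun i f => i ∈ T → f ∈ circlePolynomials (D i))).2
    ⟨fun h => absurd h hk, fun i _ => hG.2 i⟩⟩

section Homotopies

variable {X : Type*} [TopologicalSpace X] {Φ Ψ : C(X, CircleTuple r)} {Z : Set X}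

lemma homotopicWith_polyLoops_of_dist_lt {ε : ℝ} (hε : 0 < ε)
    (hU : ∀ b x (y : Fin r → ℂ), (∀ i, dist (y i) (Φ b i x) < ε) → y ∈ UK K)
    (hΦ : ∀ b, Φ b ∈ basedTuples D T) (hΨ : ∀ b, Ψ b ∈ basedTuples D T)
    (hdist : ∀ b i, dist (Ψ b i) (Φ b i) < ε) (hk : ∀ b, Ψ b k = Φ b k)
    (hZ : ∀ b ∈ Z, Φ b k ∈ circlePolynomials (D k)) :
    Φ.HomotopicWith Ψ fun f => (∀ b, f b ∈ polyLoops K D T) ∧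
      ∀ b ∈ Z, f b k ∈ circlePolynomials (D k) := by
  refine homotopicWith_of_convex (A := fun b => Metric.ball (Φ b) ε ∩ basedTuples D T ∩
    LinearMap.proj (R := ℝ) k ⁻¹' {Φ b k}) (fun b => ?_) (fun H hH => ⟨fun b => ?_, fun b hb => ?_⟩)
    (fun b => ⟨⟨Metric.mem_ball_self hε, hΦ b⟩, rfl⟩)
    fun b => ⟨⟨(dist_pi_lt_iff hε).2 (hdist b), hΨ b⟩, hk b⟩
  · exact ((convex_ball _ _).inter (convex_basedTuples D T)).inter
      ((convex_singleton _).linear_preimage _)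
  · exact ⟨fun x => hU b x _ fun i => (ContinuousMap.dist_apply_le_dist x).trans_lt
      ((dist_le_pi_dist _ _ i).trans_lt (hH b).1.1), (hH b).1.2⟩
  · have hHk : H b k = Φ b k := (hH b).2
    exact hHk ▸ hZ b hb

lemma homotopicWith_polyLoops_of_mem_alignedTuples {G : X → CircleTuple r}
    (hG : ∀ b, G b ∈ loopTuples K) (hΦ : ∀ b, Φ b ∈ alignedTuples K k (G b) ∩ basedTuples D T)
    (hΨ : ∀ b, Ψ b ∈ alignedTuples K k (G b) ∩ basedTuples D T)
    (hΦZ : ∀ b ∈ Z, Φ b k ∈ circlePolynomials (D k))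
    (hΨZ : ∀ b ∈ Z, Ψ b k ∈ circlePolynomials (D k)) :
    Φ.HomotopicWith Ψ fun f => (∀ b, f b ∈ polyLoops K D T) ∧
      ∀ b ∈ Z, f b k ∈ circlePolynomials (D k) := by
  refine homotopicWith_of_convex (A := fun b => alignedTuples K k (G b) ∩ basedTuples D T ∩
    {H | b ∈ Z → H k ∈ circlePolynomials (D k)}) (fun b => ?_)
    (fun H hH => ⟨fun b => ?_, fun b hb => (hH b).2 hb⟩)
    (fun b => ⟨hΦ b, hΦZ b⟩) fun b => ⟨hΨ b, hΨZ b⟩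
  · exact ((convex_alignedTuples _ _ _).inter (convex_basedTuples D T)).inter
      fun _ hF _ hH _ _ ha hb hab hZ => convex_circlePolynomials _ (hF hZ) (hH hZ) ha hb hab
  · exact ⟨alignedTuples_subset_loopTuples (hG b) (hH b).1.1, (hH b).1.2⟩

end Homotopies

theorem exists_homotopicWith_circlePolynomials {m ρ : ℕ} (hρ : 2 ≤ ρ)
    (hK : ∀ σ, σ ∉ K → ρ ≤ σ.card) (hm : m < 2 * (ρ - 1) * D k) (hk : k ∉ T)
    {Φ : C(Fin m → unitInterval, CircleTuple r)} (hΦ : ∀ b, Φ b ∈ polyLoops K D T)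
    {Z : Set (Fin m → unitInterval)} (hZ : ∀ b ∈ Z, Φ b k ∈ circlePolynomials (D k)) :
    ∃ Ψ : C(Fin m → unitInterval, CircleTuple r),
      Φ.HomotopicWith Ψ (fun f => (∀ b, f b ∈ polyLoops K D T) ∧
        ∀ b ∈ Z, f b k ∈ circlePolynomials (D k)) ∧
      ∀ b, Ψ b k ∈ circlePolynomials (D k) := by
  obtain ⟨ε, hε, hU⟩ := exists_forall_mem_UK_of_dist_lt Φ fun b => (hΦ b).1
  obtain ⟨G, hGT, hGΦ, hG⟩ := exists_approx_nonempty_alignedCoeffs hρ hK hm hk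
    (fun b => (hΦ b).2) hε
  have hGx (b i x) : dist (G b i x) (Φ b i x) < ε :=
    (ContinuousMap.dist_apply_le_dist x).trans_lt (hGΦ b i)
  have hGU (b) : G b ∈ loopTuples K := fun x => hU b x _ fun i => hGx b i x
  have hpos (b) : ∀ x ∈ degenerateSet K k (G b), 0 < (starRingEnd ℂ (G b k x) * Φ b k x).re :=
    fun x => re_conj_mul_pos_of_mem_degenerateSet (hU b x) fun i => hGx b i x
  obtain ⟨w, hw⟩ := exists_continuousMap_mem_alignedCoeffs G fun b => hG b fun x hx h0 => by
    simpa [h0] using hpos b x hx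
  let Φ' : C(Fin m → unitInterval, CircleTuple r) :=
    ⟨fun b => Function.update (G b) k (Φ b k), by fun_prop⟩
  let Ψ : C(Fin m → unitInterval, CircleTuple r) :=
    ⟨fun b => Function.update (G b) k (circleRat (D k) 0 (w b)), G.continuous.update k
      ((continuous_circleRat _ _ _).comp w.continuous)⟩
  have hΦ' (b) : Φ' b ∈ alignedTuples K k (G b) ∩ basedTuples D T :=
    ⟨update_mem_alignedTuples (hpos b), update_mem_basedTuples (hGT b) hk ((hΦ b).2.1 k)⟩
  have hΨ (b) : Ψ b ∈ alignedTuples K k (G b) ∩ basedTuples D T :=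
    ⟨update_mem_alignedTuples (hw b), update_mem_basedTuples (hGT b) hk (circleRat_infty rfl _)⟩
  have hΨk (b) : Ψ b k ∈ circlePolynomials (D k) := ⟨w b, by simp [Ψ]⟩
  have hΦ'Φ : ∀ b i, dist (Φ' b i) (Φ b i) < ε := fun b =>
    (Function.forall_update_iff (G b) (p := fun i f => dist f (Φ b i) < ε)).2
      ⟨by simpa using hε, fun i _ => hGΦ b i⟩
  have hΦ'k (b) : Φ' b k = Φ b k := by simp [Φ']
  exact ⟨Ψ, (homotopicWith_polyLoops_of_dist_lt hε hU (fun b => (hΦ b).2) (fun b => (hΦ' b).2)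
    hΦ'Φ hΦ'k hZ).trans (homotopicWith_polyLoops_of_mem_alignedTuples hGU hΦ' hΨ
    (fun b hb => hΦ'k b ▸ hZ b hb) fun b _ => hΨk b), hΨk⟩

end CompressOneCoordinate

section CubeCollar

lemma cubeClamp_mem_boundary {m : ℕ} {y : Fin m → ℝ} (hy : 1 / 2 ≤ ‖fun i => y i - 1 / 2‖) :
    cubeClamp m y ∈ Cube.boundary (Fin m) := by
  by_contra hb
  simp only [Cube.boundary, Set.mem_ofPred_eq, not_exists, not_or] at hb
  refine hy.not_gt ((pi_norm_lt_iff one_half_pos).2 fun i => ?_)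
  have h0 : 0 < y i := not_le.1 fun h => (hb i).1 (Set.projIcc_of_le_left zero_le_one h)
  have h1 : y i < 1 := not_le.1 fun h => (hb i).2 (Set.projIcc_of_right_le zero_le_one h)
  rw [Real.norm_eq_abs, abs_lt]
  constructor <;> linarith

lemma half_le_norm_of_mem_boundary {m : ℕ} {b : Fin m → unitInterval}
    (hb : b ∈ Cube.boundary (Fin m)) : 1 / 2 ≤ ‖fun i => (b i : ℝ) - 1 / 2‖ := by
  obtain ⟨i, hi⟩ := hb
  refine le_trans ?_ (norm_le_pi_norm _ i)
  rcases hi with h | h <;> norm_num [h]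

-- The time `τ` grows with the distance to the boundary, while the cube is dilated by `1 + τ` and
-- cut off: a point either gets to `τ = 1` or is pushed out to the boundary.
lemma exists_cubeCollar (m : ℕ) :
    ∃ R : C(unitInterval × (Fin m → unitInterval), unitInterval × (Fin m → unitInterval)),
      (∀ b, R (0, b) = (0, b)) ∧ (∀ s, ∀ b ∈ Cube.boundary (Fin m), R (s, b) = (0, b)) ∧
      ∀ b, (R (1, b)).1 = 1 ∨ (R (1, b)).2 ∈ Cube.boundary (Fin m) := by
  let x (b : Fin m → unitInterval) : ℝ := ‖fun i => (b i : ℝ) - 1 / 2‖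
  let τ (p : unitInterval × (Fin m → unitInterval)) : unitInterval :=
    Set.projIcc 0 1 zero_le_one (2 * p.1 * (1 - 2 * x p.2))
  have hτ : Continuous τ := continuous_projIcc.comp (by fun_prop)
  let R : C(unitInterval × (Fin m → unitInterval), unitInterval × (Fin m → unitInterval)) :=
    ⟨fun p => (τ p, cubeClamp m fun i => 1 / 2 + (1 + τ p) * (p.2 i - 1 / 2)),
      hτ.prodMk ((cubeClamp m).continuous.comp (by fun_prop))⟩
  have hR {p} (hp : τ p = 0) : R p = (0, p.2) := by
    refine Prod.ext hp ?_
    rw [← cubeClamp_coe p.2]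
    simp [R, hp, cubeClamp_coe]
  refine ⟨R, fun b => hR (Set.projIcc_of_le_left zero_le_one (by simp)), fun s b hb =>
    hR (Set.projIcc_of_le_left zero_le_one (mul_nonpos_of_nonneg_of_nonpos
      (mul_nonneg zero_le_two s.2.1) ?_)), fun b => ?_⟩
  · linarith [half_le_norm_of_mem_boundary hb]
  obtain h | h := le_total 1 (2 * (1 - 2 * x b))
  · exact .inl (Set.projIcc_of_right_le zero_le_one (by simpa using h))
  · refine .inr (cubeClamp_mem_boundary ?_)
    have hτ1 : 2 * (1 - 2 * x b) ≤ τ (1, b) := by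
      rw [Set.coe_projIcc]
      simp [h]
    have hnorm : ‖fun i => 1 / 2 + (1 + (τ (1, b) : ℝ)) * (b i - 1 / 2) - 1 / 2‖ =
        (1 + τ (1, b)) * x b := by
      have : 0 ≤ (1 + (τ (1, b) : ℝ)) := by have := (τ (1, b)).2.1; positivity
      simp only [add_sub_cancel_left]
      rw [← Real.norm_of_nonneg this, ← norm_smul, Real.norm_of_nonneg this]
      rfl
    rw [hnorm]
    nlinarith [(τ (1, b)).2.1, norm_nonneg fun i => (b i : ℝ) - 1 / 2]

lemma exists_homotopicWith_eqOn_boundary {m : ℕ} {Z : Type*} [TopologicalSpace Z] {A B : Set Z}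
    {Φ Φ' : C(Fin m → unitInterval, Z)}
    (h : Φ.HomotopicWith Φ' fun f => (∀ b, f b ∈ A) ∧ ∀ b ∈ Cube.boundary (Fin m), f b ∈ B)
    (hΦ' : ∀ b, Φ' b ∈ B) :
    ∃ Ψ, Φ.HomotopicWith Ψ (fun f => (∀ b, f b ∈ A) ∧ ∀ b ∈ Cube.boundary (Fin m), f b = Φ b) ∧
      ∀ b, Ψ b ∈ B := by
  obtain ⟨H⟩ := h
  obtain ⟨R, hR0, hRb, hR1⟩ := exists_cubeCollar m
  refine ⟨⟨fun b => H (R (1, b)), by fun_prop⟩, ⟨⟨⟨H.toContinuousMap.comp R, fun b => ?_,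
    fun b => rfl⟩, fun t => ⟨fun b => (H.prop' _).1 _, fun b hb => ?_⟩⟩⟩, fun b => ?_⟩
  · simp [hR0]
  · simp [hRb t b hb]
  · obtain h1 | h1 := hR1 b
    · rw [ContinuousMap.coe_mk, ← Prod.mk.eta (p := R (1, b)), h1, H.apply_one]
      exact hΦ' _
    · exact (H.prop' (R (1, b)).1).2 _ h1

end CubeCollar

section CompressAllCoordinates

variable {r : ℕ} {K : Set (Finset (Fin r))} {D : Fin r → ℕ}

lemma mem_polyLoops_insert {F : CircleTuple r} {T : Set (Fin r)} {k : Fin r} :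
    F ∈ polyLoops K D (insert k T) ↔ F ∈ polyLoops K D T ∧ F k ∈ circlePolynomials (D k) := by
  simp only [polyLoops, basedTuples, Set.mem_inter_iff, Set.mem_ofPred_eq, Set.forall_mem_insert]
  tauto

lemma polyLoops_anti {S T : Set (Fin r)} (h : S ⊆ T) : polyLoops K D T ⊆ polyLoops K D S :=
  fun _ hF => ⟨hF.1, hF.2.1, fun i hi => hF.2.2 i (h hi)⟩

theorem exists_homotopicWith_polyLoops {m ρ : ℕ} (hρ : 2 ≤ ρ) (hK : ∀ σ, σ ∉ K → ρ ≤ σ.card)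
    (hm : ∀ k, m < 2 * (ρ - 1) * D k) {Φ : C(Fin m → unitInterval, CircleTuple r)}
    (hΦ : ∀ b, Φ b ∈ polyLoops K D ∅)
    (hbd : ∀ b ∈ Cube.boundary (Fin m), Φ b ∈ polyLoops K D Set.univ) (T : Finset (Fin r)) :
    ∃ Ψ : C(Fin m → unitInterval, CircleTuple r),
      Φ.HomotopicWith Ψ (fun f => (∀ b, f b ∈ polyLoops K D ∅) ∧
        ∀ b ∈ Cube.boundary (Fin m), f b = Φ b) ∧
      ∀ b, Ψ b ∈ polyLoops K D T := by
  induction T using Finset.induction_on with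
  | empty => exact ⟨Φ, .refl _ ⟨hΦ, fun _ _ => rfl⟩, by simpa using hΦ⟩
  | insert k T hkT ih =>
    obtain ⟨Ψ, hΨh, hΨ⟩ := ih
    have hΨb : ∀ b ∈ Cube.boundary (Fin m), Ψ b = Φ b := by
      obtain ⟨G⟩ := hΨh
      exact fun b hb => by simpa using (G.prop' 1).2 b hb
    obtain ⟨Ψ', hΨ', hk⟩ := exists_homotopicWith_circlePolynomials hρ hK (hm k)
      (by simpa using hkT) hΨ fun b hb => hΨb b hb ▸ (hbd b hb).2.2 k trivial
    obtain ⟨Θ, ⟨G⟩, hΘ⟩ := exists_homotopicWith_eqOn_boundary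
      (A := polyLoops K D T) (B := {F | F k ∈ circlePolynomials (D k)}) hΨ' hk
    refine ⟨Θ, hΨh.trans ⟨⟨G.toHomotopy, fun t => ⟨fun b => polyLoops_anti (Set.empty_subset _)
      ((G.prop' t).1 b), fun b hb => ((G.prop' t).2 b hb).trans (hΨb b hb)⟩⟩⟩, fun b => ?_⟩
    rw [Finset.coe_insert, mem_polyLoops_insert]
    exact ⟨by simpa using (G.prop' 1).1 b, hΘ b⟩

end CompressAllCoordinates

section RelativeLifting

variable {X Y Z : Type*} [TopologicalSpace X] [TopologicalSpace Y] [TopologicalSpace Z] {k m : ℕ}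

/-- The relative lifting property of `f` with respect to the `m`-cube: a map from the cube to `Y`,
together with a lift over the boundary, can be lifted to `X` extending the given lift, up to
homotopy relative to the boundary. -/
def HasRelLifting (f : C(X, Y)) (m : ℕ) : Prop :=
  ∀ (p : C(Fin m → unitInterval, Y)) (g : C(Cube.boundary (Fin m), X)), (∀ b, f (g b) = p b) →
    ∃ P : C(Fin m → unitInterval, X), (∀ b : Cube.boundary (Fin m), P b = g b) ∧
      (f.comp P).HomotopicRel p (Cube.boundary (Fin m))

lemma HasRelLifting.homeomorph_comp {f : C(X, Y)} (hf : HasRelLifting f m) (e : Y ≃ₜ Z) :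
    HasRelLifting ((e : C(Y, Z)).comp f) m := by
  intro p g hg
  obtain ⟨P, hPg, hP⟩ := hf ((e.symm : C(Z, Y)).comp p) g fun b => e.eq_symm_apply.2 (hg b)
  have hp : (e : C(Y, Z)).comp ((e.symm : C(Z, Y)).comp p) = p :=
    ContinuousMap.ext fun x => e.apply_symm_apply (p x)
  exact ⟨P, hPg, hp ▸ hP.comp_continuousMap (e : C(Y, Z))⟩

lemma HasRelLifting.surjective_piMap {f : C(X, Y)} (hf : HasRelLifting f k) (x : X) :
    Function.Surjective (piMap k f x) := by
  rintro ⟨q⟩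
  obtain ⟨P, hP, hPq⟩ := hf q.1 (.const _ x) fun b => (q.2 b b.2).symm
  exact ⟨Quotient.mk _ ⟨P, fun b hb => hP ⟨b, hb⟩⟩, Quotient.sound hPq⟩

lemma isClosed_boundary (m : ℕ) : IsClosed (Cube.boundary (Fin m)) := by
  have h : Cube.boundary (Fin m) = ⋃ i, ({y | y i = 0} ∪ {y | y i = 1}) := by
    ext y
    simp [Cube.boundary]
  rw [h]
  exact isClosed_iUnion_of_finite fun i => (isClosed_eq (continuous_apply i)
    continuous_const).union (isClosed_eq (continuous_apply i) continuous_const)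

lemma mem_boundary_succ {b : Fin (k + 1) → unitInterval} :
    b ∈ Cube.boundary (Fin (k + 1)) ↔
      b 0 = 0 ∨ b 0 = 1 ∨ Fin.tail b ∈ Cube.boundary (Fin k) := by
  simp only [Cube.boundary, Set.mem_ofPred_eq, Fin.exists_fin_succ, Fin.tail, or_assoc]

lemma continuous_tail : Continuous (Fin.tail : (Fin (k + 1) → unitInterval) → _) :=
  continuous_pi fun i => continuous_apply i.succ

lemma exists_boundary_glue (p q : C(Fin k → unitInterval, X))
    (s : C(unitInterval × Cube.boundary (Fin k), X)) (h0 : ∀ c, s (0, c) = p c)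
    (h1 : ∀ c, s (1, c) = q c) :
    ∃ g : C(Cube.boundary (Fin (k + 1)), X), ∀ b : Cube.boundary (Fin (k + 1)),
      (b.1 0 = 0 → g b = p (Fin.tail b.1)) ∧ (b.1 0 = 1 → g b = q (Fin.tail b.1)) ∧
      ∀ hb : Fin.tail b.1 ∈ Cube.boundary (Fin k), g b = s (b.1 0, ⟨Fin.tail b.1, hb⟩) := by
  let g (b : Fin (k + 1) → unitInterval) : X :=
    if hb : Fin.tail b ∈ Cube.boundary (Fin k) then s (b 0, ⟨Fin.tail b, hb⟩)
    else if b 0 = 0 then p (Fin.tail b) else q (Fin.tail b)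
  have hgs {b : Fin (k + 1) → unitInterval} (hb : Fin.tail b ∈ Cube.boundary (Fin k)) :
      g b = s (b 0, ⟨Fin.tail b, hb⟩) :=
    dif_pos hb
  have hg0 {b} (hb : b 0 = 0) : g b = p (Fin.tail b) := by
    by_cases hs : Fin.tail b ∈ Cube.boundary (Fin k)
    · rw [hgs hs, hb, h0]
    · simp only [g, dif_neg hs, if_pos hb]
  have hg1 {b} (hb : b 0 = 1) : g b = q (Fin.tail b) := by
    by_cases hs : Fin.tail b ∈ Cube.boundary (Fin k)
    · rw [hgs hs, hb, h1]
    · simp only [g, dif_neg hs, hb, one_ne_zero, if_false]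
  have hboundary : Cube.boundary (Fin (k + 1)) =
      {b | b 0 = 0} ∪ ({b | b 0 = 1} ∪ Fin.tail ⁻¹' Cube.boundary (Fin k)) :=
    Set.ext fun b => mem_boundary_succ
  have hface (t : unitInterval) : IsClosed {b : Fin (k + 1) → unitInterval | b 0 = t} :=
    isClosed_eq (continuous_apply 0) continuous_const
  have hsides := (isClosed_boundary k).preimage continuous_tail
  have hg : ContinuousOn g (Cube.boundary (Fin (k + 1))) := by
    rw [hboundary]
    refine .union_of_isClosed ?_ (.union_of_isClosed ?_ ?_ (hface 1) hsides) (hface 0)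
      ((hface 1).union hsides)
    · exact (p.continuous.comp continuous_tail).continuousOn.congr fun b hb => hg0 hb
    · exact (q.continuous.comp continuous_tail).continuousOn.congr fun b hb => hg1 hb
    · refine continuousOn_iff_continuous_domRestrict.2 ((s.continuous.comp
        (((continuous_apply 0).comp continuous_subtype_val).prodMk
          ((continuous_tail.comp continuous_subtype_val).subtype_mk fun b => b.2))).congr ?_)
      exact fun b => (hgs b.2).symm
  exact ⟨⟨_, hg.domRestrict⟩, fun b => ⟨hg0, hg1, hgs⟩⟩

lemma HasRelLifting.injective_piMap {f : C(X, Y)} (hf : HasRelLifting f (k + 1)) (x : X) :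
    Function.Injective (piMap k f x) := by
  rintro ⟨p⟩ ⟨q⟩ hpq
  obtain ⟨H⟩ := Quotient.exact hpq
  obtain ⟨g, hg⟩ := exists_boundary_glue p.1 q.1 (.const _ x) (fun c => (p.2 c c.2).symm)
    fun c => (q.2 c c.2).symm
  let p' : C(Fin (k + 1) → unitInterval, Y) :=
    ⟨fun b => H (b 0, Fin.tail b), H.continuous.comp ((continuous_apply 0).prodMk continuous_tail)⟩
  obtain ⟨P, hP, -⟩ := hf p' g <| by
    rintro ⟨b, hb⟩
    change f _ = H (b 0, Fin.tail b)
    obtain h | h | h := mem_boundary_succ.1 hb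
    · rw [(hg ⟨b, hb⟩).1 h, h, H.apply_zero]
      rfl
    · rw [(hg ⟨b, hb⟩).2.1 h, h, H.apply_one]
      rfl
    · rw [(hg ⟨b, hb⟩).2.2 h, H.eq_fst _ h]
      exact congrArg f (p.2 _ h).symm
  have hPb {b} (hb : b ∈ Cube.boundary (Fin (k + 1))) : P b = g ⟨b, hb⟩ := hP ⟨b, hb⟩
  refine Quotient.sound ⟨⟨⟨⟨fun z => P (Fin.cons z.1 z.2), ?_⟩, fun y => ?_, fun y => ?_⟩,
    fun t y hy => ?_⟩⟩
  · exact P.continuous.comp (Continuous.finCons (A := fun _ => unitInterval) continuous_fst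
      continuous_snd)
  · exact (hPb (mem_boundary_succ.2 (.inl rfl))).trans ((hg _).1 rfl)
  · exact (hPb (mem_boundary_succ.2 (.inr (.inl rfl)))).trans ((hg _).2.1 rfl)
  · have hb : Fin.cons t y ∈ Cube.boundary (Fin (k + 1)) := mem_boundary_succ.2 (.inr (.inr hy))
    exact (hPb hb).trans (((hg ⟨_, hb⟩).2.2 hy).trans (p.2 y hy).symm)

lemma piMap_comp (k : ℕ) (g : C(Y, Z)) (f : C(X, Y)) (x : X) :
    piMap k (g.comp f) x = piMap k g (f x) ∘ piMap k f x := by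
  ext ⟨p⟩
  rfl

lemma surjective_piMap_of_comp_eq {f f' : C(X, Y)} {g : C(Y, Z)} {x : X} (hx : f x = f' x)
    (h : g.comp f = g.comp f') (hg : Function.Injective (piMap k g (f x)))
    (hf' : Function.Surjective (piMap k f' x)) : Function.Surjective (piMap k f x) := by
  rintro ⟨p⟩
  obtain ⟨⟨q⟩, hq⟩ := hf' (Quotient.mk _ ⟨p.1, hx ▸ p.2⟩)
  refine ⟨Quotient.mk _ q, hg (Quotient.sound ?_)⟩
  change ((g.comp f).comp q.1).HomotopicRel _ _
  rw [h]
  exact ContinuousMap.HomotopicRel.comp_continuousMap (Quotient.exact hq) g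

end RelativeLifting

section PolynomialLoops

open OnePoint

variable {r : ℕ} {K : Set (Finset (Fin r))} {hE : (∅ : Finset (Fin r)) ∈ K} {D : Fin r → ℕ}

lemma continuous_loop_apply {X : Type*} [TopologicalSpace X] {x₀ : X} :
    Continuous fun z : Loop X x₀ × OnePoint ℝ => z.1.1 z.2 :=
  (continuous_subtype_val.comp continuous_fst).eval continuous_snd

/-- The coordinate functions of a loop in `U(K)`. -/
def loopCoords : C(Loop (UK K) (onesUK hE), CircleTuple r) where
  toFun γ i := ⟨fun x => (γ.1 x).1 i,
    (continuous_apply i).comp (continuous_subtype_val.comp γ.1.continuous)⟩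
  continuous_toFun := continuous_pi fun i => ContinuousMap.continuous_of_continuous_uncurry _ <|
    (continuous_apply i).comp (continuous_subtype_val.comp continuous_loop_apply)

lemma loopCoords_mem_polyLoops (D : Fin r → ℕ) (γ : Loop (UK K) (onesUK hE)) :
    loopCoords γ ∈ polyLoops K D ∅ :=
  ⟨fun x => (γ.1 x).2, fun i => congrArg (fun x => x.1 i) γ.2, fun _ hi => hi.elim⟩

lemma loopCoords_injective :
    Function.Injective (loopCoords : Loop (UK K) (onesUK hE) → CircleTuple r) := by
  refine fun γ γ' h => Subtype.ext (ContinuousMap.ext fun x => Subtype.ext (funext fun i => ?_))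
  exact DFunLike.congr_fun (congrFun h i) x

variable (hE) in
/-- The family of loops in `U(K)` with given coordinate functions. -/
def loopOfCoords {B : Type*} [TopologicalSpace B] (Φ : C(B, CircleTuple r))
    (hΦ : ∀ b, Φ b ∈ polyLoops K D ∅) : C(B, Loop (UK K) (onesUK hE)) where
  toFun b := ⟨⟨fun x => ⟨fun i => Φ b i x, (hΦ b).1 x⟩,
    (continuous_pi fun i => (Φ b i).continuous).subtype_mk _⟩,
    Subtype.ext (funext fun i => (hΦ b).2.1 i)⟩
  continuous_toFun := Continuous.subtype_mk (ContinuousMap.continuous_of_continuous_uncurry _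
    ((continuous_pi (continuous_circleTuple_apply Φ)).subtype_mk _)) _

lemma loopCoords_loopOfCoords {B : Type*} [TopologicalSpace B] (Φ : C(B, CircleTuple r))
    (hΦ : ∀ b, Φ b ∈ polyLoops K D ∅) (b : B) : loopCoords (loopOfCoords hE Φ hΦ b) = Φ b :=
  rfl

variable (D) in
/-- The tuple of functions `f_k(x) / (x - i) ^ d_k` on the circle. -/
def polyTuple : C((∀ i, Fin (D i) → ℂ), CircleTuple r) :=
  ⟨fun f i => circleRat (D i) 0 (f i),
    continuous_pi fun i => (continuous_circleRat _ _ _).comp (continuous_apply i)⟩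

lemma polyTuple_coe (f : ∀ i, Fin (D i) → ℂ) (i : Fin r) (x : ℝ) :
    polyTuple D f i x = (toPoly (f i)).eval (x : ℂ) / ((x : ℂ) - Complex.I) ^ D i :=
  (circleRat_coe (by simp) _ x).trans (by simp)

lemma polyTuple_infty (f : ∀ i, Fin (D i) → ℂ) (i : Fin r) : polyTuple D f i ∞ = 1 :=
  circleRat_infty (by simp) _

lemma polyTuple_mem_polyLoops_iff (hE : (∅ : Finset (Fin r)) ∈ K) {T : Set (Fin r)}
    {f : ∀ i, Fin (D i) → ℂ} : polyTuple D f ∈ polyLoops K D T ↔ f ∈ PolSp K D := by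
  have hne (i x) : polyTuple D f i (x : ℝ) = 0 ↔ (toPoly (f i)).eval (x : ℂ) = 0 :=
    circleRat_coe_eq_zero_iff (by simp) _ x
  have hcoe (x : ℝ) : (fun i => polyTuple D f i x) ∈ UK K ↔
      ∀ σ ∉ K, ∃ i ∈ σ, (toPoly (f i)).eval (x : ℂ) ≠ 0 := by
    simp only [mem_UK, ne_eq, hne]
  refine ⟨fun h σ hσ x => (hcoe x).1 (h.1 x) σ hσ, fun h => ⟨OnePoint.forall.2 ⟨?_, fun x =>
    (hcoe x).2 fun σ hσ => h σ hσ x⟩, polyTuple_infty f, fun i _ => ⟨f i, rfl⟩⟩⟩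
  simp only [polyTuple_infty]
  exact ones_mem_UK hE

lemma isEmbedding_circleRat (d : ℕ) :
    Topology.IsEmbedding (circleRat d 0 : (Fin d → ℂ) → C(OnePoint ℝ, ℂ)) := by
  let L : (Fin d → ℂ) →ₗ[ℂ] C(OnePoint ℝ, ℂ) :=
    { toFun := fun v => circleRat d 0 v - circleRat d 0 (0 : Fin d → ℂ)
      map_add' := fun v w => by simp [circleRat, add_smul, Finset.sum_add_distrib]
      map_smul' := fun a v => by simp [circleRat, Finset.smul_sum, mul_smul] }
  have hL : Function.Injective L := fun v w h =>
    circleRat_injective (by simp) (sub_left_injective h)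
  convert (Homeomorph.addRight (circleRat d 0 (0 : Fin d → ℂ))).isEmbedding.comp
    (L.isClosedEmbedding_of_injective (LinearMap.ker_eq_bot.2 hL)).isEmbedding using 1
  funext v
  exact (sub_add_cancel _ _).symm

variable (D) in
lemma isEmbedding_polyTuple : Topology.IsEmbedding (polyTuple D) :=
  Topology.IsEmbedding.piMap fun i => isEmbedding_circleRat (D i)

variable (hE D) in
/-- The map `Pol*_D → ΩU(K)` sending `(f_1, …, f_r)` to the loop with coordinates
`f_k(x) / (x - i) ^ d_k`. -/
def polyLoop : C(PolSp K D, Loop (UK K) (onesUK hE)) :=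
  loopOfCoords (D := D) hE ((polyTuple D).comp ⟨Subtype.val, continuous_subtype_val⟩)
    fun f => (polyTuple_mem_polyLoops_iff hE).2 f.2

theorem hasRelLifting_polyLoop {m ρ : ℕ} (hρ : 2 ≤ ρ) (hK : ∀ σ, σ ∉ K → ρ ≤ σ.card)
    (hm : ∀ k, m < 2 * (ρ - 1) * D k) : HasRelLifting (polyLoop hE D) m := by
  intro p g hg
  have hpg {b} (hb : b ∈ Cube.boundary (Fin m)) : loopCoords (p b) = polyTuple D (g ⟨b, hb⟩).1 :=
    congrArg loopCoords (hg ⟨b, hb⟩).symm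
  obtain ⟨Ψ, ⟨G⟩, hΨ⟩ := exists_homotopicWith_polyLoops hρ hK hm (Φ := loopCoords.comp p)
    (fun b => loopCoords_mem_polyLoops D (p b)) (fun b hb =>
      hpg hb ▸ (polyTuple_mem_polyLoops_iff hE).2 (g ⟨b, hb⟩).2) Finset.univ
  choose f hf using fun b i => (hΨ b).2.2 i (by simp)
  have hfΨ (b) : polyTuple D (f b) = Ψ b := funext (hf b)
  have hfc : Continuous f := by
    rw [(isEmbedding_polyTuple D).continuous_iff]
    exact Ψ.continuous.congr fun b => (hfΨ b).symm
  have hfP (b) : f b ∈ PolSp K D := by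
    rw [← polyTuple_mem_polyLoops_iff hE, hfΨ]
    exact hΨ b
  refine ⟨⟨fun b => ⟨f b, hfP b⟩, hfc.subtype_mk _⟩, fun b => Subtype.ext
    ((isEmbedding_polyTuple D).injective ?_), .symm ⟨⟨⟨loopOfCoords hE (D := D) G.toContinuousMap
      fun z => (G.prop' z.1).1 z.2, fun b => ?_, fun b => ?_⟩, fun t b hb => ?_⟩⟩⟩
  · rw [← hpg b.2]
    exact (hfΨ b).trans ((G.apply_one b).symm.trans ((G.prop' 1).2 b b.2))
  · exact loopCoords_injective ((loopCoords_loopOfCoords ..).trans (G.apply_zero b))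
  · exact loopCoords_injective ((loopCoords_loopOfCoords ..).trans
      ((G.apply_one b).trans (hfΨ b).symm))
  · exact loopCoords_injective ((G.prop' t).2 b hb)

end PolynomialLoops

section Fans

variable {n r : ℕ}

lemma smul_mem_coneIdx {N : Fin r → Fin n → ℤ} {s : Finset (Fin r)} {l : Fin r} (hl : l ∈ s)
    {t : ℝ} (ht : 0 ≤ t) : t • zr (N l) ∈ coneIdx N s := by
  refine ⟨Pi.single l t, fun i => ?_, ?_⟩
  · by_cases hi : i = l
    · simpa [hi] using ht
    · simp [hi]
  · simp [Pi.single_apply, ite_smul, hl]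

lemma ray_subset_coneIdx {N : Fin r → Fin n → ℤ} {s : Finset (Fin r)} {l : Fin r} (hl : l ∈ s) :
    ray (zr (N l)) ⊆ coneIdx N s := by
  rintro _ ⟨t, ht, rfl⟩
  exact smul_mem_coneIdx hl ht

lemma exists_mem_ray_of_isFaceOf_coneIdx {N : Fin r → Fin n → ℤ} {s : Finset (Fin r)}
    {v : Fin n → ℝ} (hv : v ≠ 0) (h : IsFaceOf (ray v) (coneIdx N s)) :
    ∃ i, zr (N i) ∈ ray v := by
  obtain ⟨L, hL0, hL⟩ := h
  obtain ⟨⟨c, hc, hsum⟩, hLv : L v = 0⟩ : v ∈ coneIdx N s ∩ {x | L x = 0} :=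
    hL ▸ ⟨1, zero_le_one, (one_smul ℝ v).symm⟩
  have hmem : ∀ i ∈ s, zr (N i) ∈ coneIdx N s := fun i hi => by
    simpa using smul_mem_coneIdx (N := N) hi zero_le_one
  rw [hsum, map_sum, Finset.sum_eq_zero_iff_of_nonneg fun i hi => by
    rw [map_smul]; exact mul_nonneg (hc i) (hL0 _ (hmem i hi))] at hLv
  obtain ⟨i, hi, hci⟩ : ∃ i ∈ s, c i ≠ 0 := by
    by_contra! hno
    exact hv (hsum.trans <| Finset.sum_eq_zero fun i hi => by rw [hno i hi, zero_smul])
  have hLi : c i * L (zr (N i)) = 0 := by simpa using hLv i hi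
  exact ⟨i, hL ▸ ⟨hmem i hi, (mul_eq_zero.1 hLi).resolve_left hci⟩⟩

lemma IsPrimGens.eq_of_basis_mem_ray {F : Fan n} {N : Fin r → Fin n → ℤ} (hPG : IsPrimGens F N)
    (b : Module.Basis (Fin n) ℤ (Fin n → ℤ)) {i : Fin n} {l : Fin r}
    (h : zr (b i) ∈ ray (zr (N l))) : b i = N l := by
  obtain ⟨c, hc⟩ : zr (b i) ∈ {x | ∃ c : ℕ, x = (c : ℝ) • zr (N l)} :=
    hPG.primitive l ▸ ⟨h, fun j => ⟨b i j, rfl⟩⟩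
  have hb : b i = (c : ℤ) • N l := by
    funext j
    have hj : (b i j : ℝ) = c * N l j := congrFun hc j
    exact_mod_cast hj
  have hdvd : (c : ℤ) ∣ 1 := ⟨b.coord i (N l), by
    simpa using (congrArg (b.coord i) hb).trans (map_smul (b.coord i) (c : ℤ) (N l))⟩
  rw [hb, Int.eq_one_of_dvd_one (Int.natCast_nonneg c) hdvd, one_smul]

lemma IsPrimGens.exists_basis_forall_mem {F : Fan n} {N : Fin r → Fin n → ℤ}
    (hPG : IsPrimGens F N) (hNS : F.NonSingular) {s : Finset (Fin r)} (hs : s ∈ KC F N) :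
    ∃ b : Module.Basis (Fin n) ℤ (Fin n → ℤ), ∀ l ∈ s, ∃ i, b i = N l := by
  obtain ⟨b, s', hb⟩ := hNS _ hs
  refine ⟨b, fun l hl => ?_⟩
  have hface : IsFaceOf (ray (zr (N l))) (coneIdx b s') := by
    have h := F.inter_face _ hs _ (hPG.ray_mem l)
    rwa [Set.inter_eq_right.2 (ray_subset_coneIdx hl), hb] at h
  have hne : zr (N l) ≠ 0 := fun h => hPG.ne_zero l <| funext fun j => by
    simpa [zr] using congrFun h j
  obtain ⟨i, hi⟩ := exists_mem_ray_of_isFaceOf_coneIdx hne hface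
  exact ⟨i, hPG.eq_of_basis_mem_ray b hi⟩

lemma IsPrimGens.exists_rightInverse {F : Fan n} {N : Fin r → Fin n → ℤ} (hPG : IsPrimGens F N)
    (hNS : F.NonSingular) (h2 : Cond2 N) {s : Finset (Fin r)} (hs : s ∈ KC F N) :
    ∃ S : (Fin n → ℤ) →ₗ[ℤ] (Fin r → ℤ),
      Fintype.linearCombination ℤ N ∘ₗ S = LinearMap.id ∧ ∀ l ∈ s, S (N l) = Pi.single l 1 := by
  obtain ⟨b, hb⟩ := hPG.exists_basis_forall_mem hNS hs
  have hlift : ∀ i, ∃ c : Fin r → ℤ, Fintype.linearCombination ℤ N c = b i ∧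
      ∀ l ∈ s, b i = N l → c = Pi.single l 1 := by
    intro i
    by_cases h : ∃ l ∈ s, b i = N l
    · obtain ⟨l, -, hl⟩ := h
      refine ⟨Pi.single l 1, ?_, fun l' _ hl' => by rw [hPG.inj (hl.symm.trans hl')]⟩
      simp [hl]
    · have hmem : b i ∈ Submodule.span ℤ (Set.range N) := by rw [h2]; trivial
      obtain ⟨c, hc⟩ := (Submodule.mem_span_range_iff_exists_fun ℤ).1 hmem
      exact ⟨c, hc, fun l hl hil => absurd ⟨l, hl, hil⟩ h⟩
  choose c hc hcs using hlift
  refine ⟨b.constr ℤ c, b.ext fun i => ?_, fun l hl => ?_⟩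
  · simp [hc]
  · obtain ⟨i, hi⟩ := hb l hl
    rw [← hi, b.constr_basis, hcs i l hl hi]

end Fans

section TorusAction

variable {n r : ℕ} {N : Fin r → Fin n → ℤ} {K : Set (Finset (Fin r))}

lemma one_mem_GSet (N : Fin r → Fin n → ℤ) : (1 : Fin r → ℂ) ∈ GSet N :=
  ⟨fun _ => one_ne_zero, fun m => by simp⟩

lemma mul_mem_GSet {μ ν : Fin r → ℂ} (hμ : μ ∈ GSet N) (hν : ν ∈ GSet N) : μ * ν ∈ GSet N :=
  ⟨fun k => mul_ne_zero (hμ.1 k) (hν.1 k), fun m => by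
    simp only [Pi.mul_apply, mul_zpow, Finset.prod_mul_distrib, hμ.2 m, hν.2 m, mul_one]⟩

lemma inv_mem_GSet {μ : Fin r → ℂ} (hμ : μ ∈ GSet N) : μ⁻¹ ∈ GSet N :=
  ⟨fun k => inv_ne_zero (hμ.1 k), fun m => by
    simp only [Pi.inv_apply, inv_zpow, Finset.prod_inv_distrib, hμ.2 m, inv_one]⟩

lemma prod_zpow_linearMap_eq_one {μ : Fin r → ℂ} (hμ : μ ∈ GSet N)
    (f : (Fin n → ℤ) →ₗ[ℤ] ℤ) : ∏ k, μ k ^ f (N k) = 1 := by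
  have hf : ∀ v, f v = ∑ j, v j * f (Pi.single j 1) := fun v => by
    conv_lhs => rw [← Finset.univ_sum_single v]
    refine (map_sum f _ _).trans (Finset.sum_congr rfl fun j _ => ?_)
    rw [← smul_eq_mul, ← map_smul, ← Pi.single_smul, smul_eq_mul, mul_one]
  simpa only [← hf] using hμ.2 fun j => f (Pi.single j 1)

lemma prod_zpow_eq_zpow_sum {ι : Type*} (s : Finset ι) (c : ι → ℤ) {t : ℂ} (ht : t ≠ 0) :
    ∏ i ∈ s, t ^ c i = t ^ ∑ i ∈ s, c i := by
  induction s using Finset.induction_on with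
  | empty => simp
  | insert i s hi ih => rw [Finset.prod_insert hi, Finset.sum_insert hi, zpow_add₀ ht, ih]

lemma zpow_mem_GSet {c : Fin r → ℤ} (hc : Fintype.linearCombination ℤ N c = 0) {t : ℂ}
    (ht : t ≠ 0) : (fun k => t ^ c k) ∈ GSet N := by
  refine ⟨fun k => zpow_ne_zero _ ht, fun m => ?_⟩
  have hsum : ∑ k, c k * ∑ j, N k j * m j = (Fintype.linearCombination ℤ N c) ⬝ᵥ m := by
    rw [Fintype.linearCombination_apply, sum_dotProduct]
    simp [dotProduct, Finset.mul_sum, mul_assoc]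
  simp only [← zpow_mul]
  rw [prod_zpow_eq_zpow_sum _ _ ht, hsum, hc, zero_dotProduct, zpow_zero]

/-- The chart of `U(K)` belonging to the cone spanned by the `n_i`, `i ∈ s`. -/
def coordChart (s : Finset (Fin r)) : Set (Fin r → ℂ) := {x | ∀ l ∉ s, x l ≠ 0}

lemma isOpen_coordChart (s : Finset (Fin r)) : IsOpen (coordChart s) := by
  simp only [coordChart, Set.ofPred_forall]
  exact isOpen_iInter_of_finite fun l => isOpen_iInter_of_finite fun _ =>
    isOpen_ne_fun (continuous_apply l) continuous_const

lemma mul_mem_coordChart {s : Finset (Fin r)} {μ x : Fin r → ℂ} (hμ : ∀ k, μ k ≠ 0)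
    (hx : x ∈ coordChart s) : μ * x ∈ coordChart s :=
  fun l hl => mul_ne_zero (hμ l) (hx l hl)

lemma exists_mem_coordChart {x : Fin r → ℂ} (hx : x ∈ UK K) : ∃ s ∈ K, x ∈ coordChart s := by
  refine ⟨Finset.univ.filter (x · = 0), ?_, fun l hl => by simpa using hl⟩
  by_contra h
  obtain ⟨i, hi, hne⟩ := mem_UK.1 hx _ h
  exact hne (by simpa using hi)

/-- Over each chart of `U(K)` there is a `G_Σ`-equivariant map to `G_Σ`, i.e. a trivialization
of the principal `G_Σ`-bundle `U(K) → X_Σ`. -/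
def HasTorusTrivializations (N : Fin r → Fin n → ℤ) (K : Set (Finset (Fin r))) : Prop :=
  ∀ s ∈ K, ∃ τ : (Fin r → ℂ) → (Fin r → ℂ), ContinuousOn τ (coordChart s) ∧
    (∀ x ∈ coordChart s, τ x ∈ GSet N) ∧ ∀ μ ∈ GSet N, ∀ x, τ (μ * x) = μ * τ x

lemma IsPrimGens.hasTorusTrivializations {F : Fan n} (hPG : IsPrimGens F N)
    (hNS : F.NonSingular) (h2 : Cond2 N) : HasTorusTrivializations N (KC F N) := by
  intro s hs
  obtain ⟨S, hS, hSs⟩ := hPG.exists_rightInverse hNS h2 hs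
  let a : Fin r → Fin r → ℤ := fun l => Pi.single l 1 - S (N l)
  have ha : ∀ l, Fintype.linearCombination ℤ N (a l) = 0 := fun l => by
    have hl : Fintype.linearCombination ℤ N (S (N l)) = N l := LinearMap.congr_fun hS (N l)
    simp [a, hl]
  have has : ∀ l ∈ s, a l = 0 := fun l hl => by simp [a, hSs l hl]
  refine ⟨fun x => ∏ l, fun k => x l ^ a l k, continuousOn_finsetProd _ fun l _ => ?_,
    fun x hx => ?_, fun μ hμ x => ?_⟩
  · refine continuousOn_pi.2 fun k => ?_
    by_cases hl : l ∈ s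
    · simpa [has l hl] using continuousOn_const
    · exact (continuous_apply l).continuousOn.zpow₀ _ fun x hx => Or.inl (hx l hl)
  · refine Finset.prod_induction _ (· ∈ GSet N) (fun _ _ => mul_mem_GSet) (one_mem_GSet N)
      fun l _ => ?_
    by_cases hl : l ∈ s
    · simpa [has l hl] using! one_mem_GSet N
    · exact zpow_mem_GSet (ha l) (hx l hl)
  · funext k
    have hμk : ∏ l, μ l ^ a l k = μ k := by
      have h1 := prod_zpow_linearMap_eq_one hμ (LinearMap.proj k ∘ₗ S)
      simp only [LinearMap.comp_apply, LinearMap.proj_apply] at h1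
      simp only [a, Pi.sub_apply, zpow_sub₀ (hμ.1 _), Finset.prod_div_distrib, h1, div_one]
      rw [Finset.prod_eq_single k (fun l _ hl => by simp [hl.symm]) (by simp)]
      simp
    simp only [Finset.prod_apply, Pi.mul_apply, mul_zpow, Finset.prod_mul_distrib, hμk]

end TorusAction

section ToricQuotient

variable {n r : ℕ} {N : Fin r → Fin n → ℤ} {K : Set (Finset (Fin r))}
  {B : Type*} [TopologicalSpace B]

lemma mul_mem_UK {μ x : Fin r → ℂ} (hμ : ∀ k, μ k ≠ 0) (hx : x ∈ UK K) : μ * x ∈ UK K :=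
  mem_UK.2 fun σ hσ =>
    let ⟨i, hi, h⟩ := mem_UK.1 hx σ hσ
    ⟨i, hi, mul_ne_zero (hμ i) h⟩

lemma inv_mul_eq_of_mul_eq {μ x y : Fin r → ℂ} (hμ : μ ∈ GSet N) (h : μ * x = y) :
    μ⁻¹ * y = x := by
  funext i
  simp [← h, hμ.1 i]

lemma toricRel_equivalence (N : Fin r → Fin n → ℤ) (K : Set (Finset (Fin r))) :
    Equivalence (toricRel N K) where
  refl _ := ⟨1, one_mem_GSet N, by simp⟩
  symm := fun ⟨μ, hμ, h⟩ => ⟨μ⁻¹, inv_mem_GSet hμ, inv_mul_eq_of_mul_eq hμ h⟩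
  trans := fun ⟨μ, hμ, h⟩ ⟨ν, hν, h'⟩ =>
    ⟨ν * μ, mul_mem_GSet hν hμ, by simp [← h', ← h, mul_assoc]⟩

lemma qmap_eq_iff {x y : UK K} :
    qmap N K x = qmap N K y ↔ ∃ μ ∈ GSet N, μ * (x : Fin r → ℂ) = y :=
  (toricRel_equivalence N K).quot_mk_eq_iff x y

lemma HasTorusTrivializations.eq_of_mul_eq (hT : HasTorusTrivializations N K)
    {μ ν x : Fin r → ℂ} (hμ : μ ∈ GSet N) (hν : ν ∈ GSet N) (hx : x ∈ UK K)
    (h : μ * x = ν * x) : μ = ν := by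
  obtain ⟨s, hs, hxs⟩ := exists_mem_coordChart hx
  obtain ⟨τ, -, hτG, hτ⟩ := hT s hs
  have hτx : μ * τ x = ν * τ x := by rw [← hτ μ hμ, h, hτ ν hν]
  exact funext fun i => mul_right_cancel₀ ((hτG x hxs).1 i) (congrFun hτx i)

/-- Pointwise multiplication of a `U(K)`-valued map by a `G_Σ`-valued one. -/
def torusMul (μ : C(B, Fin r → ℂ)) (hμ : ∀ b, μ b ∈ GSet N) (x : C(B, UK K)) : C(B, UK K) :=
  ⟨fun b => ⟨μ b * x b, mul_mem_UK (hμ b).1 (x b).2⟩, by fun_prop⟩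

lemma qmap_torusMul (μ : C(B, Fin r → ℂ)) (hμ : ∀ b, μ b ∈ GSet N) (x : C(B, UK K)) (b : B) :
    qmap N K (torusMul μ hμ x b) = qmap N K (x b) :=
  (qmap_eq_iff.2 ⟨μ b, hμ b, rfl⟩).symm

-- In a chart the quotient `μ = y / x` is `τ y / τ x`.
lemma HasTorusTrivializations.exists_mul_eq (hT : HasTorusTrivializations N K)
    (x y : C(B, UK K)) (h : ∀ b, qmap N K (x b) = qmap N K (y b)) :
    ∃ μ : C(B, Fin r → ℂ), ∀ b, μ b ∈ GSet N ∧ μ b * (x b : Fin r → ℂ) = y b := by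
  choose μ hμ hμx using fun b => qmap_eq_iff.1 (h b)
  refine ⟨⟨μ, continuous_iff_continuousAt.2 fun b => ?_⟩, fun b => ⟨hμ b, hμx b⟩⟩
  obtain ⟨s, hs, hxs⟩ := exists_mem_coordChart (x b).2
  obtain ⟨τ, hτc, hτG, hτ⟩ := hT s hs
  have hys : (y b : Fin r → ℂ) ∈ coordChart s := hμx b ▸ mul_mem_coordChart (hμ b).1 hxs
  have hcont : ∀ z : C(B, UK K), (z b : Fin r → ℂ) ∈ coordChart s →
      ContinuousAt (fun b => τ (z b)) b := fun z hz =>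
    ContinuousAt.comp (g := τ) (f := fun b => (z b : Fin r → ℂ))
      (hτc.continuousAt ((isOpen_coordChart s).mem_nhds hz)) (by fun_prop)
  have hquot : ContinuousAt (fun b k => τ (y b) k / τ (x b) k) b := continuousAt_pi.2 fun k =>
    (continuousAt_pi.1 (hcont y hys) k).div (continuousAt_pi.1 (hcont x hxs) k)
      ((hτG _ hxs).1 k)
  have hnhds : ∀ᶠ b' in nhds b, (x b' : Fin r → ℂ) ∈ coordChart s :=
    (by fun_prop : Continuous fun b => (x b : Fin r → ℂ)).continuousAt
      ((isOpen_coordChart s).mem_nhds hxs)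
  refine hquot.congr (hnhds.mono fun b' hb' => funext fun k => ?_)
  rw [div_eq_iff ((hτG _ hb').1 k), ← hμx b', hτ _ (hμ b')]
  rfl

lemma isOpenMap_qmap : IsOpenMap (qmap N K) := by
  intro V hV
  have hpre : qmap N K ⁻¹' (qmap N K '' V) = ⋃ μ : GSet N,
      torusMul (.const _ μ.1) (fun _ => μ.2) (.id (UK K)) ⁻¹' V := by
    ext y
    simp only [Set.mem_preimage, Set.mem_image, Set.mem_iUnion]
    constructor
    · rintro ⟨x, hx, hxy⟩
      obtain ⟨μ, hμ, h⟩ := qmap_eq_iff.1 hxy.symm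
      exact ⟨⟨μ, hμ⟩, (Subtype.ext h : torusMul (.const _ μ) (fun _ => hμ) (.id (UK K)) y = x) ▸ hx⟩
    · rintro ⟨μ, h⟩
      exact ⟨_, h, qmap_torusMul _ _ _ y⟩
  refine (isQuotientMap_quot_mk (r := toricRel N K)).isOpen_preimage.1 (hpre ▸ ?_)
  exact isOpen_iUnion fun μ => hV.preimage (ContinuousMap.continuous _)

lemma isOpenQuotientMap_qmap : IsOpenQuotientMap (qmap N K) :=
  ⟨Quot.exists_rep, continuous_quot_mk, isOpenMap_qmap⟩

-- The section sends an orbit to its unique point in `τ⁻¹(1)`.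
lemma HasTorusTrivializations.exists_local_section (hT : HasTorusTrivializations N K)
    (x₀ : XS N K) : ∃ O : Set (XS N K), IsOpen O ∧ x₀ ∈ O ∧
      ∃ σ : C(O, UK K), ∀ x, qmap N K (σ x) = x := by
  obtain ⟨u, rfl⟩ : ∃ u, qmap N K u = x₀ := Quot.exists_rep x₀
  obtain ⟨s, hs, hus⟩ := exists_mem_coordChart u.2
  obtain ⟨τ, hτc, hτG, hτ⟩ := hT s hs
  let V : Set (UK K) := Subtype.val ⁻¹' coordChart s
  let O : Set (XS N K) := qmap N K '' V
  have hO : IsOpen O := isOpenMap_qmap _ ((isOpen_coordChart s).preimage continuous_subtype_val)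
  have hchart : ∀ v : qCont N K ⁻¹' O, (v : Fin r → ℂ) ∈ coordChart s := by
    rintro ⟨v, w, hw, hwv⟩
    obtain ⟨μ, hμ, h⟩ := qmap_eq_iff.1 hwv
    have hμw : μ * (w : Fin r → ℂ) ∈ coordChart s := mul_mem_coordChart hμ.1 hw
    exact h ▸ hμw
  have hτv : ContinuousOn (fun x => (τ x)⁻¹) (coordChart s) :=
    continuousOn_pi.2 fun k => (continuousOn_pi.1 hτc k).inv₀ fun x hx => (hτG x hx).1 k
  let f : C(qCont N K ⁻¹' O, UK K) :=
    torusMul ⟨fun v => (τ v)⁻¹, hτv.comp_continuous (by fun_prop) hchart⟩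
      (fun v => inv_mem_GSet (hτG _ (hchart v))) ⟨Subtype.val, continuous_subtype_val⟩
  let q : C(qCont N K ⁻¹' O, O) := (qCont N K).restrictPreimage O
  have hq : Topology.IsQuotientMap q := (isOpenQuotientMap_qmap.restrictPreimage O).isQuotientMap
  have hf : Function.FactorsThrough f q := fun v w hvw => by
    obtain ⟨μ, hμ, h⟩ := qmap_eq_iff.1 (congrArg Subtype.val hvw)
    refine Subtype.ext (funext fun k => ?_)
    have hk : (τ (w : Fin r → ℂ) k)⁻¹ * w.1.1 k = (τ (v : Fin r → ℂ) k)⁻¹ * v.1.1 k := by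
      rw [← h, hτ μ hμ]
      simp only [Pi.mul_apply, mul_inv]
      field_simp [hμ.1 k]
    exact hk.symm
  refine ⟨O, hO, ⟨u, hus, rfl⟩, hq.lift f hf, fun x => ?_⟩
  obtain ⟨v, rfl⟩ := hq.surjective x
  exact (congrArg (qmap N K) (DFunLike.congr_fun (hq.lift_comp f hf) v)).trans
    (qmap_torusMul _ _ _ v)

end ToricQuotient

section CubeLifting

variable {ι : Type*}

/-- The clamp of the unit cube onto the box `[lo, hi]`. -/
def boxClamp (lo hi : ι → unitInterval) : C(ι → unitInterval, ι → unitInterval) :=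
  ⟨fun y => lo ⊔ (y ⊓ hi), continuous_pi fun i =>
    continuous_const.sup ((continuous_apply i).inf continuous_const)⟩

lemma boxClamp_mem {lo hi : ι → unitInterval} (h : lo ≤ hi) (y : ι → unitInterval) :
    boxClamp lo hi y ∈ Set.Icc lo hi :=
  ⟨le_sup_left, sup_le h inf_le_right⟩

lemma boxClamp_of_mem {lo hi y : ι → unitInterval} (h : y ∈ Set.Icc lo hi) :
    boxClamp lo hi y = y :=
  (congrArg (lo ⊔ ·) (inf_eq_left.2 h.2)).trans (sup_eq_right.2 h.1)

lemma boxClamp_apply (lo hi y : ι → unitInterval) (i : ι) :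
    boxClamp lo hi y i = lo i ⊔ (y i ⊓ hi i) := rfl

variable {n r : ℕ} {N : Fin r → Fin n → ℤ} {K : Set (Finset (Fin r))}

/-- The map `h` from a cube to `X_Σ` lifts to `U(K)` over `S`; the lift is encoded by a map
defined on the whole cube. -/
def LiftsOn (h : C(ι → unitInterval, XS N K)) (S : Set (ι → unitInterval)) : Prop :=
  ∃ g : C(ι → unitInterval, UK K), ∀ y ∈ S, qmap N K (g y) = h y

-- The two lifts differ along the common wall by a `G_Σ`-valued function, which extends to the
-- whole cube through the retraction onto the wall.
lemma HasTorusTrivializations.liftsOn_glue (hT : HasTorusTrivializations N K)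
    {h : C(ι → unitInterval, XS N K)} {lo hi : ι → unitInterval} {i : ι} {t : unitInterval}
    (hle : lo ≤ hi) (hlo : lo i ≤ t) (hhi : t ≤ hi i)
    (h₁ : LiftsOn h (Set.Icc lo (Function.update hi i t)))
    (h₂ : LiftsOn h (Set.Icc (Function.update lo i t) hi)) : LiftsOn h (Set.Icc lo hi) := by
  obtain ⟨g₁, hg₁⟩ := h₁
  obtain ⟨g₂, hg₂⟩ := h₂
  have hlo' : lo ≤ Function.update lo i t := le_update_iff.2 ⟨hlo, fun _ _ => le_rfl⟩
  have hhi' : Function.update hi i t ≤ hi := update_le_iff.2 ⟨hhi, fun _ _ => le_rfl⟩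
  let wall := boxClamp (Function.update lo i t) (Function.update hi i t)
  have hwall : ∀ y, wall y ∈ Set.Icc (Function.update lo i t) (Function.update hi i t) :=
    boxClamp_mem (update_le_update_iff.2 ⟨le_rfl, fun j _ => hle j⟩)
  obtain ⟨μ, hμ⟩ := hT.exists_mul_eq (g₂.comp wall) (g₁.comp wall) fun y =>
    (hg₂ _ ⟨(hwall y).1, (hwall y).2.trans hhi'⟩).trans
      (hg₁ _ ⟨hlo'.trans (hwall y).1, (hwall y).2⟩).symm
  let g₂' : C(ι → unitInterval, UK K) := torusMul μ (fun y => (hμ y).1) g₂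
  let c := boxClamp lo hi
  have hagree : ∀ y, y i = t → g₁ (c y) = g₂' (c y) := by
    intro y hy
    have hci : c y i = t := by simp [c, boxClamp_apply, hy, hlo, hhi]
    have hcw : wall (c y) = c y := boxClamp_of_mem
      ⟨update_le_iff.2 ⟨hci.ge, fun j _ => (boxClamp_mem hle y).1 j⟩,
        le_update_iff.2 ⟨hci.le, fun j _ => (boxClamp_mem hle y).2 j⟩⟩
    exact Subtype.ext (by simpa [hcw] using! (hμ (c y)).2.symm)
  refine ⟨⟨fun y => if y i ≤ t then g₁ (c y) else g₂' (c y),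
    Continuous.if_le (by fun_prop) (by fun_prop) (continuous_apply i) continuous_const hagree⟩,
    fun y hy => ?_⟩
  have hcy : c y = y := boxClamp_of_mem hy
  by_cases hyt : y i ≤ t
  · simpa [hyt, hcy] using hg₁ y ⟨hy.1, le_update_iff.2 ⟨hyt, fun j _ => hy.2 j⟩⟩
  · have hg : qmap N K (g₂' y) = h y := (qmap_torusMul _ _ g₂ y).trans
      (hg₂ y ⟨update_le_iff.2 ⟨(not_le.1 hyt).le, fun j _ => hy.1 j⟩, hy.2⟩)
    simpa [hyt, hcy] using hg

variable [Finite ι]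

lemma HasTorusTrivializations.exists_forall_liftsOn_of_small
    (hT : HasTorusTrivializations N K) (h : C(ι → unitInterval, XS N K)) :
    ∃ δ : ℝ, 0 < δ ∧ ∀ lo hi : ι → unitInterval, lo ≤ hi → (∀ i, (hi i : ℝ) - lo i ≤ δ) →
      LiftsOn h (Set.Icc lo hi) := by
  have := Fintype.ofFinite ι
  choose O hO hmem σ hσ using fun x => hT.exists_local_section x
  obtain ⟨ε, hε, hball⟩ := lebesgue_number_lemma_of_metric isCompact_univ
    (fun x => (hO x).preimage h.continuous) fun y _ => Set.mem_iUnion.2 ⟨h y, hmem (h y)⟩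
  refine ⟨ε / 2, half_pos hε, fun lo hi hle hsmall => ?_⟩
  obtain ⟨x, hx⟩ := hball lo (Set.mem_univ lo)
  have hbox : ∀ y, h (boxClamp lo hi y) ∈ O x := fun y => hx <| by
    obtain ⟨hy₁, hy₂⟩ := boxClamp_mem hle y
    refine (dist_pi_lt_iff hε).2 fun i => ?_
    have hlo : (lo i : ℝ) ≤ boxClamp lo hi y i := hy₁ i
    have hhi : (boxClamp lo hi y i : ℝ) ≤ hi i := hy₂ i
    rw [Subtype.dist_eq, Real.dist_eq, abs_of_nonneg (sub_nonneg.2 hlo)]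
    linarith [hsmall i]
  refine ⟨(σ x).comp ⟨fun y => ⟨h (boxClamp lo hi y), hbox y⟩, by fun_prop⟩, fun y hy => ?_⟩
  exact (hσ x _).trans (congrArg h (boxClamp_of_mem hy))

lemma unitCube_box_induction {P : (ι → unitInterval) → (ι → unitInterval) → Prop} {δ : ℝ}
    (hδ : 0 < δ)
    (small : ∀ lo hi, lo ≤ hi → (∀ i, (hi i : ℝ) - lo i ≤ δ) → P lo hi)
    (glue : ∀ lo hi i t, lo ≤ hi → lo i ≤ t → t ≤ hi i →
      P lo (Function.update hi i t) → P (Function.update lo i t) hi → P lo hi) :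
    ∀ lo hi, lo ≤ hi → P lo hi := by
  have := Fintype.ofFinite ι
  let size (lo hi : ι → unitInterval) (i : ι) : ℕ := ⌈((hi i : ℝ) - lo i) / δ⌉₊
  suffices h : ∀ m lo hi, lo ≤ hi → ∑ i, size lo hi i = m → P lo hi from
    fun lo hi hle => h _ lo hi hle rfl
  intro m
  induction m using Nat.strong_induction_on with | _ m ih => ?_
  rintro lo hi hle rfl
  by_cases hsmall : ∀ i, (hi i : ℝ) - lo i ≤ δ
  · exact small lo hi hle hsmall
  obtain ⟨i, hi'⟩ := not_forall.1 hsmall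
  rw [not_le] at hi'
  have hlt : (1 : ℝ) < ((hi i : ℝ) - lo i) / δ := (one_lt_div hδ).2 hi'
  let t : unitInterval := ⟨lo i + δ, add_nonneg (lo i).2.1 hδ.le, by linarith [(hi i).2.2]⟩
  have hlo : lo i ≤ t := Subtype.coe_le_coe.1 (by simp [t, hδ.le])
  have hhi : t ≤ hi i := Subtype.coe_le_coe.1 (by simp only [t]; linarith)
  have hsize : ∀ lo' hi', (∀ j ≠ i, lo' j = lo j ∧ hi' j = hi j) →
      size lo' hi' i < size lo hi i → ∑ j, size lo' hi' j < ∑ j, size lo hi j := by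
    intro lo' hi' hj hi
    refine Finset.sum_lt_sum (fun j _ => ?_) ⟨i, Finset.mem_univ i, hi⟩
    rcases eq_or_ne j i with rfl | hne
    · exact hi.le
    · simp only [size, (hj j hne).1, (hj j hne).2, le_refl]
  refine glue lo hi i t hle hlo hhi
    (ih _ (hsize _ _ (fun j hj => ⟨rfl, Function.update_of_ne hj _ _⟩) ?_) _ _
      (le_update_iff.2 ⟨hlo, fun j _ => hle j⟩) rfl)
    (ih _ (hsize _ _ (fun j hj => ⟨Function.update_of_ne hj _ _, rfl⟩) ?_) _ _
      (update_le_iff.2 ⟨hhi, fun j _ => hle j⟩) rfl)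
  · simpa [size, t, hδ.ne'] using Nat.lt_ceil.2 (by exact_mod_cast hlt)
  · have hsub : ((hi i : ℝ) - t) / δ = ((hi i : ℝ) - lo i) / δ - 1 := by
      simp only [t]; field_simp; ring
    simp only [size, Function.update_self, hsub]
    exact Nat.lt_ceil.2 (by linarith [Nat.ceil_lt_add_one (sub_nonneg.2 hlt.le)])

lemma HasTorusTrivializations.exists_cube_lift (hT : HasTorusTrivializations N K)
    (h : C(ι → unitInterval, XS N K)) :
    ∃ g : C(ι → unitInterval, UK K), ∀ y, qmap N K (g y) = h y := by
  obtain ⟨δ, hδ, hsmall⟩ := hT.exists_forall_liftsOn_of_small h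
  obtain ⟨g, hg⟩ := unitCube_box_induction (P := fun lo hi => LiftsOn h (Set.Icc lo hi)) hδ
    hsmall (fun _ _ _ _ => hT.liftsOn_glue) 0 1 fun _ => zero_le_one
  exact ⟨g, fun y => hg y ⟨fun i => (y i).2.1, fun i => (y i).2.2⟩⟩

end CubeLifting

section CircleParametrization

open OnePoint

variable {A Y : Type*} [TopologicalSpace A] [TopologicalSpace Y]

lemma continuous_tan_onePoint :
    Continuous fun u : ℝ => if Real.cos u = 0 then (∞ : OnePoint ℝ) else (Real.tan u : ℝ) := by
  refine continuous_iff_continuousAt.2 fun u => ?_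
  by_cases hu : Real.cos u = 0
  · have hsin : Real.sin u ≠ 0 := fun h => by simpa [h, hu] using Real.sin_sq_add_cos_sq u
    have hcot : Filter.Tendsto (fun v => Real.cos v / Real.sin v) (nhds u) (nhds 0) := by
      have := (Real.continuous_cos.tendsto u).div (Real.continuous_sin.tendsto u) hsin
      rwa [hu, zero_div] at this
    have hne : ∀ᶠ v in nhds u ⊓ Filter.principal {v | ¬Real.cos v = 0},
        Real.cos v / Real.sin v ∈ ({0}ᶜ : Set ℝ) := by
      filter_upwards [Filter.mem_inf_of_left (Real.continuous_sin.continuousAt.eventually_ne hsin),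
        Filter.mem_inf_of_right (Filter.mem_principal_self _)] with v hv hv'
      exact div_ne_zero hv' hv
    have htan := Filter.tendsto_inv₀_nhdsNE_zero.comp
      (tendsto_nhdsWithin_iff.2 ⟨hcot.mono_left inf_le_left, hne⟩)
    rw [Metric.cobounded_eq_cocompact, ← Filter.coclosedCompact_eq_cocompact] at htan
    rw [ContinuousAt, if_pos hu]
    exact .if tendsto_const_nhds
      ((tendsto_coe_infty.comp htan).congr fun v => by simp [Real.tan_eq_sin_div_cos])
  · refine (continuous_coe.continuousAt.comp (Real.continuousAt_tan.2 hu)).congr ?_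
    filter_upwards [Real.continuous_cos.continuousAt.eventually_ne hu] with v hv
    exact (if_neg hv).symm

/-- The parametrization of the circle `ℝ ∪ {∞}` by the unit interval sending `t` to
`tan (π (t - 1/2))` and the end points to `∞`. -/
def circleParam : C(unitInterval, OnePoint ℝ) where
  toFun t := if Real.cos (Real.pi * (t - 1 / 2)) = 0 then ∞
    else (Real.tan (Real.pi * (t - 1 / 2)) : ℝ)
  continuous_toFun := continuous_tan_onePoint.comp
    (by fun_prop : Continuous fun t : unitInterval => Real.pi * ((t : ℝ) - 1 / 2))

lemma circleParam_zero : circleParam 0 = ∞ :=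
  if_pos (Real.cos_eq_zero_iff.2 ⟨-1, by push_cast; ring⟩)

lemma circleParam_one : circleParam 1 = ∞ :=
  if_pos (Real.cos_eq_zero_iff.2 ⟨0, by push_cast; ring⟩)

lemma circleParam_of_ne {t : unitInterval} (h0 : t ≠ 0) (h1 : t ≠ 1) :
    ∃ x : ℝ, circleParam t = x ∧ (t : ℝ) = Real.arctan x / Real.pi + 1 / 2 := by
  have hpi := Real.pi_pos
  have ht0 : 0 < (t : ℝ) := unitInterval.pos_iff_ne_zero.2 h0
  have ht1 : (t : ℝ) < 1 := unitInterval.lt_one_iff_ne_one.2 h1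
  have hlo : -(Real.pi / 2) < Real.pi * (t - 1 / 2) := by nlinarith
  have hhi : Real.pi * (t - 1 / 2) < Real.pi / 2 := by nlinarith
  refine ⟨_, if_neg (Real.cos_pos_of_mem_Ioo ⟨hlo, hhi⟩).ne', ?_⟩
  rw [Real.arctan_tan hlo hhi]
  field_simp
  ring

lemma circleParam_surjective : Function.Surjective circleParam := by
  intro x
  induction x using OnePoint.rec with
  | infty => exact ⟨0, circleParam_zero⟩
  | coe x =>
    have hpi := Real.pi_pos
    have hlo := Real.neg_pi_div_two_lt_arctan x
    have hhi := Real.arctan_lt_pi_div_two x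
    refine ⟨⟨Real.arctan x / Real.pi + 1 / 2, ?_, ?_⟩, ?_⟩
    · rw [← sub_le_iff_le_add, le_div_iff₀ hpi]
      linarith
    · rw [← le_sub_iff_add_le, div_le_iff₀ hpi]
      linarith
    · have hu : Real.pi * (Real.arctan x / Real.pi + 1 / 2 - 1 / 2) = Real.arctan x := by
        field_simp
        ring
      change ite _ _ _ = _
      rw [hu, if_neg (Real.cos_arctan_pos x).ne', Real.tan_arctan]

lemma eq_or_infty_of_circleParam_eq {s t : unitInterval} (h : circleParam s = circleParam t) :
    s = t ∨ (s = 0 ∨ s = 1) ∧ (t = 0 ∨ t = 1) := by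
  have hend {u : unitInterval} (hu : u = 0 ∨ u = 1) : circleParam u = ∞ := by
    obtain rfl | rfl := hu
    exacts [circleParam_zero, circleParam_one]
  by_cases hs : s = 0 ∨ s = 1 <;> by_cases ht : t = 0 ∨ t = 1
  · exact .inr ⟨hs, ht⟩
  · obtain ⟨x, hx, -⟩ := circleParam_of_ne (fun h => ht (.inl h)) fun h => ht (.inr h)
    exact absurd (hx.symm.trans (h.symm.trans (hend hs))) (coe_ne_infty x)
  · obtain ⟨x, hx, -⟩ := circleParam_of_ne (fun h => hs (.inl h)) fun h => hs (.inr h)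
    exact absurd (hx.symm.trans (h.trans (hend ht))) (coe_ne_infty x)
  · obtain ⟨x, hx, hsx⟩ := circleParam_of_ne (fun h => hs (.inl h)) fun h => hs (.inr h)
    obtain ⟨y, hy, hty⟩ := circleParam_of_ne (fun h => ht (.inl h)) fun h => ht (.inr h)
    obtain rfl : x = y := coe_injective (hx.symm.trans (h.trans hy))
    exact .inl (Subtype.ext (hsx.trans hty.symm))

lemma exists_loop_family [CompactSpace A] [T2Space A] {y₀ : Y} (G : C(unitInterval × A, Y))
    (h0 : ∀ a, G (0, a) = y₀) (h1 : ∀ a, G (1, a) = y₀) :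
    ∃ P : C(A, Loop Y y₀), ∀ a t, (P a).1 (circleParam t) = G (t, a) := by
  let Q : C(unitInterval × A, OnePoint ℝ × A) := circleParam.prodMap (.id A)
  have hQ : Topology.IsQuotientMap Q := Q.continuous.isClosedMap.isQuotientMap Q.continuous
    (circleParam_surjective.prodMap Function.surjective_id)
  have hG : Function.FactorsThrough G Q := by
    rintro ⟨s, a⟩ ⟨t, b⟩ h
    obtain ⟨hst, rfl⟩ : circleParam s = circleParam t ∧ a = b := Prod.ext_iff.1 h
    obtain rfl | ⟨rfl | rfl, rfl | rfl⟩ := eq_or_infty_of_circleParam_eq hst <;> simp [h0, h1]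
  have hlift (t a) : hQ.lift G hG (circleParam t, a) = G (t, a) :=
    DFunLike.congr_fun (hQ.lift_comp G hG) (t, a)
  let P : C(A, C(OnePoint ℝ, Y)) := ((hQ.lift G hG).comp .prodSwap).curry
  have hP (a) : P a ∞ = y₀ := by
    rw [← circleParam_zero]
    exact (hlift 0 a).trans (h0 a)
  exact ⟨⟨fun a => ⟨P a, hP a⟩, P.continuous.subtype_mk hP⟩, fun a t => hlift t a⟩

end CircleParametrization

section ComplexLogarithms

variable {A ι : Type*} [TopologicalSpace A] {m : ℕ}

lemma eq_of_forall_exp_eq [PreconnectedSpace A] {f g : A → ι → ℂ} (hf : Continuous f)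
    (hg : Continuous g) (h : ∀ a k, Complex.exp (f a k) = Complex.exp (g a k)) {a₀ : A}
    (h₀ : f a₀ = g a₀) : f = g := by
  funext a k
  exact congrFun (Complex.isCoveringMap_exp.eq_of_comp_eq (continuous_pi_iff.1 hf k)
    (continuous_pi_iff.1 hg k) (funext fun b => Subtype.ext (h b k)) a₀ (congrFun h₀ k)) a

lemma exists_log_homotopy (H : C(unitInterval × A, ι → ℂ)) (hH : ∀ z k, H z k ≠ 0)
    (f : C(A, ι → ℂ)) (h0 : ∀ a k, H (0, a) k = Complex.exp (f a k)) :
    ∃ L : C(unitInterval × A, ι → ℂ), (∀ z k, Complex.exp (L z k) = H z k) ∧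
      ∀ a, L (0, a) = f a := by
  let H' (k : ι) : C(unitInterval × A, {z : ℂ // z ≠ 0}) :=
    ⟨fun z => ⟨H z k, hH z k⟩, ((continuous_apply k).comp H.continuous).subtype_mk _⟩
  let f' (k : ι) : C(A, ℂ) := ⟨fun a => f a k, (continuous_apply k).comp f.continuous⟩
  have hf' (k : ι) (a : A) : H' k (0, a) = ⟨_, (f' k a).exp_ne_zero⟩ := Subtype.ext (h0 a k)
  let L (k : ι) := Complex.isCoveringMap_exp.liftHomotopy (H' k) (f' k) (hf' k)
  exact ⟨⟨fun z k => L k z, continuous_pi fun k => (L k).continuous⟩,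
    fun z k => congrArg Subtype.val
      (congrFun (Complex.isCoveringMap_exp.liftHomotopy_lifts (H' k) (f' k) (hf' k)) z),
    fun a => funext fun k =>
      Complex.isCoveringMap_exp.liftHomotopy_zero (H' k) (f' k) (hf' k) a⟩

lemma exists_log_cube {κ : Type*} (μ : C(κ → unitInterval, ι → ℂ)) (hμ : ∀ y k, μ y k ≠ 0) :
    ∃ ℓ : C(κ → unitInterval, ι → ℂ), ∀ y k, Complex.exp (ℓ y k) = μ y k := by
  obtain ⟨L, hL, -⟩ := exists_log_homotopy
    (⟨fun z => μ fun i => z.1 * z.2 i, by fun_prop⟩ : C(unitInterval × (κ → unitInterval), ι → ℂ))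
    (fun _ => hμ _) (.const _ fun k => Complex.log (μ 0 k)) fun y k => by
      rw [ContinuousMap.const_apply, Complex.exp_log (hμ _ _), ContinuousMap.coe_mk]
      simp only [zero_mul]
      rfl
  exact ⟨⟨fun y => L (1, y), by fun_prop⟩, fun y k => (hL (1, y) k).trans (by simp)⟩

lemma preconnectedSpace_boundary (hm : 2 ≤ m) : PreconnectedSpace (Cube.boundary (Fin m)) := by
  refine isPreconnected_iff_preconnectedSpace.1 ?_
  have hface (i : Fin m) (c : unitInterval) :
      IsPreconnected {y : Fin m → unitInterval | y i = c} := by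
    have h : {y : Fin m → unitInterval | y i = c} = Set.range (Function.update · i c) := by
      ext y
      exact ⟨fun h => ⟨y, h ▸ Function.update_eq_self i y⟩,
        by rintro ⟨z, rfl⟩; exact Function.update_self i c z⟩
    exact h ▸ isPreconnected_range (continuous_id.update i continuous_const)
  refine isPreconnected_of_forall (0 : Fin m → unitInterval) fun y ⟨i, hi⟩ => ?_
  have : Nontrivial (Fin m) := Fin.nontrivial_iff_two_le.2 hm
  obtain ⟨j, hji⟩ := exists_ne i
  refine ⟨{z | z i = y i} ∪ {z | z j = 0}, ?_, .inr rfl, .inl rfl, ?_⟩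
  · rintro z (hz | hz)
    exacts [⟨i, (show z i = y i from hz).symm ▸ hi⟩, ⟨j, .inl hz⟩]
  · exact (hface i _).union (Function.update y j 0) (Function.update_of_ne hji.symm _ _)
      (Function.update_self _ _ _) (hface j 0)

lemma exists_log_cube_extension (hm : 2 ≤ m) (μ : C(Fin m → unitInterval, ι → ℂ))
    (hμ : ∀ y k, μ y k ≠ 0) (ℓ₀ : C(Cube.boundary (Fin m), ι → ℂ))
    (hℓ₀ : ∀ c k, Complex.exp (ℓ₀ c k) = μ c k) :
    ∃ ℓ : C(Fin m → unitInterval, ι → ℂ), (∀ y k, Complex.exp (ℓ y k) = μ y k) ∧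
      ∀ c : Cube.boundary (Fin m), ℓ c = ℓ₀ c := by
  have := preconnectedSpace_boundary hm
  obtain ⟨ℓ, hℓ⟩ := exists_log_cube μ hμ
  let c₀ : Cube.boundary (Fin m) := ⟨0, ⟨0, by lia⟩, .inl rfl⟩
  have hexp (k) : Complex.exp (ℓ₀ c₀ k - ℓ c₀ k) = 1 := by
    rw [Complex.exp_sub, hℓ₀, hℓ, div_self (hμ _ _)]
  have hlog (y k) : Complex.exp (ℓ y k + (ℓ₀ c₀ k - ℓ c₀ k)) = μ y k := by
    rw [Complex.exp_add, hexp, hℓ, mul_one]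
  refine ⟨⟨fun y => ℓ y + (ℓ₀ c₀ - ℓ c₀), by fun_prop⟩, hlog, fun c => ?_⟩
  refine congrFun (eq_of_forall_exp_eq (f := fun c : Cube.boundary (Fin m) => ℓ c + (ℓ₀ c₀ - ℓ c₀))
    (by fun_prop) ℓ₀.continuous (fun c k => (hlog c k).trans (hℓ₀ c k).symm) (a₀ := c₀) ?_) c
  exact add_sub_cancel _ _

lemma exists_log_boundary (hm : 2 ≤ m) (μ : C(Cube.boundary (Fin (m + 1)), ι → ℂ))
    (hμ : ∀ b k, μ b k ≠ 0) (h0 : ∀ b, b.1 0 = 0 → μ b = 1) :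
    ∃ ℓ : C(Cube.boundary (Fin (m + 1)), ι → ℂ), (∀ b k, Complex.exp (ℓ b k) = μ b k) ∧
      ∀ b, b.1 0 = 0 → ℓ b = 0 := by
  have hmem {t y} (h : t = 0 ∨ t = 1 ∨ y ∈ Cube.boundary (Fin m)) :
      Fin.cons t y ∈ Cube.boundary (Fin (m + 1)) := mem_boundary_succ.2 h
  have hcons {B : Type _} [TopologicalSpace B] {t : B → unitInterval} {y : B → Fin m → unitInterval}
      (ht : Continuous t) (hy : Continuous y) :
      Continuous fun b => (Fin.cons (t b) (y b) : Fin (m + 1) → unitInterval) :=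
    Continuous.finCons (A := fun _ => unitInterval) ht hy
  obtain ⟨s, hs, hs0⟩ := exists_log_homotopy (⟨fun z => μ ⟨_, hmem (t := z.1) (.inr (.inr z.2.2))⟩,
      μ.continuous.comp ((hcons continuous_fst (by fun_prop)).subtype_mk _)⟩ :
      C(unitInterval × Cube.boundary (Fin m), ι → ℂ)) (fun _ => hμ _) 0 fun c k => by
    have := h0 ⟨Fin.cons 0 c.1, hmem (.inl rfl)⟩ rfl
    simp [this]
  obtain ⟨q, hq, hqs⟩ := exists_log_cube_extension hm
    (⟨fun y => μ ⟨_, hmem (t := 1) (y := y) (.inr (.inl rfl))⟩,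
      μ.continuous.comp ((hcons continuous_const continuous_id).subtype_mk _)⟩ :
      C(Fin m → unitInterval, ι → ℂ)) (fun _ => hμ _)
    (s.comp ((ContinuousMap.const _ 1).prodMk (.id _))) fun c => hs (1, c)
  obtain ⟨ℓ, hℓ⟩ := exists_boundary_glue 0 q s hs0 fun c => (hqs c).symm
  refine ⟨ℓ, fun b k => ?_, fun b => (hℓ b).1⟩
  have hb {t} (h : b.1 0 = t) : Fin.cons t (Fin.tail b.1) = b.1 := by
    rw [← h, Fin.cons_self_tail]
  obtain h | h | h := mem_boundary_succ.1 b.2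
  · simp [(hℓ b).1 h, h0 b h]
  · simpa [(hℓ b).2.1 h, hb h] using hq (Fin.tail b.1) k
  · simpa [(hℓ b).2.2 h] using hs (b.1 0, ⟨_, h⟩) k

end ComplexLogarithms

section ExtensionOfTorusMaps

variable {n r m : ℕ} {N : Fin r → Fin n → ℤ}

/-- The differential at `1` of the homomorphism from the torus `(ℂ*)^r` to `(ℂ*)^n` with kernel
`G_Σ`. -/
def latticeMap (N : Fin r → Fin n → ℤ) : (Fin r → ℂ) →ₗ[ℂ] (Fin n → ℂ) :=
  LinearMap.pi fun j => ∑ k, (N k j : ℂ) • LinearMap.proj k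

lemma latticeMap_apply (v : Fin r → ℂ) (j : Fin n) :
    latticeMap N v j = ∑ k, v k * (N k j : ℂ) := by
  simp [latticeMap, mul_comm]

lemma prod_exp_zpow_eq_exp_latticeMap (v : Fin r → ℂ) (w : Fin n → ℤ) :
    ∏ k, Complex.exp (v k) ^ (∑ j, N k j * w j) =
      Complex.exp (∑ j, latticeMap N v j * (w j : ℂ)) := by
  have h : ∑ j, latticeMap N v j * (w j : ℂ) = ∑ k, ((∑ j, N k j * w j : ℤ) : ℂ) * v k := by
    simp only [latticeMap_apply, Finset.sum_mul, Int.cast_sum, Int.cast_mul]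
    rw [Finset.sum_comm]
    exact Finset.sum_congr rfl fun k _ => Finset.sum_congr rfl fun j _ => by ring
  simp only [h, Complex.exp_sum, Complex.exp_int_mul]

lemma exp_mem_GSet {v : Fin r → ℂ} (hv : latticeMap N v = 0) :
    (fun k => Complex.exp (v k)) ∈ GSet N :=
  ⟨fun k => Complex.exp_ne_zero (v k), fun w => by
    rw [prod_exp_zpow_eq_exp_latticeMap]
    simp [hv]⟩

lemma exp_latticeMap_eq_one {v : Fin r → ℂ} (hv : (fun k => Complex.exp (v k)) ∈ GSet N)
    (j : Fin n) : Complex.exp (latticeMap N v j) = 1 := by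
  have h := hv.2 (Pi.single j 1)
  rw [prod_exp_zpow_eq_exp_latticeMap] at h
  simpa [Pi.single_apply] using h

lemma exists_extension_GSet (hm : 2 ≤ m) (μ : C(Cube.boundary (Fin (m + 1)), Fin r → ℂ))
    (hμ : ∀ b, μ b ∈ GSet N) (h0 : ∀ b, b.1 0 = 0 → μ b = 1) :
    ∃ M : C(Fin (m + 1) → unitInterval, Fin r → ℂ), (∀ y, M y ∈ GSet N) ∧
      ∀ b : Cube.boundary (Fin (m + 1)), M b = μ b := by
  have := preconnectedSpace_boundary (m := m + 1) (by lia)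
  obtain ⟨ℓ, hℓ, hℓ0⟩ := exists_log_boundary hm μ (fun b => (hμ b).1) h0
  have hexp (b) : (fun k => Complex.exp (ℓ b k)) = μ b := funext (hℓ b)
  have hker (b) : latticeMap N (ℓ b) = 0 := by
    refine congrFun (eq_of_forall_exp_eq (f := fun b => latticeMap N (ℓ b)) (g := 0)
      ((latticeMap N).continuous_of_finiteDimensional.comp ℓ.continuous) continuous_const
      (fun b j => ?_) (a₀ := ⟨0, 0, .inl rfl⟩) ?_) b
    · simpa using exp_latticeMap_eq_one ((hexp b).symm ▸ hμ b) j
    · simp [hℓ0 ⟨0, 0, .inl rfl⟩ rfl]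
  have : TietzeExtension (latticeMap N).ker := .of_tvs ℂ
  obtain ⟨L, hL⟩ := ContinuousMap.exists_restrict_eq (isClosed_boundary (m + 1))
    (⟨fun b => (⟨ℓ b, hker b⟩ : (latticeMap N).ker), by fun_prop⟩ : C(_, _))
  have hLℓ (b : Cube.boundary (Fin (m + 1))) : (L b : Fin r → ℂ) = ℓ b :=
    congrArg Subtype.val (DFunLike.congr_fun hL b)
  have hLc (k) : Continuous fun y => (L y).1 k :=
    (continuous_apply k).comp (continuous_subtype_val.comp L.continuous)
  exact ⟨⟨fun y k => Complex.exp ((L y).1 k),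
    continuous_pi fun k => Complex.continuous_exp.comp (hLc k)⟩, fun y => exp_mem_GSet (L y).2,
    fun b => (congrArg (fun v k => Complex.exp (v k)) (hLℓ b)).trans (hexp b)⟩

end ExtensionOfTorusMaps

section LoopsInToricVarieties

open OnePoint

variable {n r : ℕ} {N : Fin r → Fin n → ℤ} {K : Set (Finset (Fin r))}
  {hE : (∅ : Finset (Fin r)) ∈ K}

section LoopFamilies

variable {Y : Type*} [TopologicalSpace Y] {y₀ : Y} {m : ℕ}

lemma exists_boundary_unfolding (g : C(Cube.boundary (Fin m), Loop Y y₀)) :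
    ∃ t : C(Cube.boundary (Fin (m + 1)), Y), ∀ b : Cube.boundary (Fin (m + 1)),
      (b.1 0 = 0 → t b = y₀) ∧ (b.1 0 = 1 → t b = y₀) ∧
      ∀ hb : Fin.tail b.1 ∈ Cube.boundary (Fin m),
        t b = (g ⟨Fin.tail b.1, hb⟩).1 (circleParam (b.1 0)) :=
  exists_boundary_glue (.const _ y₀) (.const _ y₀)
    (⟨fun z => (g z.2).1 (circleParam z.1), continuous_loop_apply.comp
      ((g.continuous.comp continuous_snd).prodMk (circleParam.continuous.comp continuous_fst))⟩ :
      C(unitInterval × Cube.boundary (Fin m), Y))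
    (fun c => by simp [circleParam_zero, (g c).2]) fun c => by simp [circleParam_one, (g c).2]

lemma exists_folding (F : C(Fin (m + 1) → unitInterval, Y)) (h0 : ∀ b, b 0 = 0 → F b = y₀)
    (h1 : ∀ b, b 0 = 1 → F b = y₀) : ∃ P : C(Fin m → unitInterval, Loop Y y₀),
      ∀ b, (P (Fin.tail b)).1 (circleParam (b 0)) = F b := by
  obtain ⟨P, hP⟩ := exists_loop_family (⟨fun z => F (Fin.cons z.1 z.2), F.continuous.comp
    (Continuous.finCons (A := fun _ => unitInterval) continuous_fst continuous_snd)⟩ :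
    C(unitInterval × (Fin m → unitInterval), Y)) (fun y => h0 _ rfl) fun y => h1 _ rfl
  exact ⟨P, fun b => (hP _ _).trans (congrArg F (Fin.cons_self_tail b))⟩

lemma loop_ext_of_circleParam {γ γ' : Loop Y y₀}
    (h : ∀ s, γ.1 (circleParam s) = γ'.1 (circleParam s)) : γ = γ' :=
  Subtype.ext (ContinuousMap.ext (circleParam_surjective.forall.2 h))

end LoopFamilies

lemma HasTorusTrivializations.exists_family_lift (hT : HasTorusTrivializations N K) {m : ℕ}
    (p : C(Fin m → unitInterval, Loop (XS N K) (baseX N K hE))) :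
    ∃ L : C(Fin (m + 1) → unitInterval, UK K),
      (∀ b, qmap N K (L b) = (p (Fin.tail b)).1 (circleParam (b 0))) ∧
      ∀ b, b 0 = 0 → L b = onesUK hE := by
  obtain ⟨L, hL⟩ := hT.exists_cube_lift (⟨fun b => (p (Fin.tail b)).1 (circleParam (b 0)),
    continuous_loop_apply.comp ((p.continuous.comp continuous_tail).prodMk
      (circleParam.continuous.comp (continuous_apply 0)))⟩ : C(Fin (m + 1) → unitInterval, XS N K))
  let bottom : C(Fin (m + 1) → unitInterval, Fin (m + 1) → unitInterval) :=
    ⟨fun b => Fin.cons 0 (Fin.tail b),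
      Continuous.finCons (A := fun _ => unitInterval) continuous_const continuous_tail⟩
  obtain ⟨ν, hν⟩ := hT.exists_mul_eq (L.comp bottom) (.const _ (onesUK hE)) fun b =>
    (hL (bottom b)).trans <| by
      change (p (Fin.tail b)).1 (circleParam 0) = _
      rw [circleParam_zero, (p _).2]
      rfl
  refine ⟨torusMul ν (fun b => (hν b).1) L, fun b => (qmap_torusMul _ _ L b).trans (hL b),
    fun b hb => Subtype.ext ?_⟩
  have hbottom : bottom b = b := by
    change Fin.cons 0 _ = b
    rw [← hb, Fin.cons_self_tail]
  have := (hν b).2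
  rwa [ContinuousMap.comp_apply, hbottom] at this

/-- The map `Ωq_Σ : ΩU(K) → ΩX_Σ`. -/
abbrev loopQuotient (N : Fin r → Fin n → ℤ) (hE : (∅ : Finset (Fin r)) ∈ K) :
    C(Loop (UK K) (onesUK hE), Loop (XS N K) (baseX N K hE)) :=
  loopMap (qCont N K) rfl

theorem HasTorusTrivializations.hasRelLifting_loopQuotient (hT : HasTorusTrivializations N K)
    {m : ℕ} (hm : 2 ≤ m) : HasRelLifting (loopQuotient N hE) m := by
  intro p g hg
  obtain ⟨L, hL, hL0⟩ := hT.exists_family_lift p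
  obtain ⟨t, ht⟩ := exists_boundary_unfolding g
  have htq (b) : qmap N K (t b) = (p (Fin.tail b.1)).1 (circleParam (b.1 0)) := by
    obtain h | h | h := mem_boundary_succ.1 b.2
    · rw [(ht b).1 h, h, circleParam_zero, (p _).2]
      rfl
    · rw [(ht b).2.1 h, h, circleParam_one, (p _).2]
      rfl
    · rw [(ht b).2.2 h, ← hg ⟨_, h⟩]
      rfl
  obtain ⟨μ, hμ⟩ := hT.exists_mul_eq (L.restrict _) t fun b => (hL b).trans (htq b).symm
  obtain ⟨M, hM, hMμ⟩ := exists_extension_GSet hm μ (fun b => (hμ b).1) fun b hb =>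
    hT.eq_of_mul_eq (hμ b).1 (one_mem_GSet N) (L b).2 <| by
      rw [one_mul]
      refine (hμ b).2.trans ?_
      rw [(ht b).1 hb, hL0 b hb]
  have hF (b : Cube.boundary (Fin (m + 1))) : torusMul M hM L b = t b :=
    Subtype.ext ((congrArg (· * (L b : Fin r → ℂ)) (hMμ b)).trans (hμ b).2)
  obtain ⟨P, hP⟩ := exists_folding (y₀ := onesUK hE) (torusMul M hM L)
    (fun b hb => (hF ⟨b, 0, .inl hb⟩).trans ((ht _).1 hb))
    fun b hb => (hF ⟨b, 0, .inr hb⟩).trans ((ht _).2.1 hb)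
  refine ⟨P, fun c => loop_ext_of_circleParam fun s => ?_, ?_⟩
  · have hb : Fin.cons s c.1 ∈ Cube.boundary (Fin (m + 1)) :=
      mem_boundary_succ.2 (.inr (.inr c.2))
    exact (hP (Fin.cons s c.1)).trans ((hF ⟨_, hb⟩).trans ((ht ⟨_, hb⟩).2.2 c.2))
  · have hPp : (loopQuotient N hE).comp P = p :=
      ContinuousMap.ext fun y => loop_ext_of_circleParam fun s =>
        (congrArg (qmap N K) (hP (Fin.cons s y))).trans ((qmap_torusMul _ _ L _).trans (hL _))
    exact hPp ▸ .refl _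

end LoopsInToricVarieties

section PathConnectedness

variable {r : ℕ} {K : Set (Finset (Fin r))}

lemma isOpen_loopTuples (K : Set (Finset (Fin r))) : IsOpen (loopTuples K) := by
  refine Metric.isOpen_iff.2 fun F hF => ?_
  obtain ⟨ε, hε, h⟩ := exists_forall_mem_UK_of_dist_lt (.const Unit F) fun _ => hF
  exact ⟨ε, hε, fun G hG x => h () x _ fun i =>
    (ContinuousMap.dist_apply_le_dist x).trans_lt ((dist_le_pi_dist G F i).trans_lt hG)⟩

lemma isOpen_PolSp (hE : (∅ : Finset (Fin r)) ∈ K) (D : Fin r → ℕ) : IsOpen (PolSp K D) := by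
  have hpre : PolSp K D = polyTuple D ⁻¹' loopTuples K := by
    ext f
    rw [← polyTuple_mem_polyLoops_iff hE (T := ∅)]
    exact and_iff_left ⟨polyTuple_infty f, fun i hi => hi.elim⟩
  exact hpre ▸ (isOpen_loopTuples K).preimage (polyTuple D).continuous

-- A generic translate of the segment from `f` to `g` avoids the discriminant.
lemma isPathConnected_PolSp (hK : ∀ σ, σ ∉ K → 2 ≤ σ.card) (D : Fin r → ℕ) :
    IsPathConnected (PolSp K D) := by
  have hE : (∅ : Finset (Fin r)) ∈ K := of_not_not fun h => by simpa using hK ∅ h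
  have hgen (v : ℝ → ∀ i, Fin (D i) → ℂ) (hv : ContDiff ℝ 1 v) :
      Dense {c | ∀ b, v b + c ∈ PolSp K D} :=
    dense_add_mem_PolSp hK (by simp) hv
  have hsmall {f} (hf : f ∈ PolSp K D) :
      ∀ᶠ c in nhds (0 : ∀ i, Fin (D i) → ℂ), JoinedIn (PolSp K D) f (f + c) := by
    obtain ⟨ε, hε, hball⟩ := Metric.isOpen_iff.1 (isOpen_PolSp hE D) f hf
    filter_upwards [Metric.ball_mem_nhds 0 hε] with c hc
    refine .of_segment_subset (((convex_ball f ε).segment_subset (Metric.mem_ball_self hε)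
      ?_).trans hball)
    simpa using hc
  obtain ⟨c, hc⟩ := (hgen 0 contDiff_const).nonempty
  refine isPathConnected_iff.2 ⟨⟨_, hc 0⟩, fun f hf g hg => ?_⟩
  obtain ⟨c, hc, hfc, hgc⟩ := ((mem_closure_iff_frequently.1 (hgen (fun b => f + b • (g - f))
    (by fun_prop) 0)).and_eventually ((hsmall hf).and (hsmall hg))).exists
  have hline : JoinedIn (PolSp K D) (f + c) (g + c) :=
    JoinedIn.ofLine (f := fun b : ℝ => f + b • (g - f) + c) (by fun_prop) (by simp) (by simp)
      (by
        rintro _ ⟨b, -, rfl⟩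
        exact hc b)
  exact (hfc.trans hline).trans hgc.symm

end PathConnectedness

section LiftsOfEvaluation

open OnePoint

variable {n r : ℕ} {N : Fin r → Fin n → ℤ} {K : Set (Finset (Fin r))}
  {hE : (∅ : Finset (Fin r)) ∈ K} {D : Fin r → ℕ} {k : ℕ}
  {X : Type*} [TopologicalSpace X]

lemma bijective_piMap_zero [PathConnectedSpace X] {Y : Type*} [TopologicalSpace Y] {f f' : C(X, Y)}
    {x : X} (h : Function.Surjective (piMap 0 f' x)) : Function.Bijective (piMap 0 f x) := by
  have hX : Subsingleton (HomotopyGroup (Fin 0) X x) :=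
    have := (pathConnectedSpace_iff_zerothHomotopy.1 ‹PathConnectedSpace X›).2
    (homotopyGroupEquivZerothHomotopyOfIsEmpty (Fin 0) x).subsingleton
  have hY : Subsingleton (HomotopyGroup (Fin 0) Y (f x)) :=
    have := h.subsingleton
    ((homotopyGroupEquivZerothHomotopyOfIsEmpty (Fin 0) (f x)).trans
      (homotopyGroupEquivZerothHomotopyOfIsEmpty (Fin 0) (f' x)).symm).subsingleton
  exact ⟨Function.injective_of_subsingleton _, Function.surjective_to_subsingleton _⟩

variable (hE) in
/-- Multiplication of the loops in `U(K)` by a based loop in `G_Σ`. -/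
def loopTorusMul (μ : C(OnePoint ℝ, Fin r → ℂ)) (hμ : ∀ s, μ s ∈ GSet N) (h1 : μ ∞ = 1) :
    C(Loop (UK K) (onesUK hE), Loop (UK K) (onesUK hE)) where
  toFun γ := ⟨torusMul μ hμ γ.1, Subtype.ext <| by
    change μ ∞ * (γ.1 ∞ : Fin r → ℂ) = _
    rw [h1, γ.2, one_mul]⟩
  continuous_toFun := Continuous.subtype_mk (ContinuousMap.continuous_of_continuous_uncurry _ <|
    ((μ.continuous.comp continuous_snd).mul
      (continuous_subtype_val.comp continuous_loop_apply)).subtype_mk _) _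

variable (hE) in
/-- Multiplication of the loops in `U(K)` by a based loop in `G_Σ` as a homeomorphism. -/
def loopTorusHomeomorph (μ : C(OnePoint ℝ, Fin r → ℂ)) (hμ : ∀ s, μ s ∈ GSet N) (h1 : μ ∞ = 1) :
    Loop (UK K) (onesUK hE) ≃ₜ Loop (UK K) (onesUK hE) where
  toFun := loopTorusMul hE μ hμ h1
  invFun := loopTorusMul hE
    ⟨fun s => (μ s)⁻¹, continuous_pi fun i => Continuous.inv₀
      ((continuous_apply i).comp μ.continuous) fun s => (hμ s).1 i⟩
    (fun s => inv_mem_GSet (hμ s)) (by simp [h1])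
  left_inv _ := Subtype.ext <| ContinuousMap.ext fun s => Subtype.ext <|
    inv_mul_eq_of_mul_eq (hμ s) rfl
  right_inv γ := Subtype.ext <| ContinuousMap.ext fun s => Subtype.ext <| funext fun i =>
    mul_inv_cancel_left₀ ((hμ s).1 i) ((γ.1 s).1 i)
  continuous_toFun := ContinuousMap.continuous _
  continuous_invFun := ContinuousMap.continuous _

-- Two lifts differ at `x` by a loop in `G_Σ`; multiplying by it makes them agree there.
lemma HasTorusTrivializations.surjective_piMap_of_loopQuotient_comp_eq
    (hT : HasTorusTrivializations N K) (hk : 1 ≤ k)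
    {f f' : C(X, Loop (UK K) (onesUK hE))}
    (h : (loopQuotient N hE).comp f = (loopQuotient N hE).comp f')
    (hf' : HasRelLifting f' k) (x : X) : Function.Surjective (piMap k f x) := by
  obtain ⟨μ, hμ⟩ := hT.exists_mul_eq (f' x).1 (f x).1 fun s =>
    DFunLike.congr_fun (congrArg Subtype.val (DFunLike.congr_fun h x)) s |>.symm
  have hμ1 : μ ∞ = 1 := hT.eq_of_mul_eq (hμ ∞).1 (one_mem_GSet N) (onesUK hE).2 <| by
    have := (hμ ∞).2
    rw [(f' x).2, (f x).2] at this
    rw [this, one_mul]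
  let e := loopTorusHomeomorph hE μ (fun s => (hμ s).1) hμ1
  refine surjective_piMap_of_comp_eq ?_ (h.trans ?_)
    ((hT.hasRelLifting_loopQuotient (by lia)).injective_piMap _)
    ((hf'.homeomorph_comp e).surjective_piMap x)
  · exact Subtype.ext <| ContinuousMap.ext fun s => Subtype.ext (hμ s).2.symm
  · exact ContinuousMap.ext fun y => Subtype.ext <| ContinuousMap.ext fun s =>
      (qmap_torusMul μ (fun s => (hμ s).1) (f' y).1 s).symm

lemma loopQuotient_comp_eq {i : C(PolSp K D, Loop (XS N K) (baseX N K hE))}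
    {j : C(PolSp K D, Loop (UK K) (onesUK hE))} (hi : IsID N K hE D i)
    (hj : IsLiftOfID N K hE D j) : (loopQuotient N hE).comp j = i := by
  refine ContinuousMap.ext fun f => Subtype.ext <| ContinuousMap.ext <| OnePoint.forall.2
    ⟨?_, fun t => (hj f t).trans (hi f t).symm⟩
  exact ((loopQuotient N hE) (j f)).2.trans (i f).2.symm

lemma isLiftOfID_polyLoop (hsum : ∑ k, (D k : ℤ) • N k = 0) :
    IsLiftOfID N K hE D (polyLoop hE D) := by
  refine fun f t => (qmap_eq_iff.2 ⟨_, zpow_mem_GSet (N := N) (c := fun k => -(D k : ℤ)) ?_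
    (ofReal_sub_I_ne_zero t), funext fun k => ?_⟩).symm
  · simp only [Fintype.linearCombination_apply, neg_smul, Finset.sum_neg_distrib, hsum, neg_zero]
  · refine Eq.trans ?_ (polyTuple_coe f.1 k t).symm
    rw [Pi.mul_apply, zpow_neg, zpow_natCast, div_eq_inv_mul]

lemma rmin_le_card {σ : Finset (Fin r)} (h : σ ∉ K) : rmin K ≤ σ.card := by
  induction σ using Finset.strongInduction with
  | _ σ ih =>
    by_cases hp : ∀ τ ⊂ σ, τ ∈ K
    · exact Nat.sInf_le ⟨σ, ⟨h, hp⟩, rfl⟩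
    · push Not at hp
      obtain ⟨τ, hτ, hτK⟩ := hp
      exact (ih τ hτ hτK).trans (Finset.card_le_card hτ.1)

lemma two_le_rmin (hk : (k : ℤ) ≤ dBound K D) : 2 ≤ rmin K := by
  by_contra! h
  have : ((rmin K : ℤ) - 1) * dmin D ≤ 0 :=
    mul_nonpos_of_nonpos_of_nonneg (by lia) (by positivity)
  rw [dBound, mul_assoc] at hk
  lia

lemma succ_lt_of_le_dBound (hk : (k : ℤ) ≤ dBound K D) (i : Fin r) :
    k + 1 < 2 * (rmin K - 1) * D i := by
  have hmin : 2 * (rmin K - 1) * dmin D ≤ 2 * (rmin K - 1) * D i :=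
    Nat.mul_le_mul_left _ (Nat.sInf_le ⟨i, rfl⟩)
  have hcast : ((2 * (rmin K - 1) * dmin D : ℕ) : ℤ) = 2 * ((rmin K : ℤ) - 1) * dmin D := by
    rw [Nat.cast_mul, Nat.cast_mul, Nat.cast_sub (one_le_two.trans (two_le_rmin hk))]
    norm_cast
  rw [dBound, ← hcast] at hk
  lia

lemma hasRelLifting_polyLoop_of_le_dBound {m : ℕ} (hk : (k : ℤ) ≤ dBound K D) (hm : m ≤ k + 1) :
    HasRelLifting (polyLoop hE D) m :=
  hasRelLifting_polyLoop (two_le_rmin hk) (fun _ => rmin_le_card) fun i =>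
    hm.trans_lt (succ_lt_of_le_dBound hk i)

theorem HasTorusTrivializations.homotopyEquivThrough_of_isLiftOfID
    (hT : HasTorusTrivializations N K) (hsum : ∑ k, (D k : ℤ) • N k = 0)
    {j : C(PolSp K D, Loop (UK K) (onesUK hE))} (hj : IsLiftOfID N K hE D j) :
    HomotopyEquivThrough j (dBound K D) := by
  intro x k hk
  have hlift : HasRelLifting (polyLoop hE D) k := hasRelLifting_polyLoop_of_le_dBound hk k.le_succ
  obtain rfl | hk1 := k.eq_zero_or_pos
  · have : PathConnectedSpace (PolSp K D) := isPathConnected_iff_pathConnectedSpace.1 <|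
      isPathConnected_PolSp (fun _ hσ => (two_le_rmin hk).trans (rmin_le_card hσ)) D
    exact bijective_piMap_zero (hlift.surjective_piMap x)
  have hcomp : (loopQuotient N hE).comp j = (loopQuotient N hE).comp (polyLoop hE D) :=
    loopQuotient_comp_eq (fun f t => isLiftOfID_polyLoop hsum f t) hj
  have hinj : Function.Injective (piMap k ((loopQuotient N hE).comp (polyLoop hE D)) x) := by
    rw [piMap_comp]
    exact ((hT.hasRelLifting_loopQuotient (by lia)).injective_piMap _).comp
      ((hasRelLifting_polyLoop_of_le_dBound hk le_rfl).injective_piMap x)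
  rw [← hcomp, piMap_comp] at hinj
  exact ⟨hinj.of_comp, hT.surjective_piMap_of_loopQuotient_comp_eq hk1 hcomp hlift x⟩

theorem HasTorusTrivializations.bijective_piMap_of_isID
    (hT : HasTorusTrivializations N K) (hsum : ∑ k, (D k : ℤ) • N k = 0)
    {i : C(PolSp K D, Loop (XS N K) (baseX N K hE))} (hi : IsID N K hE D i)
    (hk2 : 2 ≤ k) (hk : (k : ℤ) ≤ dBound K D) (x : PolSp K D) :
    Function.Bijective (piMap k i x) := by
  have hq {m : ℕ} (hm : 2 ≤ m) : HasRelLifting (loopQuotient N hE) m :=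
    hT.hasRelLifting_loopQuotient hm
  have hj : IsLiftOfID N K hE D (polyLoop hE D) := isLiftOfID_polyLoop hsum
  rw [← loopQuotient_comp_eq hi hj, piMap_comp]
  exact .comp ⟨(hq (by lia)).injective_piMap _, (hq hk2).surjective_piMap _⟩
    (hT.homotopyEquivThrough_of_isLiftOfID hsum hj x k hk)

end LiftsOfEvaluation

theorem polSpace_subfan_lift_and_pi_iso_general
    {n r : ℕ} (F : Fan n) (N : Fin r → Fin n → ℤ)
    (hPG : IsPrimGens F N) (hNS : F.NonSingular) (h2 : Cond2 N)
    (D : Fin r → ℕ) (hsum : ∑ k, (D k : ℤ) • N k = 0) :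
    ((∃ j : C(PolSp (KC F N) D, Loop (UK (KC F N)) (onesUK (empty_mem_KC F N))),
        IsLiftOfID N (KC F N) (empty_mem_KC F N) D j) ∧
      ∀ j : C(PolSp (KC F N) D, Loop (UK (KC F N)) (onesUK (empty_mem_KC F N))),
        IsLiftOfID N (KC F N) (empty_mem_KC F N) D j →
          HomotopyEquivThrough j (dBound (KC F N) D)) ∧
    (∀ i : C(PolSp (KC F N) D, Loop (XS N (KC F N)) (baseX N (KC F N) (empty_mem_KC F N))),
      IsID N (KC F N) (empty_mem_KC F N) D i →
      ∀ k : ℕ, 2 ≤ k → (k : ℤ) ≤ dBound (KC F N) D →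
        ∀ f₀ : PolSp (KC F N) D, Function.Bijective (piMap k i f₀)) := by
  have hT : HasTorusTrivializations N (KC F N) := hPG.hasTorusTrivializations hNS h2
  exact ⟨⟨⟨polyLoop _ D, isLiftOfID_polyLoop hsum⟩,
      fun _ hj => hT.homotopyEquivThrough_of_isLiftOfID hsum hj⟩,
    fun _ hi _ hk2 hk f₀ => hT.bijective_piMap_of_isID hsum hi hk2 hk f₀⟩

/-- For a complete non-singular fan `Σ` satisfying (2.9.2) and a subfan
`Σ(1) ⊆ Σ₁ ⊊ Σ`, with `∑ d_k n_k = 0`: (i) any lift `j_D` of `i_D` through `Ω q_{Σ₁}`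
exists and is a homotopy equivalence through dimension `d(D,Σ₁)`; (ii) `i_D` induces an
isomorphism on `π_k` for `2 ≤ k ≤ d(D,Σ₁)`. -/
theorem polSpace_subfan_lift_and_pi_iso
    {n r : ℕ} (F : Fan n) (N : Fin r → Fin n → ℤ)
    (hPG : IsPrimGens F N) (hNS : F.NonSingular) (hC : F.Complete) (h2 : Cond2 N)
    (F1 : Fan n) (hsub : F1.cones ⊆ F.cones) (hne : F1.cones ≠ F.cones)
    (hrays : ∀ k, ray (zr (N k)) ∈ F1.cones) (hPG1 : IsPrimGens F1 N)
    (D : Fin r → ℕ) (hD : ∀ k, 0 < D k)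
    (hsum : ∑ k, (D k : ℤ) • N k = 0) :
    ((∃ j : C(↥(PolSp (KC F1 N) D), Loop ↥(UK (KC F1 N)) (onesUK (empty_mem_KC F1 N))),
        IsLiftOfID N (KC F1 N) (empty_mem_KC F1 N) D ⇑j) ∧
      ∀ j : C(↥(PolSp (KC F1 N) D), Loop ↥(UK (KC F1 N)) (onesUK (empty_mem_KC F1 N))),
        IsLiftOfID N (KC F1 N) (empty_mem_KC F1 N) D ⇑j →
          HomotopyEquivThrough j (dBound (KC F1 N) D)) ∧
    (∀ i : C(↥(PolSp (KC F1 N) D),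
        Loop (XS N (KC F1 N)) (baseX N (KC F1 N) (empty_mem_KC F1 N))),
      IsID N (KC F1 N) (empty_mem_KC F1 N) D ⇑i →
      ∀ k : ℕ, 2 ≤ k → (k : ℤ) ≤ dBound (KC F1 N) D →
        ∀ f₀ : ↥(PolSp (KC F1 N) D), Function.Bijective (piMap k i f₀)) := by
  exact polSpace_subfan_lift_and_pi_iso_general F1 N hPG1 (fun σ hσ => hNS σ (hsub hσ)) h2 D hsum

end Toric
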